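/- Let (A, 𝔪, k) be a local complete intersection of codimension c, let M be a finitely generated A-module, and let t ∈ {1, …, c}. Suppose that for every finitely generated A-module N of complexity t there exist an odd number q and an even number n > dim A − depth M such that Ext^{n}_A(M,N) = Ext^{n+q}_A(M,N) = ⋯ = Ext^{n+(c−t)q}_A(M,N) = 0. Then cx M < t. -/

import Mathlib

open CategoryTheory Opposite Filter IsLocalRing

universe u

namespace ComplexityTest

variable (A : Type u) [CommRing A] [IsLocalRing A]

structure MinFreeRes (M : Type u) [AddCommGroup M] [Module A M] : Type u where
  b : ℕ → ℕ
  d : (n : ℕ) → ((Fin (b (n + 1)) → A) →ₗ[A] (Fin (b n) → A))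
  aug : (Fin (b 0) → A) →ₗ[A] M
  aug_surjective : Function.Surjective aug
  exact_zero : Function.Exact (d 0) aug
  exact_succ : ∀ n, Function.Exact (d (n + 1)) (d n)
  minimal : ∀ n x i, d n x i ∈ maximalIdeal A

variable (M : Type u) [AddCommGroup M] [Module A M]

def HasComplexityLE (t : ℕ) : Prop :=
  ∃ (R : MinFreeRes A M) (a : ℝ), ∀ᶠ n : ℕ in atTop, (R.b n : ℝ) ≤ a * (n : ℝ) ^ ((t : ℤ) - 1)

noncomputable def complexity : ℕ∞ :=
  sInf {c : ℕ∞ | ∃ t : ℕ, c = t ∧ HasComplexityLE A M t}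

def HasProjDimLE (t : ℕ) : Prop :=
  ∃ R : MinFreeRes A M, ∀ i, t < i → R.b i = 0

noncomputable def projDim : ℕ∞ :=
  sInf {c : ℕ∞ | ∃ t : ℕ, c = t ∧ HasProjDimLE A M t}

def HasFiniteProjDim : Prop :=
  ∃ t : ℕ, HasProjDimLE A M t

def IsSyzygyOf (S : Type u) [AddCommGroup S] [Module A S] : ℕ → Prop
  | 0 => Nonempty (S ≃ₗ[A] M)
  | 1 => ∃ R : MinFreeRes A M, Nonempty (S ≃ₗ[A] (LinearMap.ker R.aug))
  | (n + 2) => ∃ R : MinFreeRes A M, Nonempty (S ≃ₗ[A] (LinearMap.ker (R.d n)))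

variable {A M} in
def IsSES {K S : Type u} [AddCommGroup K] [Module A K] [AddCommGroup S] [Module A S]
    (f : M →ₗ[A] K) (g : K →ₗ[A] S) : Prop :=
  Function.Injective f ∧ Function.Exact f g ∧ Function.Surjective g

noncomputable def extModule (n : ℕ) (N : Type u) [AddCommGroup N] [Module A N] :
    ModuleCat A :=
  ((_root_.Ext A (ModuleCat.{u} A) n).obj (op (ModuleCat.of A M))).obj (ModuleCat.of A N)

def extVanish (n : ℕ) (N : Type u) [AddCommGroup N] [Module A N] : Prop :=
  Subsingleton (extModule A M n N)

/-- The `n`-th Tor module `Tor^A_n(M, N)`. -/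
noncomputable def torModule (n : ℕ) (N : Type u) [AddCommGroup N] [Module A N] :
    ModuleCat A :=
  ((Tor (ModuleCat.{u} A) n).obj (ModuleCat.of A M)).obj (ModuleCat.of A N)

/-- The vanishing `Tor^A_n(M, N) = 0`. -/
def torVanish (n : ℕ) (N : Type u) [AddCommGroup N] [Module A N] : Prop :=
  Subsingleton (torModule A M n N)

noncomputable def depth : ℕ∞ :=
  sInf {c : ℕ∞ | ∃ i : ℕ, c = i ∧ ¬ extVanish A (ResidueField A) i M}

variable {A}

/-- The category of modules of *free reducible complexity* over the local ring `A`.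
It is defined inductively: every finitely generated module of finite projective
dimension has free reducible complexity, and a finitely generated module `M` of finite
positive complexity has free reducible complexity provided there is a short exact
sequence `0 → M → K → Ω^n_A(M) → 0` (necessarily induced by a cohomology element
`η ∈ Ext^{n+1}_A(M,M)`) where `K` is a finitely generated module of free reducible
complexity with `cx K = cx M - 1`. -/
inductive HasFreeRedCxCat : ModuleCat.{u} A → Prop
  | of_finite_projDim (M : ModuleCat.{u} A) (hfg : Module.Finite A M)
      (h : HasFiniteProjDim A M) : HasFreeRedCxCat M
  | step (M K S : ModuleCat.{u} A) (n : ℕ)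
      (hfg : Module.Finite A M) (hKfg : Module.Finite A K)
      (hpos : 0 < complexity A M) (hfin : complexity A M ≠ ⊤)
      (hsyz : IsSyzygyOf A M S n)
      (f : M →ₗ[A] K) (g : K →ₗ[A] S) (hses : IsSES f g)
      (hcx : complexity A K = complexity A M - 1)
      (hK : HasFreeRedCxCat K) : HasFreeRedCxCat M

/-- The category of modules of *reducible complexity* over the local ring `A`: as for
free reducible complexity, but where in addition the reductions are required to
preserve depth. -/
inductive HasRedCxCat : ModuleCat.{u} A → Prop
  | of_finite_projDim (M : ModuleCat.{u} A) (hfg : Module.Finite A M)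
      (h : HasFiniteProjDim A M) : HasRedCxCat M
  | step (M K S : ModuleCat.{u} A) (n : ℕ)
      (hfg : Module.Finite A M) (hKfg : Module.Finite A K)
      (hpos : 0 < complexity A M) (hfin : complexity A M ≠ ⊤)
      (hsyz : IsSyzygyOf A M S n)
      (f : M →ₗ[A] K) (g : K →ₗ[A] S) (hses : IsSES f g)
      (hcx : complexity A K = complexity A M - 1)
      (hdepth : depth A K = depth A M)
      (hK : HasRedCxCat K) : HasRedCxCat M

variable (A)

/-- `M` has free reducible complexity. -/
def HasFreeRedCx (M : Type u) [AddCommGroup M] [Module A M] : Prop :=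
  HasFreeRedCxCat (ModuleCat.of A M)

/-- `M` has reducible complexity. -/
def HasRedCx (M : Type u) [AddCommGroup M] [Module A M] : Prop :=
  HasRedCxCat (ModuleCat.of A M)

/-- A Noetherian local ring is Gorenstein if it has finite injective dimension over
itself; by Bass' characterization, this is equivalent to the vanishing of
`Ext^i_A(k, A)` for all sufficiently large `i`. -/
def IsGorenstein : Prop :=
  ∃ n : ℕ, ∀ i : ℕ, n < i → extVanish A (ResidueField A) i A

end ComplexityTest

open ComplexityTest

namespace ComplexityTest

/-- A regular local ring: a Noetherian local ring whose maximal ideal can be generated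
by `dim A` elements. -/
def IsRegularLocalRing (Q : Type u) [CommRing Q] [IsLocalRing Q] : Prop :=
  IsNoetherianRing Q ∧
    ∃ (n : ℕ) (x : Fin n → Q), Ideal.span (Set.range x) = IsLocalRing.maximalIdeal Q ∧
      (n : WithBot ℕ∞) = ringKrullDim Q

variable (A : Type u) [CommRing A] [IsLocalRing A]

/-- The `𝔪`-adic completion of the local ring `A`. -/
abbrev Completion : Type u := AdicCompletion (IsLocalRing.maximalIdeal A) A

/-- The local ring `A` is a complete intersection: its `𝔪`-adic completion is the
residue ring of a regular local ring modulo an ideal generated by a regular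
sequence. -/
def IsCompleteIntersection : Prop :=
  ∃ (Q : Type u) (_ : CommRing Q),
    ∃ (_ : IsLocalRing Q),
      IsRegularLocalRing Q ∧
        ∃ g : Q →+* Completion A,
          Function.Surjective g ∧
            ∃ rs : List Q, RingTheory.Sequence.IsRegular Q rs ∧
              RingHom.ker g = Ideal.span {x | x ∈ rs}

/-- The embedding dimension of the local ring `A`, i.e. `dim_k 𝔪/𝔪²`. -/
noncomputable def embDim : ℕ :=
  Module.finrank (IsLocalRing.ResidueField A) (IsLocalRing.CotangentSpace A)

/-- The local ring `A` has codimension `c`, i.e. `dim_k (𝔪/𝔪²) - dim A = c`. -/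
def HasCodim (c : ℕ) : Prop :=
  ∃ d : ℕ, ringKrullDim A = (d : WithBot ℕ∞) ∧ embDim A = d + c

end ComplexityTest

/-!
Let `B` be the completion of `A`, a quotient of a regular local ring by a regular sequence of
length `c`, and let `k` be the residue field. The `c` cohomology operators `χ`, of degree two, act
on `Ext_B(k, Y)` naturally in `Y`, and `Ext_B(k, Y)` is a Noetherian module over the polynomial
ring in `χ`. Choose a homogeneous polynomial `θ` in `χ` that is injective on `Ext(k, X)` in high
degrees. As `θ` acts on `Ext(k, X)` through a class in `Ext_B^{2e}(X, X)` that matters only modulo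
the maximal ideal, it can be realized by a class in `Ext_A^{2e}(X, X)`. The cone of this class is a
module `K` with `cx X ≤ cx K + 1`, with a map `X → K` that is surjective on `Ext(k, -)` in high
degrees and whose kernel there contains `θ Ext(k, X)`. Iterating from `X = M`, the complexity drops
by at most one in each step, while the kernels of `Ext(k, M) → Ext(k, X)` grow strictly as long as
`cx X > 0`. As `Ext(k, M)` is Noetherian, this gives, for each `t ≤ cx M`, a map `f : M → X` with
`cx X = t` and `Ext(k, f)` surjective in high degrees.

If `Ext_A^{2e}(M, X) = 0`, then `p(χ) f = 0` for all homogeneous polynomials `p` of degree `e`, so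
these polynomials kill `Ext(k, X)` in high degrees. Since `Ext(k, X)` is finitely generated over the
polynomial ring, it vanishes in high degrees: `X` has finite injective dimension, hence finite
projective dimension over the Gorenstein ring `A`, which contradicts `cx X = t ≥ 1`.
-/

namespace ComplexityTest

/-! ### Homogeneous prime avoidance -/

section PrimeAvoidance

variable {S σ : Type*} [CommRing S] [SetLike σ S] [AddSubgroupClass σ S] (𝒜 : ℕ → σ)
  [GradedRing 𝒜]

lemma exists_homogeneous_notMem_of_pairwise_not_le {s : Finset (HomogeneousIdeal 𝒜)}
    (hprime : ∀ p ∈ s, p.toIdeal.IsPrime) (hanti : ∀ p ∈ s, ∀ q ∈ s, p ≤ q → p = q)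
    (hpos : ∀ p ∈ s, ∃ d, 0 < d ∧ ∃ x ∈ 𝒜 d, x ∉ p) {p : HomogeneousIdeal 𝒜} (hp : p ∈ s) :
    ∃ d, 0 < d ∧ ∃ x ∈ 𝒜 d, x ∉ p ∧ ∀ q ∈ s, q ≠ p → x ∈ q := by
  classical
  have hsep : ∀ q ∈ s.erase p, ∃ d, ∃ x ∈ 𝒜 d, x ∈ q ∧ x ∉ p := by
    intro q hq
    by_contra! hcon
    obtain ⟨hqp, hqs⟩ := Finset.mem_erase.1 hq
    refine hqp (hanti q hqs p hp fun x hx ↦ ?_)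
    rw [← DirectSum.sum_support_decompose 𝒜 x]
    exact sum_mem fun i _ ↦ hcon i _ (SetLike.coe_mem _) (q.isHomogeneous i hx)
  choose! d x hxd hxq hxp using hsep
  obtain ⟨e, he, y, hye, hyp⟩ := hpos p hp
  have := hprime p hp
  refine ⟨e + ∑ q ∈ s.erase p, d q, by omega, y * ∏ q ∈ s.erase p, x q,
    SetLike.mul_mem_graded hye (SetLike.prod_mem_graded _ _ _ hxd), fun hmem ↦ ?_, ?_⟩
  · rcases this.mem_or_mem hmem with h | h
    · exact hyp h
    · obtain ⟨q, hq, hqp⟩ := this.prod_mem_iff.1 h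
      exact hxp q hq hqp
  · intro q hq hqp
    have hq' := Finset.mem_erase.2 ⟨hqp, hq⟩
    exact Ideal.mul_mem_left _ _ (Ideal.mem_of_dvd _ (Finset.dvd_prod_of_mem x hq') (hxq q hq'))

lemma exists_homogeneous_forall_notMem_of_pairwise_not_le {s : Finset (HomogeneousIdeal 𝒜)}
    (hprime : ∀ p ∈ s, p.toIdeal.IsPrime) (hanti : ∀ p ∈ s, ∀ q ∈ s, p ≤ q → p = q)
    (hpos : ∀ p ∈ s, ∃ d, 0 < d ∧ ∃ x ∈ 𝒜 d, x ∉ p) :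
    ∃ d, 0 < d ∧ ∃ x ∈ 𝒜 d, ∀ p ∈ s, x ∉ p := by
  classical
  have hsep := fun p hp ↦ exists_homogeneous_notMem_of_pairwise_not_le 𝒜 hprime hanti hpos
    (p := p) hp
  choose! d hd x hxd hxp hxq using hsep
  refine ⟨∏ p ∈ s, d p, Finset.prod_pos hd, ∑ p ∈ s, x p ^ ∏ q ∈ s.erase p, d q,
    sum_mem fun p hp ↦ ?_, fun p hp hmem ↦ ?_⟩
  · rw [← Finset.prod_erase_mul s d hp]
    exact SetLike.pow_mem_graded _ (hxd p hp)
  · rw [← Finset.add_sum_erase s _ hp] at hmem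
    refine hxp p hp ((hprime p hp).mem_of_pow_mem _ ((Ideal.add_mem_iff_left _ ?_).1 hmem))
    refine sum_mem fun q hq ↦ Ideal.pow_mem_of_mem _ ?_ _ (Finset.prod_pos fun r hr ↦ ?_)
    · exact hxq q (Finset.mem_of_mem_erase hq) p hp (Finset.ne_of_mem_erase hq).symm
    · exact hd r (Finset.mem_of_mem_erase hr)

theorem exists_homogeneous_forall_notMem {s : Finset (Ideal S)} (hprime : ∀ p ∈ s, p.IsPrime)
    (hpos : ∀ p ∈ s, ∃ d, 0 < d ∧ ∃ x ∈ 𝒜 d, x ∉ p) :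
    ∃ d, 0 < d ∧ ∃ x ∈ 𝒜 d, ∀ p ∈ s, x ∉ p := by
  classical
  let cores := s.image (Ideal.homogeneousCore 𝒜)
  have hcore : ∀ P ∈ cores, ∃ p ∈ s, p.homogeneousCore 𝒜 = P := fun P hP ↦ Finset.mem_image.1 hP
  let t := cores.filter (Maximal (· ∈ cores))
  have hprime' : ∀ P ∈ t, P.toIdeal.IsPrime := by
    intro P hP
    obtain ⟨p, hp, rfl⟩ := hcore P (Finset.mem_filter.1 hP).1
    exact (hprime p hp).homogeneousCore
  have hanti : ∀ P ∈ t, ∀ Q ∈ t, P ≤ Q → P = Q := fun P hP Q hQ hPQ ↦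
    (Finset.mem_filter.1 hP).2.eq_of_le (Finset.mem_filter.1 hQ).1 hPQ
  have hpos' : ∀ P ∈ t, ∃ d, 0 < d ∧ ∃ x ∈ 𝒜 d, x ∉ P := by
    intro P hP
    obtain ⟨p, hp, rfl⟩ := hcore P (Finset.mem_filter.1 hP).1
    obtain ⟨d, hd, x, hx, hxp⟩ := hpos p hp
    exact ⟨d, hd, x, hx, fun h ↦ hxp (p.toIdeal_homogeneousCore_le 𝒜 h)⟩
  obtain ⟨d, hd, x, hx, hxt⟩ :=
    exists_homogeneous_forall_notMem_of_pairwise_not_le 𝒜 hprime' hanti hpos'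
  refine ⟨d, hd, x, hx, fun p hp hxp ↦ ?_⟩
  obtain ⟨P, hpP, hP⟩ := cores.exists_le_maximal (Finset.mem_image_of_mem _ hp)
  exact hxt P (Finset.mem_filter.2 ⟨hP.prop, hP⟩)
    (hpP (Ideal.mem_homogeneousCore_of_homogeneous_of_mem ⟨d, hx⟩ hxp))

end PrimeAvoidance

/-! ### Polynomial rings acting by operators of degree two -/

lemma map_mvPolynomial_smul {R σ M N : Type*} [CommSemiring R] [AddCommMonoid M]
    [AddCommMonoid N] [Module R M] [Module R N] [Module (MvPolynomial σ R) M]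
    [Module (MvPolynomial σ R) N] [IsScalarTower R (MvPolynomial σ R) M]
    [IsScalarTower R (MvPolynomial σ R) N] (f : M →ₗ[R] N)
    (hf : ∀ i x, f ((MvPolynomial.X i : MvPolynomial σ R) • x) =
      (MvPolynomial.X i : MvPolynomial σ R) • f x) (p : MvPolynomial σ R) (x : M) :
    f (p • x) = p • f x := by
  induction p using MvPolynomial.induction_on generalizing x with
  | C r => simp only [← MvPolynomial.algebraMap_eq, algebraMap_smul, map_smul]
  | add p q hp hq => simp only [add_smul, map_add, hp, hq]
  | mul_X p i hp => simp only [mul_smul, hp, hf]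

lemma exists_pow_smul_torsionBy_eq_bot {S M : Type*} [CommRing S] [IsNoetherianRing S]
    [AddCommGroup M] [Module S M] [Module.Finite S M] (J : Ideal S) {θ : S}
    (hθ : ∀ p ∈ associatedPrimes S M, θ ∈ p → J ≤ p) :
    ∃ k, J ^ k • Submodule.torsionBy S M θ = ⊥ := by
  set K := Submodule.torsionBy S M θ
  have hJ : J ≤ (Module.annihilator S K).radical := by
    rw [Ideal.radical_eq_sInf, le_sInf_iff]
    rintro p ⟨hKp, hp⟩
    obtain ⟨q, hq, hqp⟩ := Ideal.exists_minimalPrimes_le hKp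
    have hqM : q ∈ associatedPrimes S M :=
      associatedPrimes.subset_of_injective K.injective_subtype
        (Module.associatedPrimes.minimalPrimes_annihilator_subset_associatedPrimes S K hq)
    have hθK : θ ∈ Module.annihilator S K :=
      Module.mem_annihilator.2 fun x ↦ Submodule.smul_torsionBy θ x
    exact (hθ q hqM (hq.1.2 hθK)).trans hqp
  obtain ⟨k, hk⟩ := Ideal.exists_pow_le_of_le_radical_of_fg hJ (IsNoetherian.noetherian J)
  refine ⟨k, eq_bot_iff.2 (Submodule.smul_le.2 fun r hr x hx ↦ ?_)⟩
  simpa using congrArg Subtype.val (Module.mem_annihilator.1 (hk hr) ⟨x, hx⟩)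

/-- Commuting operators `χ₁, …, χ_c` of degree two on a graded module `H`, as the
cohomology operators of a complete intersection of codimension `c` on `Ext`. -/
structure DegreeTwoAction (R : Type*) [CommRing R] (c : ℕ) (H : ℕ → Type*)
    [∀ n, AddCommGroup (H n)] [∀ n, Module R (H n)] where
  op : Fin c → ∀ n, H n →ₗ[R] H (n + 2)
  comm : ∀ i j n x, op i (n + 2) (op j n x) = op j (n + 2) (op i n x)

namespace DegreeTwoAction

open MvPolynomial (X IsHomogeneous monomial)

variable {R : Type*} [CommRing R] {c : ℕ} {H : ℕ → Type*} [∀ n, AddCommGroup (H n)]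
  [∀ n, Module R (H n)] (T : DegreeTwoAction R c H)

/-- The direct sum of the `H n`: a copy of `⨁ n, H n` which is a module over the polynomial ring
in `c` variables, the variable `X i` acting through the operator `T.op i`. -/
def Total (_ : DegreeTwoAction R c H) : Type _ := DirectSum ℕ H

noncomputable instance : AddCommGroup T.Total := inferInstanceAs (AddCommGroup (DirectSum ℕ H))

noncomputable instance : Module R T.Total := inferInstanceAs (Module R (DirectSum ℕ H))

/-- The inclusion of the degree `n` part into the direct sum. -/
noncomputable def of (n : ℕ) : H n →ₗ[R] T.Total := DirectSum.lof R ℕ H n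

/-- The projection of the direct sum onto its degree `n` part. -/
def proj (n : ℕ) : T.Total →ₗ[R] H n := DirectSum.component R ℕ H n

@[simp]
lemma proj_of_self (n : ℕ) (x : H n) : T.proj n (T.of n x) = x :=
  DirectSum.component.lof_self R n x

lemma proj_of_ne {m n : ℕ} (h : m ≠ n) (x : H m) : T.proj n (T.of m x) = 0 :=
  DirectSum.of_eq_of_ne m n x h.symm

variable {T} in
lemma total_ext {x y : T.Total} (h : ∀ n, T.proj n x = T.proj n y) : x = y := DFinsupp.ext h

lemma of_injective (n : ℕ) : Function.Injective (T.of n) :=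
  Function.LeftInverse.injective (T.proj_of_self n)

@[elab_as_elim]
lemma total_induction {motive : T.Total → Prop} (x : T.Total) (zero : motive 0)
    (of : ∀ n x, motive (T.of n x)) (add : ∀ x y, motive x → motive y → motive (x + y)) :
    motive x :=
  DirectSum.induction_on x zero of add

/-- The operator `T.op i` on the direct sum. -/
noncomputable def totalOp (i : Fin c) : Module.End R T.Total :=
  DirectSum.toModule R ℕ T.Total fun n ↦ T.of (n + 2) ∘ₗ T.op i n

@[simp]
lemma totalOp_of (i : Fin c) (n : ℕ) (x : H n) :
    T.totalOp i (T.of n x) = T.of (n + 2) (T.op i n x) :=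
  DirectSum.toModule_lof R n x

lemma totalOp_mul_comm (i j : Fin c) : T.totalOp i * T.totalOp j = T.totalOp j * T.totalOp i := by
  ext x
  induction x using T.total_induction with
  | zero => simp
  | of n x => simp [T.comm]
  | add x y hx hy => rw [map_add, map_add, hx, hy]

lemma proj_totalOp (i : Fin c) (n : ℕ) (x : T.Total) :
    T.proj (n + 2) (T.totalOp i x) = T.op i n (T.proj n x) := by
  induction x using T.total_induction with
  | zero => simp
  | of m x =>
    rcases eq_or_ne m n with rfl | h
    · simp
    · rw [totalOp_of, proj_of_ne _ (by omega), proj_of_ne _ h, map_zero]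
  | add x y hx hy => simp only [map_add, hx, hy]

lemma isMulCommutative_adjoin_totalOp :
    IsMulCommutative (Algebra.adjoin R (Set.range T.totalOp)) :=
  Algebra.isMulCommutative_adjoin R (by
    rintro _ ⟨i, rfl⟩ _ ⟨j, rfl⟩
    exact T.totalOp_mul_comm i j)

open scoped IsMulCommutative in
/-- The action of polynomials on the direct sum. -/
noncomputable def polynomialAction : MvPolynomial (Fin c) R →ₐ[R] Module.End R T.Total :=
  haveI := T.isMulCommutative_adjoin_totalOp
  (Algebra.adjoin R (Set.range T.totalOp)).val.comp
    (MvPolynomial.aeval fun i ↦ ⟨T.totalOp i, Algebra.subset_adjoin ⟨i, rfl⟩⟩)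

noncomputable instance : Module (MvPolynomial (Fin c) R) T.Total :=
  Module.compHom _ T.polynomialAction.toRingHom

instance : IsScalarTower R (MvPolynomial (Fin c) R) T.Total where
  smul_assoc r p x := by
    change T.polynomialAction (r • p) x = r • T.polynomialAction p x
    rw [map_smul, LinearMap.smul_apply]

lemma X_smul (i : Fin c) (x : T.Total) : (X i : MvPolynomial (Fin c) R) • x = T.totalOp i x := by
  change T.polynomialAction (X i) x = _
  simp [polynomialAction]

lemma X_smul_of (i : Fin c) (n : ℕ) (x : H n) :
    (X i : MvPolynomial (Fin c) R) • T.of n x = T.of (n + 2) (T.op i n x) := by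
  rw [X_smul, totalOp_of]

section Lift

variable {N : Type*} [AddCommGroup N] [Module R N] [Module (MvPolynomial (Fin c) R) N]
  [IsScalarTower R (MvPolynomial (Fin c) R) N] (f : ∀ n, H n →ₗ[R] N)
  (hf : ∀ i n x, f (n + 2) (T.op i n x) = (X i : MvPolynomial (Fin c) R) • f n x)

/-- The linear map over the polynomial ring determined by maps on the graded pieces which are
compatible with the operators. -/
noncomputable def lift : T.Total →ₗ[MvPolynomial (Fin c) R] N :=
  let g : T.Total →ₗ[R] N := DirectSum.toModule R ℕ N f
  { g with
    map_smul' := map_mvPolynomial_smul g fun i x ↦ by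
      have hg : ∀ n x, g (T.of n x) = f n x := fun n x ↦ DirectSum.toModule_lof R n x
      induction x using T.total_induction with
      | zero => simp
      | of n x => rw [X_smul_of, hg, hg, hf]
      | add x y hx hy => rw [smul_add, map_add, map_add, smul_add, hx, hy] }

@[simp]
lemma lift_of (n : ℕ) (x : H n) : T.lift f hf (T.of n x) = f n x :=
  DirectSum.toModule_lof R n x

end Lift

lemma X_pow_smul_of_mem_range (i : Fin c) (k n : ℕ) (x : H n) :
    (X i ^ k : MvPolynomial (Fin c) R) • T.of n x ∈ LinearMap.range (T.of (n + 2 * k)) := by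
  induction k with
  | zero => exact ⟨x, by simp⟩
  | succ k ih =>
    obtain ⟨y, hy⟩ := ih
    exact ⟨T.op i _ y, by rw [pow_succ', mul_smul, ← hy, X_smul_of]; rfl⟩

lemma monomial_smul_of_mem_range (s : Fin c →₀ ℕ) (n : ℕ) (x : H n) :
    (monomial s (1 : R)) • T.of n x ∈ LinearMap.range (T.of (n + 2 * s.degree)) := by
  induction s using Finsupp.induction_linear generalizing n x with
  | zero => exact ⟨x, (one_smul _ _).symm⟩
  | add s t hs ht =>
    obtain ⟨y, hy⟩ := ht n x
    rw [← one_mul (1 : R), ← MvPolynomial.monomial_mul, mul_smul, ← hy,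
      show n + 2 * (s + t).degree = n + 2 * t.degree + 2 * s.degree by rw [map_add]; ring]
    exact hs _ y
  | single i k =>
    rw [← MvPolynomial.X_pow_eq_monomial, Finsupp.degree_single]
    exact T.X_pow_smul_of_mem_range i k n x

lemma exists_smul_of_eq_of_isHomogeneous {e : ℕ} {p : MvPolynomial (Fin c) R}
    (hp : p.IsHomogeneous e) (n : ℕ) (x : H n) :
    ∃ y : H (n + 2 * e), p • T.of n x = T.of (n + 2 * e) y := by
  suffices p • T.of n x ∈ LinearMap.range (T.of (n + 2 * e)) by
    obtain ⟨y, hy⟩ := this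
    exact ⟨y, hy.symm⟩
  rw [p.as_sum, Finset.sum_smul]
  refine sum_mem fun s hs ↦ ?_
  have hmul : monomial s (p.coeff s) = p.coeff s • monomial s 1 := by
    rw [MvPolynomial.smul_monomial, smul_eq_mul, mul_one]
  rw [hmul, smul_assoc]
  refine Submodule.smul_mem _ _ ?_
  have hdeg : s.degree = e := by
    rw [Finsupp.degree_eq_weight_one (R := ℕ)]
    exact hp (MvPolynomial.mem_support_iff.1 hs)
  exact hdeg ▸ T.monomial_smul_of_mem_range s n x

/-- In all large degrees, `H` is generated by the images of the operators. -/
def EventuallyGenerated : Prop :=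
  ∃ n₀, ∀ n, n₀ ≤ n → ∀ x : H (n + 2), ∃ y : Fin c → H n, ∑ i, T.op i n (y i) = x

variable {T}

lemma EventuallyGenerated.of_mem_span (hT : T.EventuallyGenerated) (e : ℕ) :
    ∃ n₀, ∀ n, n₀ ≤ n → ∀ x : H (n + 2 * e), T.of (n + 2 * e) x ∈
      Submodule.span R {z | ∃ p : MvPolynomial (Fin c) R, p.IsHomogeneous e ∧
        ∃ y : H n, z = p • T.of n y} := by
  obtain ⟨n₀, hgen⟩ := hT
  refine ⟨n₀, fun n hn ↦ ?_⟩
  induction e with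
  | zero =>
    exact fun x ↦ Submodule.subset_span ⟨1, MvPolynomial.isHomogeneous_one _ _, x, by simp⟩
  | succ e ih =>
    intro x
    obtain ⟨y, rfl⟩ := hgen (n + 2 * e) (by omega) x
    rw [map_sum]
    refine sum_mem fun i _ ↦ ?_
    have hop := (T.totalOp_of i (n + 2 * e) (y i)).symm
    refine hop ▸ (Submodule.map_span_le _ _ _).2 ?_ (Submodule.mem_map_of_mem (ih (y i)))
    rintro _ ⟨p, hp, z, rfl⟩
    refine Submodule.subset_span ⟨X i * p, ?_, z, ?_⟩
    · rw [add_comm]; exact (MvPolynomial.isHomogeneous_X _ i).mul hp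
    · rw [mul_smul, X_smul]

lemma EventuallyGenerated.exists_of_mem_span (hT : T.EventuallyGenerated) :
    ∃ m, ∀ n (x : H n), T.of n x ∈
      Submodule.span (MvPolynomial (Fin c) R) (⋃ k ∈ Finset.range m, Set.range (T.of k)) := by
  obtain ⟨n₀, hgen⟩ := hT
  refine ⟨n₀ + 2, fun n ↦ ?_⟩
  induction n using Nat.strong_induction_on with
  | _ n ih =>
    intro x
    by_cases hn : n < n₀ + 2
    · exact Submodule.subset_span
        (Set.mem_biUnion (Finset.mem_coe.2 (Finset.mem_range.2 hn)) ⟨x, rfl⟩)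
    · obtain ⟨m, rfl⟩ : ∃ m, n = m + 2 := ⟨n - 2, by omega⟩
      obtain ⟨y, rfl⟩ := hgen m (by omega) x
      simp only [map_sum, ← X_smul_of]
      exact sum_mem fun i _ ↦ Submodule.smul_mem _ _ (ih m (by omega) (y i))

theorem EventuallyGenerated.finite_total [∀ n, Module.Finite R (H n)]
    (hT : T.EventuallyGenerated) : Module.Finite (MvPolynomial (Fin c) R) T.Total := by
  obtain ⟨m, hm⟩ := hT.exists_of_mem_span
  choose s hs using fun n ↦ Module.Finite.fg_top (R := R) (M := H n)
  let gens : Set T.Total := ⋃ k ∈ Finset.range m, T.of k '' s k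
  have hgens : gens.Finite :=
    Set.Finite.biUnion (Finset.finite_toSet _) fun n _ ↦ (s n).finite_toSet.image _
  have hle : Submodule.span (MvPolynomial (Fin c) R) (⋃ k ∈ Finset.range m, Set.range (T.of k)) ≤
      Submodule.span (MvPolynomial (Fin c) R) gens := by
    refine Submodule.span_le.2 (Set.iUnion₂_subset fun k hk ↦ ?_)
    have hk' : LinearMap.range (T.of k) ≤
        (Submodule.span (MvPolynomial (Fin c) R) gens).restrictScalars R := by
      rw [LinearMap.range_eq_map, ← hs k, Submodule.map_span_le]
      exact fun x hx ↦ Submodule.subset_span (Set.mem_biUnion hk ⟨x, hx, rfl⟩)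
    exact hk'
  refine Module.Finite.of_fg_top ⟨hgens.toFinset, ?_⟩
  rw [Set.Finite.coe_toFinset, eq_top_iff]
  rintro x -
  induction x using T.total_induction with
  | zero => exact zero_mem _
  | of n x => exact hle (hm n x)
  | add x y hx hy => exact add_mem hx hy

variable (T)

/-- The elements all of whose components in degrees `≥ m + 2` lie in the sum of the images of the
operators. -/
def generatedFrom (m : ℕ) : Submodule (MvPolynomial (Fin c) R) T.Total where
  carrier := {x | ∀ n, m ≤ n → ∃ y : Fin c → H n, ∑ i, T.op i n (y i) = T.proj (n + 2) x}
  zero_mem' _ _ := ⟨0, by simp⟩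
  add_mem' hx hx' n hn := by
    obtain ⟨y, hy⟩ := hx n hn
    obtain ⟨y', hy'⟩ := hx' n hn
    exact ⟨y + y', by simp [Finset.sum_add_distrib, hy, hy']⟩
  smul_mem' p x hx := by
    induction p using MvPolynomial.induction_on with
    | C r =>
      intro n hn
      obtain ⟨y, hy⟩ := hx n hn
      rw [← MvPolynomial.algebraMap_eq, algebraMap_smul]
      exact ⟨r • y, by simp [← Finset.smul_sum, hy]⟩
    | add p q hp hq =>
      intro n hn
      obtain ⟨y, hy⟩ := hp n hn
      obtain ⟨y', hy'⟩ := hq n hn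
      exact ⟨y + y', by simp [Finset.sum_add_distrib, hy, hy', add_smul]⟩
    | mul_X p i _ =>
      intro n _
      refine ⟨Pi.single i (T.proj n (p • x)), ?_⟩
      rw [mul_comm, mul_smul, X_smul, proj_totalOp, Finset.sum_eq_single i]
      · simp
      · intro j _ hj; simp [Pi.single_eq_of_ne hj]
      · simp

variable {T}

lemma exists_mem_generatedFrom (x : T.Total) : ∃ m, x ∈ T.generatedFrom m := by
  induction x using T.total_induction with
  | zero => exact ⟨0, zero_mem _⟩
  | of k x => exact ⟨k, fun n hn ↦ ⟨0, by simp [T.proj_of_ne (show k ≠ n + 2 by omega)]⟩⟩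
  | add x y hx hy =>
    obtain ⟨m, hm⟩ := hx
    obtain ⟨m', hm'⟩ := hy
    exact ⟨m + m', add_mem (fun n hn ↦ hm n (by omega)) fun n hn ↦ hm' n (by omega)⟩

theorem eventuallyGenerated_of_finite_total [Module.Finite (MvPolynomial (Fin c) R) T.Total] :
    T.EventuallyGenerated := by
  obtain ⟨s, hs⟩ := Module.Finite.fg_top (R := MvPolynomial (Fin c) R) (M := T.Total)
  choose m hm using exists_mem_generatedFrom (T := T)
  have htop : ⊤ ≤ T.generatedFrom (s.sup m) := by
    rw [← hs, Submodule.span_le]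
    exact fun x hx n hn ↦ hm x n ((Finset.le_sup hx).trans hn)
  exact ⟨s.sup m, fun n hn x ↦ by simpa using htop (Submodule.mem_top (x := T.of (n + 2) x)) n hn⟩

variable (T)

/-- The operators restricted to a stable family of submodules. -/
def restrict (W : ∀ n, Submodule R (H n)) (hW : ∀ i n, ∀ x ∈ W n, T.op i n x ∈ W (n + 2)) :
    DegreeTwoAction R c fun n ↦ W n where
  op i n := (T.op i n).restrict (hW i n)
  comm i j n x := Subtype.ext (T.comm i j n x)

variable {W : ∀ n, Submodule R (H n)} {hW : ∀ i n, ∀ x ∈ W n, T.op i n x ∈ W (n + 2)}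

/-- The inclusion of the total module of a stable family of submodules. -/
noncomputable def restrictInclusion :
    (T.restrict W hW).Total →ₗ[MvPolynomial (Fin c) R] T.Total :=
  (T.restrict W hW).lift (fun n ↦ T.of n ∘ₗ (W n).subtype) fun i n x ↦ (T.X_smul_of i n x).symm

lemma restrictInclusion_of (n : ℕ) (x : W n) :
    T.restrictInclusion ((T.restrict W hW).of n x) = T.of n x :=
  (T.restrict W hW).lift_of (fun n ↦ T.of n ∘ₗ (W n).subtype) _ n x

lemma proj_restrictInclusion (n : ℕ) (x : (T.restrict W hW).Total) :
    T.proj n (T.restrictInclusion x) = (T.restrict W hW).proj n x := by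
  induction x using (T.restrict W hW).total_induction with
  | zero => simp
  | of m x =>
    rw [restrictInclusion_of]
    rcases eq_or_ne m n with rfl | h
    · simp
    · rw [proj_of_ne _ h, proj_of_ne _ h, ZeroMemClass.coe_zero]
  | add x y hx hy => simp only [map_add, hx, hy, Submodule.coe_add]

lemma restrictInclusion_injective :
    Function.Injective (T.restrictInclusion : (T.restrict W hW).Total → T.Total) := by
  refine (injective_iff_map_eq_zero _).2 fun x hx ↦ total_ext fun n ↦ ?_
  rw [map_zero, Subtype.ext_iff, ← proj_restrictInclusion, hx, map_zero, ZeroMemClass.coe_zero]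

variable {T} in
theorem EventuallyGenerated.restrict [IsNoetherianRing R] [∀ n, Module.Finite R (H n)]
    (hT : T.EventuallyGenerated) (W : ∀ n, Submodule R (H n))
    (hW : ∀ i n, ∀ x ∈ W n, T.op i n x ∈ W (n + 2)) : (T.restrict W hW).EventuallyGenerated :=
  have := hT.finite_total
  have : Module.Finite (MvPolynomial (Fin c) R) (T.restrict W hW).Total :=
    Module.Finite.of_injective _ T.restrictInclusion_injective
  eventuallyGenerated_of_finite_total

/-- The degree `n` part of the kernel of multiplication by `θ`. -/
noncomputable def torsionPart (θ : MvPolynomial (Fin c) R) (n : ℕ) :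
    Submodule R (H n) :=
  ((Submodule.torsionBy (MvPolynomial (Fin c) R) T.Total θ).restrictScalars R).comap (T.of n)

variable {T}

lemma mem_torsionPart {θ : MvPolynomial (Fin c) R} {n : ℕ} {x : H n} :
    x ∈ T.torsionPart θ n ↔ θ • T.of n x = 0 := Iff.rfl

lemma op_mem_torsionPart {θ : MvPolynomial (Fin c) R} (i : Fin c) (n : ℕ) (x : H n)
    (hx : x ∈ T.torsionPart θ n) : T.op i n x ∈ T.torsionPart θ (n + 2) := by
  rw [mem_torsionPart] at hx ⊢
  rw [← X_smul_of, smul_comm, hx, smul_zero]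

lemma eventually_torsionPart_eq_bot [IsNoetherian (MvPolynomial (Fin c) R) T.Total]
    {θ : MvPolynomial (Fin c) R} {k : ℕ}
    (hk : MvPolynomial.idealOfVars (Fin c) R ^ k •
      Submodule.torsionBy (MvPolynomial (Fin c) R) T.Total θ = ⊥) :
    ∃ n₀, ∀ n, n₀ ≤ n → ∀ x : H n, θ • T.of n x = 0 → x = 0 := by
  let T' := T.restrict (T.torsionPart θ) op_mem_torsionPart
  have hfin : Module.Finite (MvPolynomial (Fin c) R) T'.Total :=
    Module.Finite.of_injective T.restrictInclusion T.restrictInclusion_injective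
  obtain ⟨n₀, hspan⟩ := (eventuallyGenerated_of_finite_total (T := T')).of_mem_span k
  refine ⟨n₀ + 2 * k, fun n hn x hx ↦ ?_⟩
  obtain ⟨m, rfl⟩ : ∃ m, n = m + 2 * k := ⟨n - 2 * k, by omega⟩
  have hx0 : T'.of (m + 2 * k) ⟨x, hx⟩ = 0 := by
    refine (Submodule.mem_bot R).1 ((Submodule.span_le.2 ?_ : Submodule.span R _ ≤ ⊥)
      (hspan m (by omega) ⟨x, hx⟩))
    rintro _ ⟨p, hp, y, rfl⟩
    refine T.restrictInclusion_injective ?_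
    have hpk : p ∈ MvPolynomial.idealOfVars (Fin c) R ^ k := by
      refine (MvPolynomial.mem_pow_idealOfVars_iff k p).2 fun s hs ↦ ?_
      rw [Finsupp.degree_eq_weight_one (R := ℕ)]
      exact (hp (MvPolynomial.mem_support_iff.1 hs)).ge
    have := Submodule.smul_mem_smul hpk
      (show T.of m y ∈ Submodule.torsionBy (MvPolynomial (Fin c) R) T.Total θ from y.2)
    rw [hk, Submodule.mem_bot] at this
    rw [map_smul, restrictInclusion_of, this, map_zero]
  exact congrArg Subtype.val (T'.of_injective _ (hx0.trans (map_zero _).symm))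

attribute [local instance] MvPolynomial.gradedAlgebra in
variable (T) in
theorem exists_filterRegular [IsNoetherianRing R]
    [Module.Finite (MvPolynomial (Fin c) R) T.Total] :
    ∃ (e : ℕ) (θ : MvPolynomial (Fin c) R) (n₀ : ℕ), 0 < e ∧ θ.IsHomogeneous e ∧
      ∀ n, n₀ ≤ n → ∀ x : H n, θ • T.of n x = 0 → x = 0 := by
  classical
  let J := MvPolynomial.idealOfVars (Fin c) R
  let s := (associatedPrimes.finite (MvPolynomial (Fin c) R) T.Total).toFinset.filter (¬ J ≤ ·)
  have hs : ∀ p, p ∈ s ↔ p ∈ associatedPrimes (MvPolynomial (Fin c) R) T.Total ∧ ¬ J ≤ p := by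
    simp [s]
  obtain ⟨e, he, θ, hθ, hθs⟩ := exists_homogeneous_forall_notMem
    (MvPolynomial.homogeneousSubmodule (Fin c) R) (s := s)
    (fun p hp ↦ IsAssociatedPrime.isPrime ((hs p).1 hp).1) fun p hp ↦ by
      obtain ⟨i, hi⟩ : ∃ i, (X i : MvPolynomial (Fin c) R) ∉ p := by
        by_contra! hX
        exact ((hs p).1 hp).2 (Ideal.span_le.2 (Set.range_subset_iff.2 hX))
      exact ⟨1, one_pos, X i, MvPolynomial.isHomogeneous_X R i, hi⟩
  obtain ⟨k, hk⟩ := exists_pow_smul_torsionBy_eq_bot (M := T.Total) J (θ := θ) fun p hp hθp ↦ by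
    by_contra hJp
    exact hθs p ((hs p).2 ⟨hp, hJp⟩) hθp
  obtain ⟨n₀, hn₀⟩ := eventually_torsionPart_eq_bot hk
  exact ⟨e, θ, n₀, he, hθ, hn₀⟩

end DegreeTwoAction

/-! ### Cohomology of complexes given by matrices -/

section CochainMap

variable {R : Type*} [CommRing R] {Y : Type*} [AddCommGroup Y] [Module R Y]
variable {α β γ : Type*} [Fintype α]

/-- The map `Hom(D, Y)` on cochains induced by a matrix `D`, which is read as a linear map
`R^β → R^α`. -/
def cochainMap (D : Matrix α β R) : (α → Y) →ₗ[R] (β → Y) where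
  toFun u := fun j ↦ ∑ i, D i j • u i
  map_add' u v := by ext j; simp [Finset.sum_add_distrib]
  map_smul' r u := by
    ext j
    simp only [Pi.smul_apply, RingHom.id_apply, Finset.smul_sum]
    exact Finset.sum_congr rfl fun i _ ↦ smul_comm _ _ _

lemma cochainMap_apply (D : Matrix α β R) (u : α → Y) (j : β) :
    cochainMap D u j = ∑ i, D i j • u i := rfl

lemma cochainMap_mul [Fintype β] (D : Matrix α β R) (E : Matrix β γ R) (u : α → Y) :
    cochainMap (D * E) u = cochainMap E (cochainMap D u) := by
  ext j
  simp only [cochainMap_apply, Matrix.mul_apply, Finset.sum_smul, Finset.smul_sum]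
  rw [Finset.sum_comm]
  refine Finset.sum_congr rfl fun b _ ↦ Finset.sum_congr rfl fun a _ ↦ ?_
  rw [smul_smul, mul_comm]

lemma cochainMap_add (D E : Matrix α β R) (u : α → Y) :
    cochainMap (D + E) u = cochainMap D u + cochainMap E u := by
  ext j; simp [cochainMap_apply, add_smul, Finset.sum_add_distrib]

lemma cochainMap_sub (D E : Matrix α β R) (u : α → Y) :
    cochainMap (D - E) u = cochainMap D u - cochainMap E u := by
  ext j; simp [cochainMap_apply, sub_smul, Finset.sum_sub_distrib]

lemma cochainMap_neg (D : Matrix α β R) (u : α → Y) :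
    cochainMap (-D) u = -cochainMap D u := by
  ext j; simp [cochainMap_apply]

lemma cochainMap_one [DecidableEq α] (u : α → Y) : cochainMap (1 : Matrix α α R) u = u := by
  ext j; simp [cochainMap_apply, Matrix.one_apply]

lemma cochainMap_eq_zero_of_mem {I : Ideal R} (hI : ∀ a ∈ I, ∀ y : Y, a • y = 0)
    {D : Matrix α β R} (hD : ∀ i j, D i j ∈ I) (u : α → Y) : cochainMap D u = 0 := by
  ext j
  exact Finset.sum_eq_zero fun i _ ↦ hI _ (hD i j) _

lemma cochainMap_eq_of_sub_mem {I : Ideal R} (hI : ∀ a ∈ I, ∀ y : Y, a • y = 0)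
    {D E : Matrix α β R} (hD : ∀ i j, D i j - E i j ∈ I) (u : α → Y) :
    cochainMap D u = cochainMap E u := by
  rw [← sub_eq_zero, ← cochainMap_sub]
  exact cochainMap_eq_zero_of_mem hI hD u

lemma cochainMap_comp_linearMap {Y' : Type*} [AddCommGroup Y'] [Module R Y'] (f : Y →ₗ[R] Y')
    (D : Matrix α β R) (u : α → Y) :
    cochainMap D (fun i ↦ f (u i)) = fun j ↦ f (cochainMap D u j) := by
  ext j; simp [cochainMap_apply]

end CochainMap

section Cohomology

variable {R : Type*} [CommRing R] {ι : ℕ → Type} [∀ n, Fintype (ι n)]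
variable (D : ∀ n, Matrix (ι n) (ι (n + 1)) R) (Y : Type*) [AddCommGroup Y] [Module R Y]

/-- The `n`-cocycles of the cochain sequence `Hom(D, Y)`. -/
def cocycles (n : ℕ) : Submodule R (ι n → Y) := LinearMap.ker (cochainMap (D n))

/-- The `n`-coboundaries of the cochain sequence `Hom(D, Y)`. -/
def coboundaries : (n : ℕ) → Submodule R (ι n → Y)
  | 0 => ⊥
  | n + 1 => LinearMap.range (cochainMap (D n))

/-- The `n`-th cohomology of `Hom(D, Y)`. As `D` is not required to be a complex over `R`, the
coboundaries are intersected with the cocycles: in the applications `D * D` only vanishes modulo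
an ideal that annihilates `Y`. -/
abbrev Cohomology (n : ℕ) : Type _ :=
  cocycles D Y n ⧸ (coboundaries D Y n).comap (cocycles D Y n).subtype

-- Type class search does not find these by itself when `Y` is a tensor product.
instance (n : ℕ) : AddCommGroup (Cohomology D Y n) := Submodule.Quotient.addCommGroup _

instance (n : ℕ) : Module R (Cohomology D Y n) := Submodule.Quotient.module _

variable {D Y}

lemma mem_cocycles {n : ℕ} {u : ι n → Y} : u ∈ cocycles D Y n ↔ cochainMap (D n) u = 0 := Iff.rfl

lemma mem_coboundaries_succ {n : ℕ} {u : ι (n + 1) → Y} :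
    u ∈ coboundaries D Y (n + 1) ↔ ∃ w, cochainMap (D n) w = u := Iff.rfl

/-- The cohomology class of a cocycle. -/
def cohomologyClass {n : ℕ} (u : ι n → Y) (hu : u ∈ cocycles D Y n) : Cohomology D Y n :=
  Submodule.Quotient.mk ⟨u, hu⟩

lemma exists_cohomologyClass_eq {n : ℕ} (x : Cohomology D Y n) :
    ∃ u hu, x = cohomologyClass u hu := by
  obtain ⟨⟨u, hu⟩, rfl⟩ := Submodule.Quotient.mk_surjective _ x
  exact ⟨u, hu, rfl⟩

lemma cohomologyClass_eq_zero_iff {n : ℕ} {u : ι n → Y} {hu : u ∈ cocycles D Y n} :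
    cohomologyClass u hu = 0 ↔ u ∈ coboundaries D Y n :=
  Submodule.Quotient.mk_eq_zero _

lemma cohomologyClass_eq_iff {n : ℕ} {u v : ι n → Y} {hu : u ∈ cocycles D Y n}
    {hv : v ∈ cocycles D Y n} :
    cohomologyClass u hu = cohomologyClass v hv ↔ u - v ∈ coboundaries D Y n :=
  Submodule.Quotient.eq _

lemma cohomologyClass_add {n : ℕ} {u v : ι n → Y} (hu : u ∈ cocycles D Y n)
    (hv : v ∈ cocycles D Y n) :
    cohomologyClass (u + v) (add_mem hu hv) = cohomologyClass u hu + cohomologyClass v hv := rfl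

lemma cohomologyClass_smul {n : ℕ} (r : R) {u : ι n → Y} (hu : u ∈ cocycles D Y n) :
    cohomologyClass (r • u) (Submodule.smul_mem _ r hu) = r • cohomologyClass u hu := rfl

lemma cohomologyClass_sum {n : ℕ} {κ : Type*} (s : Finset κ) (u : κ → ι n → Y)
    (hu : ∀ k, u k ∈ cocycles D Y n) :
    cohomologyClass (∑ k ∈ s, u k) (Submodule.sum_mem _ fun k _ ↦ hu k) =
      ∑ k ∈ s, cohomologyClass (u k) (hu k) := by
  simp only [cohomologyClass, ← Submodule.mkQ_apply]
  rw [← map_sum]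
  congr 1
  ext1
  simp

section Map

variable {κ : ℕ → Type} [∀ n, Fintype (κ n)] {E : ∀ n, Matrix (κ n) (κ (n + 1)) R}
variable {Y' : Type*} [AddCommGroup Y'] [Module R Y']

/-- The map on cohomology induced by a linear map that preserves cocycles and coboundaries. -/
def mapCohomology {n m : ℕ} (f : (ι n → Y) →ₗ[R] (κ m → Y'))
    (hZ : ∀ u ∈ cocycles D Y n, f u ∈ cocycles E Y' m)
    (hB : ∀ u ∈ cocycles D Y n, u ∈ coboundaries D Y n → f u ∈ coboundaries E Y' m) :
    Cohomology D Y n →ₗ[R] Cohomology E Y' m :=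
  Submodule.mapQ _ _ (f.restrict hZ) fun u hu ↦ hB u.1 u.2 hu

end Map

variable (D Y) in
/-- The family of matrices `t` induces a degree-two endomorphism of the cochains of `Hom(D, Y)`. -/
def CommutesOn (t : ∀ n, Matrix (ι n) (ι (n + 2)) R) : Prop :=
  ∀ n (w : ι n → Y),
    cochainMap (t (n + 1)) (cochainMap (D n) w) = cochainMap (D (n + 2)) (cochainMap (t n) w)

variable {t : ∀ n, Matrix (ι n) (ι (n + 2)) R}

lemma CommutesOn.cochainMap_mem_cocycles (ht : CommutesOn D Y t) {n : ℕ} {u : ι n → Y}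
    (hu : u ∈ cocycles D Y n) : cochainMap (t n) u ∈ cocycles D Y (n + 2) := by
  rw [mem_cocycles] at *
  rw [← ht, hu, map_zero]

lemma CommutesOn.cochainMap_mem_coboundaries (ht : CommutesOn D Y t) {n : ℕ} {u : ι n → Y}
    (hu : u ∈ coboundaries D Y n) : cochainMap (t n) u ∈ coboundaries D Y (n + 2) := by
  cases n with
  | zero => rw [(hu : u = 0), map_zero]; exact zero_mem _
  | succ n =>
    obtain ⟨w, rfl⟩ := hu
    exact ⟨cochainMap (t n) w, (ht n w).symm⟩

/-- The operator of degree two on cohomology given by a family of matrices `t`. -/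
def CommutesOn.operator (ht : CommutesOn D Y t) (n : ℕ) :
    Cohomology D Y n →ₗ[R] Cohomology D Y (n + 2) :=
  mapCohomology (cochainMap (t n)) (fun _ ↦ ht.cochainMap_mem_cocycles)
    fun _ _ ↦ ht.cochainMap_mem_coboundaries

lemma CommutesOn.operator_class (ht : CommutesOn D Y t) {n : ℕ} (u : ι n → Y)
    (hu : u ∈ cocycles D Y n) :
    ht.operator n (cohomologyClass u hu) =
      cohomologyClass (cochainMap (t n) u) (ht.cochainMap_mem_cocycles hu) := rfl

instance [IsNoetherianRing R] [Module.Finite R Y] (n : ℕ) : Module.Finite R (Cohomology D Y n) :=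
  have : IsNoetherian R (ι n → Y) := inferInstance
  Module.Finite.of_surjective _ (Submodule.mkQ_surjective _)

end Cohomology

section Lifts

variable {Q : Type*} [CommRing Q] {I : Ideal Q}

/-- `a` lies in `I` and `b` is a lift of `φ a` to `Q`, for a linear map `φ : I → Q ⧸ I`. This is
how a cohomology operator is read off from a product of two lifted differentials: for a regular
sequence, the coefficients of the elements of `I` with respect to the sequence are well defined
modulo `I`. -/
def Lifts (φ : I →ₗ[Q] Q ⧸ I) (a b : Q) : Prop :=
  ∃ h : a ∈ I, Ideal.Quotient.mk I b = φ ⟨a, h⟩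

variable {φ : I →ₗ[Q] Q ⧸ I}

namespace Lifts

lemma exists_of_mem {a : Q} (h : a ∈ I) : ∃ b, Lifts φ a b := by
  obtain ⟨b, hb⟩ := Ideal.Quotient.mk_surjective (φ ⟨a, h⟩)
  exact ⟨b, h, hb⟩

lemma zero : Lifts φ 0 0 := ⟨I.zero_mem, by rw [map_zero]; exact (map_zero φ).symm⟩

lemma add {a b a' b' : Q} (h : Lifts φ a b) (h' : Lifts φ a' b') :
    Lifts φ (a + a') (b + b') := by
  obtain ⟨ha, hb⟩ := h
  obtain ⟨ha', hb'⟩ := h'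
  refine ⟨I.add_mem ha ha', ?_⟩
  rw [map_add, hb, hb', ← map_add]
  rfl

lemma mul_left {a b : Q} (r : Q) (h : Lifts φ a b) : Lifts φ (r * a) (r * b) := by
  obtain ⟨ha, hb⟩ := h
  refine ⟨I.mul_mem_left r ha, ?_⟩
  have hr : (⟨r * a, I.mul_mem_left r ha⟩ : I) = r • ⟨a, ha⟩ := rfl
  rw [map_mul, hb, hr, map_smul]
  rfl

lemma sub {a b a' b' : Q} (h : Lifts φ a b) (h' : Lifts φ a' b') :
    Lifts φ (a - a') (b - b') := by
  simpa [sub_eq_add_neg] using h.add (h'.mul_left (-1))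

lemma sum {κ : Type*} (s : Finset κ) {a b : κ → Q} (h : ∀ k, Lifts φ (a k) (b k)) :
    Lifts φ (∑ k ∈ s, a k) (∑ k ∈ s, b k) := by
  classical
  induction s using Finset.induction_on with
  | empty => simpa using Lifts.zero
  | insert k s hk ih => rw [Finset.sum_insert hk, Finset.sum_insert hk]; exact (h k).add ih

lemma sub_mem {a b b' : Q} (h : Lifts φ a b) (h' : Lifts φ a b') : b - b' ∈ I := by
  obtain ⟨_, hb⟩ := h
  obtain ⟨_, hb'⟩ := h'
  rw [← Ideal.Quotient.eq, hb, hb']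

end Lifts

variable {α β γ δ : Type*}

variable (φ) in
/-- Every entry of `T` is a lift of the image under `φ` of the entry of `E`. -/
def MatrixLifts (E T : Matrix α β Q) : Prop := ∀ i j, Lifts φ (E i j) (T i j)

namespace MatrixLifts

lemma exists_of_mem {E : Matrix α β Q} (h : ∀ i j, E i j ∈ I) : ∃ T, MatrixLifts φ E T := by
  choose T hT using fun i j ↦ Lifts.exists_of_mem (φ := φ) (h i j)
  exact ⟨T, hT⟩

lemma add {E T E' T' : Matrix α β Q} (h : MatrixLifts φ E T) (h' : MatrixLifts φ E' T') :
    MatrixLifts φ (E + E') (T + T') := fun i j ↦ (h i j).add (h' i j)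

lemma sub {E T E' T' : Matrix α β Q} (h : MatrixLifts φ E T) (h' : MatrixLifts φ E' T') :
    MatrixLifts φ (E - E') (T - T') := fun i j ↦ (h i j).sub (h' i j)

lemma mul_left [Fintype β] {E T : Matrix β γ Q} (D : Matrix α β Q) (h : MatrixLifts φ E T) :
    MatrixLifts φ (D * E) (D * T) := fun i j ↦ by
  simp only [Matrix.mul_apply]
  exact Lifts.sum _ fun k ↦ (h k j).mul_left _

lemma mul_right [Fintype β] {E T : Matrix α β Q} (D : Matrix β γ Q) (h : MatrixLifts φ E T) :
    MatrixLifts φ (E * D) (T * D) := fun i j ↦ by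
  simp only [Matrix.mul_apply]
  refine Lifts.sum _ fun k ↦ ?_
  rw [mul_comm, mul_comm (T i k)]
  exact (h i k).mul_left _

lemma sub_mem {E T T' : Matrix α β Q} (h : MatrixLifts φ E T) (h' : MatrixLifts φ E T') (i : α)
    (j : β) : T i j - T' i j ∈ I :=
  (h i j).sub_mem (h' i j)

lemma mul_sub_mul_mem [Fintype β] [Fintype γ] {D : Matrix α β Q} {E : Matrix β γ Q}
    {F : Matrix γ δ Q} {s : Matrix α γ Q} {t : Matrix β δ Q} (hs : MatrixLifts φ (D * E) s)
    (ht : MatrixLifts φ (E * F) t) (i : α) (j : δ) : (D * t) i j - (s * F) i j ∈ I :=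
  (ht.mul_left D).sub_mem (Matrix.mul_assoc D E F ▸ hs.mul_right F) i j

/-- The operators are natural up to homotopy for maps that commute with the differentials modulo
`I`: the homotopy lifts the image under `φ` of the defect of commutativity. -/
lemma exists_homotopy {α' β' γ' : Type*} [Fintype β] [Fintype γ] [Fintype α'] [Fintype β']
    {F₀ : Matrix α β Q} {F₁ : Matrix β γ Q} {G₀ : Matrix α' β' Q} {G₁ : Matrix β' γ' Q}
    {p₀ : Matrix α α' Q} {p₁ : Matrix β β' Q} {p₂ : Matrix γ γ' Q}
    (h₀ : ∀ i j, (p₀ * G₀) i j - (F₀ * p₁) i j ∈ I)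
    (h₁ : ∀ i j, (p₁ * G₁) i j - (F₁ * p₂) i j ∈ I)
    {s : Matrix α γ Q} {t : Matrix α' γ' Q}
    (hs : MatrixLifts φ (F₀ * F₁) s) (ht : MatrixLifts φ (G₀ * G₁) t) :
    ∃ (k₀ : Matrix α β' Q) (k₁ : Matrix β γ' Q), ∀ i j,
      (p₀ * t - s * p₂) i j - (k₀ * G₁ + F₀ * k₁) i j ∈ I := by
  obtain ⟨k₀, hk₀⟩ := exists_of_mem (φ := φ) (E := p₀ * G₀ - F₀ * p₁) h₀
  obtain ⟨k₁, hk₁⟩ := exists_of_mem (φ := φ) (E := p₁ * G₁ - F₁ * p₂) h₁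
  have hdefect : p₀ * (G₀ * G₁) - F₀ * F₁ * p₂ =
      (p₀ * G₀ - F₀ * p₁) * G₁ + F₀ * (p₁ * G₁ - F₁ * p₂) := by
    simp only [Matrix.sub_mul, Matrix.mul_sub, Matrix.mul_assoc]
    abel
  have hop := (ht.mul_left p₀).sub (hs.mul_right p₂)
  exact ⟨k₀, k₁, (hdefect ▸ hop).sub_mem ((hk₀.mul_right G₁).add (hk₁.mul_left F₀))⟩

end MatrixLifts

end Lifts

/-! ### Cohomology operators modulo a regular sequence -/

section OperatorAction

variable {R : Type*} [CommRing R] {ι : ℕ → Type} [∀ n, Fintype (ι n)]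
variable {D : ∀ n, Matrix (ι n) (ι (n + 1)) R} {Y : Type*} [AddCommGroup Y] [Module R Y]
variable {c : ℕ} {t : Fin c → ∀ n, Matrix (ι n) (ι (n + 2)) R}

/-- The action on cohomology of operators of degree two that commute up to coboundaries. -/
def operatorAction (ht : ∀ i, CommutesOn D Y (t i))
    (hcomm : ∀ i j n, ∀ u ∈ cocycles D Y n,
      cochainMap (t i (n + 2)) (cochainMap (t j n) u) -
        cochainMap (t j (n + 2)) (cochainMap (t i n) u) ∈ coboundaries D Y (n + 2 + 2)) :
    DegreeTwoAction R c (Cohomology D Y) where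
  op i n := (ht i).operator n
  comm i j n x := by
    obtain ⟨u, hu, rfl⟩ := exists_cohomologyClass_eq x
    simp only [CommutesOn.operator_class, cohomologyClass_eq_iff]
    exact hcomm i j n u hu

lemma eventuallyGenerated_operatorAction_iff {ht : ∀ i, CommutesOn D Y (t i)}
    {hcomm : ∀ i j n, ∀ u ∈ cocycles D Y n,
      cochainMap (t i (n + 2)) (cochainMap (t j n) u) -
        cochainMap (t j (n + 2)) (cochainMap (t i n) u) ∈ coboundaries D Y (n + 2 + 2)} :
    (operatorAction ht hcomm).EventuallyGenerated ↔
      ∃ n₀, ∀ n, n₀ ≤ n → ∀ u ∈ cocycles D Y (n + 2), ∃ v : Fin c → cocycles D Y n,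
        u - ∑ i, cochainMap (t i n) (v i : ι n → Y) ∈ coboundaries D Y (n + 2) := by
  have hsum (n : ℕ) (v : Fin c → cocycles D Y n) :
      ∑ i, (operatorAction ht hcomm).op i n (cohomologyClass (v i) (v i).2) =
        cohomologyClass (∑ i, cochainMap (t i n) (v i : ι n → Y))
          (Submodule.sum_mem _ fun i _ ↦ (ht i).cochainMap_mem_cocycles (v i).2) :=
    (cohomologyClass_sum _ _ _).symm
  refine exists_congr fun n₀ ↦ forall₂_congr fun n _ ↦ ⟨fun h u hu ↦ ?_, fun h x ↦ ?_⟩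
  · obtain ⟨y, hy⟩ := h (cohomologyClass u hu)
    choose v hv hvy using fun i ↦ exists_cohomologyClass_eq (y i)
    obtain rfl : y = _ := funext hvy
    exact ⟨fun i ↦ ⟨v i, hv i⟩,
      cohomologyClass_eq_iff.1 (hy.symm.trans (hsum n fun i ↦ ⟨v i, hv i⟩))⟩
  · obtain ⟨u, hu, rfl⟩ := exists_cohomologyClass_eq x
    obtain ⟨v, hv⟩ := h u hu
    exact ⟨fun i ↦ cohomologyClass (v i) (v i).2,
      (hsum n v).trans (cohomologyClass_eq_iff.2 hv).symm⟩

end OperatorAction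

section ModuloIdeal

variable {Q : Type u} [CommRing Q] (I : Ideal Q) {ι : ℕ → Type} [∀ n, Fintype (ι n)]

/-- The matrices `D` form a complex over `Q ⧸ I`. -/
def IsComplexMod (D : ∀ n, Matrix (ι n) (ι (n + 1)) Q) : Prop :=
  ∀ n i j, (D n * D (n + 1)) i j ∈ I

/-- The sequence of free `Q ⧸ I`-modules with differentials `D` is exact in positive degrees. -/
def IsExactMod (D : ∀ n, Matrix (ι n) (ι (n + 1)) Q) : Prop :=
  ∀ n (x : ι (n + 1) → Q), (∀ i, (D n).mulVec x i ∈ I) →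
    ∃ y : ι (n + 2) → Q, ∀ i, x i - (D (n + 1)).mulVec y i ∈ I

variable {I} {D : ∀ n, Matrix (ι n) (ι (n + 1)) Q} {c : ℕ} {φ : Fin c → I →ₗ[Q] Q ⧸ I}
variable {t : Fin c → ∀ n, Matrix (ι n) (ι (n + 2)) Q}
variable {Y : Type*} [AddCommGroup Y] [Module Q Y]

lemma commutesOn_of_matrixLifts (ht : ∀ i n, MatrixLifts (φ i) (D n * D (n + 1)) (t i n))
    (hY : ∀ a ∈ I, ∀ y : Y, a • y = 0) (i : Fin c) : CommutesOn D Y (t i) := by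
  intro n w
  rw [← cochainMap_mul, ← cochainMap_mul]
  exact cochainMap_eq_of_sub_mem hY ((ht i n).mul_sub_mul_mem (ht i (n + 1))) w

lemma comm_sub_mem_coboundaries_of_matrixLifts
    (ht : ∀ i n, MatrixLifts (φ i) (D n * D (n + 1)) (t i n))
    (hY : ∀ a ∈ I, ∀ y : Y, a • y = 0) (i j : Fin c) (n : ℕ) (u : ι n → Y)
    (hu : u ∈ cocycles D Y n) :
    cochainMap (t i (n + 2)) (cochainMap (t j n) u) -
      cochainMap (t j (n + 2)) (cochainMap (t i n) u) ∈ coboundaries D Y (n + 2 + 2) := by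
  have hchain : ∀ m i' j', (t j m * D (m + 2)) i' j' - (D m * t j (m + 1)) i' j' ∈ I := by
    intro m i' j'
    rw [← neg_mem_iff, neg_sub]
    exact (ht j m).mul_sub_mul_mem (ht j (m + 1)) i' j'
  obtain ⟨k₀, k₁, hk⟩ := MatrixLifts.exists_homotopy (hchain n) (hchain (n + 1))
    (ht i n) (ht i (n + 2))
  have hhomotopy := cochainMap_eq_of_sub_mem hY hk u
  rw [cochainMap_sub, cochainMap_mul, cochainMap_mul, cochainMap_add, cochainMap_mul,
    cochainMap_mul, mem_cocycles.1 hu, map_zero, add_zero] at hhomotopy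
  exact ⟨_, hhomotopy.symm⟩

/-- The action of the operators read off from `φ` on the cohomology of `Hom(D, Y)`, for a module
`Y` over `Q ⧸ I`. -/
def liftAction (ht : ∀ i n, MatrixLifts (φ i) (D n * D (n + 1)) (t i n))
    (hY : ∀ a ∈ I, ∀ y : Y, a • y = 0) : DegreeTwoAction Q c (Cohomology D Y) :=
  operatorAction (commutesOn_of_matrixLifts ht hY) (comm_sub_mem_coboundaries_of_matrixLifts ht hY)

/-- The operators read off from `φ` generate the Ext-modules over `Q ⧸ I` of finitely generated
modules in high degrees, whatever lifts to `Q` are used to compute them. -/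
def GeneratesExt (φ : Fin c → I →ₗ[Q] Q ⧸ I) : Prop :=
  ∀ (ι : ℕ → Type) [∀ n, Fintype (ι n)] [∀ n, DecidableEq (ι n)]
    (D : ∀ n, Matrix (ι n) (ι (n + 1)) Q), IsComplexMod I D → IsExactMod I D →
    ∀ (t : Fin c → ∀ n, Matrix (ι n) (ι (n + 2)) Q)
      (ht : ∀ i n, MatrixLifts (φ i) (D n * D (n + 1)) (t i n))
      (Y : Type u) [AddCommGroup Y] [Module Q Y] [Module.Finite Q Y]
      (hY : ∀ a ∈ I, ∀ y : Y, a • y = 0), (liftAction ht hY).EventuallyGenerated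

end ModuloIdeal

section IdealStep

variable {Q : Type*} [CommRing Q] {I : Ideal Q} {f : Q}

lemma exists_sub_mul_mem_of_mem_sup_span_singleton {x : Q} (hx : x ∈ I ⊔ Ideal.span {f}) :
    ∃ r, x - f * r ∈ I := by
  obtain ⟨a, ha, b, hb, rfl⟩ := Submodule.mem_sup.1 hx
  obtain ⟨r, rfl⟩ := Ideal.mem_span_singleton.1 hb
  exact ⟨r, by rwa [add_sub_cancel_right]⟩

lemma add_mul_mem_sup_span_singleton {a : Q} (ha : a ∈ I) (r : Q) :
    a + f * r ∈ I ⊔ Ideal.span {f} :=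
  Ideal.add_mem _ (Ideal.mem_sup_left ha)
    (Ideal.mem_sup_right (Ideal.mul_mem_right r _ (Ideal.mem_span_singleton_self f)))

lemma exists_linearMap_sup_span_singleton {N : Type*} [AddCommGroup N] [Module Q N]
    (g : I × Q →ₗ[Q] N) (hg : ∀ (a : I) r, (a : Q) + f * r = 0 → g (a, r) = 0) :
    ∃ φ : ↥(I ⊔ Ideal.span {f}) →ₗ[Q] N, ∀ (a : I) (r : Q),
      φ ⟨a + f * r, add_mul_mem_sup_span_singleton a.2 r⟩ = g (a, r) := by
  let p : (I × Q) →ₗ[Q] ↥(I ⊔ Ideal.span {f}) :=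
    { toFun x := ⟨x.1 + f * x.2, add_mul_mem_sup_span_singleton x.1.2 x.2⟩
      map_add' x y := by ext; simp; ring
      map_smul' r x := by ext; simp; ring }
  have hp : Function.Surjective p := fun x ↦ by
    obtain ⟨r, hr⟩ := exists_sub_mul_mem_of_mem_sup_span_singleton x.2
    exact ⟨(⟨_, hr⟩, r), Subtype.ext (sub_add_cancel _ _)⟩
  have hker : LinearMap.ker p ≤ LinearMap.ker g := fun x hx ↦
    hg x.1 x.2 (congrArg Subtype.val (LinearMap.mem_ker.1 hx))
  refine ⟨(LinearMap.ker p).liftQ g hker ∘ₗ (p.quotKerEquivOfSurjective hp).symm, fun a r ↦ ?_⟩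
  change (LinearMap.ker p).liftQ g hker ((p.quotKerEquivOfSurjective hp).symm (p (a, r))) = _
  rw [LinearMap.quotKerEquivOfSurjective_symm_apply, Submodule.liftQ_apply]

lemma exists_forall_lifts_of_lifts (hf : ∀ a, f * a ∈ I → a ∈ I) (φ : I →ₗ[Q] Q ⧸ I) :
    ∃ ψ : ↥(I ⊔ Ideal.span {f}) →ₗ[Q] Q ⧸ (I ⊔ Ideal.span {f}),
      ∀ a b, Lifts φ a b → Lifts ψ a b := by
  let π : (Q ⧸ I) →ₗ[Q] Q ⧸ (I ⊔ Ideal.span {f}) :=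
    Submodule.mapQ _ _ LinearMap.id (le_sup_left (a := I))
  have hπ (b : Q) : π (Ideal.Quotient.mk I b) = Ideal.Quotient.mk _ b := rfl
  obtain ⟨ψ, hψ⟩ := exists_linearMap_sup_span_singleton (f := f)
    (π ∘ₗ φ ∘ₗ LinearMap.fst Q I Q) fun a r h ↦ by
      have hr : r ∈ I := hf r (by rw [eq_neg_of_add_eq_zero_right h]; exact neg_mem a.2)
      obtain ⟨s, hs⟩ := Ideal.Quotient.mk_surjective (φ ⟨r, hr⟩)
      have ha : a = (-f) • ⟨r, hr⟩ := Subtype.ext (by simpa using eq_neg_of_add_eq_zero_left h)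
      have hfs : (-f) • Ideal.Quotient.mk (I ⊔ Ideal.span {f}) s = Ideal.Quotient.mk _ (-f * s) :=
        rfl
      rw [LinearMap.comp_apply, LinearMap.comp_apply, LinearMap.fst_apply, ha, map_smul, map_smul,
        ← hs, hπ, hfs, Ideal.Quotient.eq_zero_iff_mem]
      exact Ideal.mul_mem_right _ _
        (neg_mem (Ideal.mem_sup_right (Ideal.mem_span_singleton_self f)))
  refine ⟨ψ, fun a b ⟨ha, hb⟩ ↦ ⟨Ideal.mem_sup_left ha, ?_⟩⟩
  have hψa := hψ ⟨a, ha⟩ 0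
  simp only [mul_zero, add_zero, LinearMap.comp_apply, LinearMap.fst_apply] at hψa
  rw [hψa, ← hb, hπ]

lemma exists_forall_lifts_add_mul (hf : ∀ a, f * a ∈ I → a ∈ I) :
    ∃ ψ : ↥(I ⊔ Ideal.span {f}) →ₗ[Q] Q ⧸ (I ⊔ Ideal.span {f}),
      ∀ a ∈ I, ∀ r, Lifts ψ (a + f * r) r := by
  obtain ⟨ψ, hψ⟩ := exists_linearMap_sup_span_singleton (f := f)
    (Submodule.mkQ (I ⊔ Ideal.span {f}) ∘ₗ LinearMap.snd Q I Q) fun a r h ↦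
      Ideal.Quotient.eq_zero_iff_mem.2 <| Ideal.mem_sup_left <|
        hf r (by rw [eq_neg_of_add_eq_zero_right h]; exact neg_mem a.2)
  exact ⟨ψ, fun a ha r ↦ ⟨_, (hψ ⟨a, ha⟩ r).symm⟩⟩

end IdealStep

section ShamashCone

variable {Q : Type*} [CommRing Q] {ι : ℕ → Type} [∀ n, Fintype (ι n)]
variable {D : ∀ n, Matrix (ι n) (ι (n + 1)) Q} {f : Q} {r : ∀ n, Matrix (ι n) (ι (n + 2)) Q}
variable {I : Ideal Q}

lemma mul_sub_mul_mem_of_sub_mul_mem (hf : ∀ a, f * a ∈ I → a ∈ I)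
    (hr : ∀ n i j, (D n * D (n + 1)) i j - f * r n i j ∈ I) (n : ℕ) (i : ι n) (j : ι (n + 3)) :
    (D n * r (n + 1) - r n * D (n + 2)) i j ∈ I := by
  apply hf
  have hassoc : f • (D n * r (n + 1) - r n * D (n + 2)) =
      (D n * D (n + 1) - f • r n) * D (n + 2) - D n * (D (n + 1) * D (n + 2) - f • r (n + 1)) := by
    simp only [Matrix.sub_mul, Matrix.mul_sub, smul_sub, Matrix.mul_assoc, Matrix.smul_mul,
      Matrix.mul_smul]
    abel
  rw [← smul_eq_mul, ← Matrix.smul_apply, hassoc]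
  exact I.sub_mem (Ideal.sum_mem _ fun k _ ↦ I.mul_mem_right _ (hr n i k))
    (Ideal.sum_mem _ fun k _ ↦ I.mul_mem_left _ (hr (n + 1) k j))

variable [∀ n, DecidableEq (ι n)]

variable (D f r) in
/-- Shamash's construction: if `D` is a resolution modulo `I ⊔ (f)` and `D * D = f • r` modulo
`I`, this is a resolution of the same module modulo `I`, up to a shift of degrees by one. -/
def shamashCone (n : ℕ) : Matrix (ι (n + 1) ⊕ ι n) (ι (n + 1 + 1) ⊕ ι (n + 1)) Q :=
  Matrix.fromBlocks (D (n + 1)) (f • 1) (-r n) (-D n)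

lemma shamashCone_mulVec (n : ℕ) (x : ι (n + 2) → Q) (y : ι (n + 1) → Q) :
    (shamashCone D f r n).mulVec (Sum.elim x y) =
      Sum.elim ((D (n + 1)).mulVec x + f • y) (-(r n).mulVec x - (D n).mulVec y) := by
  rw [shamashCone, Matrix.fromBlocks_mulVec]
  simp [Matrix.smul_mulVec, Matrix.neg_mulVec, sub_eq_add_neg, Function.comp_def]

lemma isComplexMod_shamashCone (hf : ∀ a, f * a ∈ I → a ∈ I)
    (hr : ∀ n i j, (D n * D (n + 1)) i j - f * r n i j ∈ I) :
    IsComplexMod I (shamashCone D f r) := by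
  intro n i j
  rw [shamashCone, shamashCone, Matrix.fromBlocks_multiply]
  rcases i with i | i <;> rcases j with j | j
  · simpa [sub_eq_add_neg] using hr (n + 1) i j
  · simp
  · simpa [sub_eq_add_neg, add_comm] using mul_sub_mul_mem_of_sub_mul_mem hf hr n i j
  · simpa [sub_eq_add_neg, add_comm] using hr n i j

lemma isExactMod_shamashCone (hf : ∀ a, f * a ∈ I → a ∈ I)
    (hr : ∀ n i j, (D n * D (n + 1)) i j - f * r n i j ∈ I)
    (hD : IsExactMod (I ⊔ Ideal.span {f}) D) : IsExactMod I (shamashCone D f r) := by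
  intro n z hz
  obtain ⟨x, y, rfl⟩ : ∃ x y, z = Sum.elim x y :=
    ⟨z ∘ Sum.inl, z ∘ Sum.inr, (Sum.elim_comp_inl_inr z).symm⟩
  rw [shamashCone_mulVec] at hz
  have hDx : ∀ i, (D (n + 1)).mulVec x i + f * y i ∈ I := fun i ↦ hz (Sum.inl i)
  obtain ⟨w, hw⟩ := hD (n + 1) x fun i ↦ by
    simpa using add_mul_mem_sup_span_singleton (f := f) (hDx i) (-y i)
  choose s hs using fun i ↦ exists_sub_mul_mem_of_mem_sup_span_singleton (hw i)
  have hxw : ∀ i, x i - ((D (n + 2)).mulVec w i + f * s i) ∈ I := fun i ↦ by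
    simpa only [sub_sub] using hs i
  refine ⟨Sum.elim w s, ?_⟩
  rw [shamashCone_mulVec]
  rintro (i | i)
  · exact hxw i
  · have hcomplex : (shamashCone D f r n).mulVec
        ((shamashCone D f r (n + 1)).mulVec (Sum.elim w s)) (Sum.inl i) ∈ I := by
      rw [Matrix.mulVec_mulVec]
      exact Ideal.sum_mem _ fun k _ ↦ I.mul_mem_right _ (isComplexMod_shamashCone hf hr n _ k)
    rw [shamashCone_mulVec, shamashCone_mulVec] at hcomplex
    have hDxw : (D (n + 1)).mulVec (x - ((D (n + 2)).mulVec w + f • s)) i ∈ I :=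
      Ideal.sum_mem _ fun k _ ↦ I.mul_mem_left _ (hxw k)
    rw [Matrix.mulVec_sub] at hDxw
    apply hf
    convert I.sub_mem (I.sub_mem (hDx i) hcomplex) hDxw using 1
    simp only [Sum.elim_inl, Sum.elim_inr, Pi.sub_apply, Pi.add_apply, Pi.smul_apply,
      Pi.neg_apply, smul_eq_mul]
    ring

variable {Y : Type*} [AddCommGroup Y] [Module Q Y]

lemma cochainMap_shamashCone (hfY : ∀ y : Y, f • y = 0) (n : ℕ) (a : ι (n + 1) → Y)
    (b : ι n → Y) :
    cochainMap (shamashCone D f r n) (Sum.elim a b) =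
      Sum.elim (cochainMap (D (n + 1)) a - cochainMap (r n) b) (-cochainMap (D n) b) := by
  ext (j | j)
  · simp [cochainMap_apply, shamashCone, sub_eq_add_neg]
  · simp [cochainMap_apply, shamashCone, mul_smul, hfY]

lemma elim_zero_mem_cocycles_shamashCone (hfY : ∀ y : Y, f • y = 0) {n : ℕ} {u : ι (n + 1) → Y}
    (hu : u ∈ cocycles D Y (n + 1)) :
    (Sum.elim u 0 : ι (n + 1) ⊕ ι n → Y) ∈ cocycles (shamashCone D f r) Y n := by
  rw [mem_cocycles, cochainMap_shamashCone hfY, mem_cocycles.1 hu]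
  simp

/-- The restriction of operators from the cohomology over `Q ⧸ (I ⊔ (f))` to the cohomology over
`Q ⧸ I`. It is defined on cocycles since it does not preserve coboundaries in degree zero. -/
def cocyclesToShamashCone (hfY : ∀ y : Y, f • y = 0) (n : ℕ) :
    cocycles D Y (n + 1) →ₗ[Q] Cohomology (shamashCone D f r) Y n where
  toFun u := cohomologyClass (Sum.elim u 0) (elim_zero_mem_cocycles_shamashCone hfY u.2)
  map_add' u v := by
    rw [← cohomologyClass_add]
    congr 1
    ext (j | j) <;> simp
  map_smul' a u := by
    rw [RingHom.id_apply, ← cohomologyClass_smul]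
    congr 1
    ext (j | j) <;> simp

lemma exists_sub_mem_coboundaries_of_cocyclesToShamashCone_eq_zero (hfY : ∀ y : Y, f • y = 0)
    {n : ℕ} {u : cocycles D Y (n + 3)}
    (hu : cocyclesToShamashCone (r := r) hfY (n + 2) u = 0) :
    ∃ b ∈ cocycles D Y (n + 1),
      (u : ι (n + 3) → Y) - cochainMap (r (n + 1)) b ∈ coboundaries D Y (n + 3) := by
  obtain ⟨w, hw⟩ := cohomologyClass_eq_zero_iff.1 hu
  obtain ⟨a, b, rfl⟩ : ∃ a b, w = Sum.elim a b :=
    ⟨w ∘ Sum.inl, w ∘ Sum.inr, (Sum.elim_comp_inl_inr w).symm⟩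
  rw [cochainMap_shamashCone hfY, Sum.elim_eq_iff] at hw
  obtain ⟨hua, hb⟩ := hw
  exact ⟨-b, neg_mem (neg_eq_zero.1 hb), a, by rw [map_neg, ← hua]; abel⟩

end ShamashCone

section ShamashConeOperators

variable {Q : Type*} [CommRing Q] {ι : ℕ → Type} [∀ n, Fintype (ι n)] [∀ n, DecidableEq (ι n)]
variable {D : ∀ n, Matrix (ι n) (ι (n + 1)) Q} {f : Q} {r : ∀ n, Matrix (ι n) (ι (n + 2)) Q}
variable {I : Ideal Q} {φ : I →ₗ[Q] Q ⧸ I}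

lemma cochainMap_fromCols_one_zero {α β Y : Type*} [Fintype α] [DecidableEq α] [AddCommGroup Y]
    [Module Q Y] (u : α → Y) :
    cochainMap (Matrix.fromCols (1 : Matrix α α Q) (0 : Matrix α β Q)) u = Sum.elim u 0 := by
  ext (j | j) <;> simp [cochainMap_apply, Matrix.one_apply]

variable {Y : Type*} [AddCommGroup Y] [Module Q Y]

lemma cochainMap_elim_zero_sub_mem_coboundaries (hfI : f ∈ I)
    (hY : ∀ a ∈ I, ∀ y : Y, a • y = 0) {n : ℕ} {s : Matrix (ι (n + 1)) (ι (n + 3)) Q}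
    (hs : MatrixLifts φ (D (n + 1) * D (n + 2)) s)
    {t : Matrix (ι (n + 1) ⊕ ι n) (ι (n + 3) ⊕ ι (n + 2)) Q}
    (ht : MatrixLifts φ (shamashCone D f r n * shamashCone D f r (n + 1)) t)
    {u : ι (n + 1) → Y} (hu : u ∈ cocycles D Y (n + 1)) :
    cochainMap t (Sum.elim u 0) - Sum.elim (cochainMap s u) 0 ∈
      coboundaries (shamashCone D f r) Y (n + 2) := by
  let p (m : ℕ) : Matrix (ι (m + 1)) (ι (m + 1) ⊕ ι m) Q := Matrix.fromCols 1 0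
  have hchain : ∀ m i j, (p m * shamashCone D f r m) i j - (D (m + 1) * p (m + 1)) i j ∈ I := by
    rintro m i (j | j)
    · simp [p, shamashCone, Matrix.fromCols_mul_fromBlocks, Matrix.mul_fromCols]
    · simpa [p, shamashCone, Matrix.fromCols_mul_fromBlocks, Matrix.mul_fromCols] using
        I.mul_mem_right _ hfI
  obtain ⟨k₀, k₁, hk⟩ := MatrixLifts.exists_homotopy (hchain n) (hchain (n + 1)) hs ht
  have hhomotopy := cochainMap_eq_of_sub_mem hY hk u
  rw [cochainMap_sub, cochainMap_mul, cochainMap_mul, cochainMap_add, cochainMap_mul,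
    cochainMap_mul, mem_cocycles.1 hu, map_zero, add_zero, cochainMap_fromCols_one_zero,
    cochainMap_fromCols_one_zero] at hhomotopy
  exact ⟨_, hhomotopy.symm⟩

variable {c : ℕ}

lemma liftAction_op_cocyclesToShamashCone {φ : Fin c → I →ₗ[Q] Q ⧸ I}
    {J : Ideal Q} {ψ : Fin c → J →ₗ[Q] Q ⧸ J} (hIJ : I ≤ J) (hfJ : f ∈ J)
    (hψ : ∀ i a b, Lifts (φ i) a b → Lifts (ψ i) a b)
    {s : Fin c → ∀ n, Matrix (ι (n + 1) ⊕ ι n) (ι (n + 3) ⊕ ι (n + 2)) Q}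
    (hs : ∀ i n, MatrixLifts (φ i) (shamashCone D f r n * shamashCone D f r (n + 1)) (s i n))
    {t : Fin c → ∀ n, Matrix (ι n) (ι (n + 2)) Q}
    (ht : ∀ i n, MatrixLifts (ψ i) (D n * D (n + 1)) (t i n))
    (hY : ∀ a ∈ J, ∀ y : Y, a • y = 0) (i : Fin c) (n : ℕ) (u : cocycles D Y (n + 1)) :
    (liftAction hs fun a ha ↦ hY a (hIJ ha)).op i n (cocyclesToShamashCone (hY f hfJ) n u) =
      cocyclesToShamashCone (hY f hfJ) (n + 2) ⟨cochainMap (t i (n + 1)) u,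
        (commutesOn_of_matrixLifts ht hY i).cochainMap_mem_cocycles u.2⟩ :=
  cohomologyClass_eq_iff.2 <| cochainMap_elim_zero_sub_mem_coboundaries hfJ hY
    (ht i (n + 1)) (fun a b ↦ hψ i _ _ (hs i n a b)) u.2

theorem GeneratesExt.eventually_sub_sum_sub_mem_coboundaries {Q : Type u} [CommRing Q]
    [IsNoetherianRing Q] {I : Ideal Q} {φ : Fin c → I →ₗ[Q] Q ⧸ I} (hφ : GeneratesExt φ) {f : Q}
    (hf : ∀ a, f * a ∈ I → a ∈ I) {J : Ideal Q} {ψ : Fin c → J →ₗ[Q] Q ⧸ J} (hIJ : I ≤ J)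
    (hfJ : f ∈ J) (hψ : ∀ i a b, Lifts (φ i) a b → Lifts (ψ i) a b)
    {ι : ℕ → Type} [∀ n, Fintype (ι n)]
    {D : ∀ n, Matrix (ι n) (ι (n + 1)) Q} {r : ∀ n, Matrix (ι n) (ι (n + 2)) Q}
    (hr : ∀ n i j, (D n * D (n + 1)) i j - f * r n i j ∈ I)
    (hex : IsExactMod (I ⊔ Ideal.span {f}) D) {t : Fin c → ∀ n, Matrix (ι n) (ι (n + 2)) Q}
    (ht : ∀ i n, MatrixLifts (ψ i) (D n * D (n + 1)) (t i n))
    {Y : Type u} [AddCommGroup Y] [Module Q Y] [Module.Finite Q Y]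
    (hY : ∀ a ∈ J, ∀ y : Y, a • y = 0) :
    ∃ n₀, ∀ n, n₀ ≤ n → ∀ u ∈ cocycles D Y (n + 3),
      ∃ v : Fin c → cocycles D Y (n + 1), ∃ b ∈ cocycles D Y (n + 1),
        u - (cochainMap (r (n + 1)) b + ∑ i, cochainMap (t i (n + 1)) (v i : ι (n + 1) → Y)) ∈
          coboundaries D Y (n + 3) := by
  classical
  have hfY : ∀ y : Y, f • y = 0 := hY f hfJ
  have hIY : ∀ a ∈ I, ∀ y : Y, a • y = 0 := fun a ha ↦ hY a (hIJ ha)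
  have hG := isComplexMod_shamashCone hf hr
  choose s hs using fun i n ↦ MatrixLifts.exists_of_mem (φ := φ i) (hG n)
  have hgen := hφ _ _ hG (isExactMod_shamashCone hf hr hex) s hs Y hIY
  have hop (i : Fin c) := liftAction_op_cocyclesToShamashCone hIJ hfJ hψ hs ht hY i
  obtain ⟨n₀, hn₀⟩ := hgen.restrict
    (fun n ↦ LinearMap.range (cocyclesToShamashCone (D := D) (r := r) hfY n)) fun i n x ⟨u, hu⟩ ↦
      ⟨_, (hu ▸ hop i n u).symm⟩
  refine ⟨n₀, fun n hn u hu ↦ ?_⟩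
  obtain ⟨y, hy⟩ := hn₀ n hn ⟨cocyclesToShamashCone hfY (n + 2) ⟨u, hu⟩, ⟨_, rfl⟩⟩
  choose v hv using fun i ↦ (y i).2
  let tv (i : Fin c) : cocycles D Y (n + 3) := ⟨cochainMap (t i (n + 1)) (v i),
    (commutesOn_of_matrixLifts ht hY i).cochainMap_mem_cocycles (v i).2⟩
  have hker : cocyclesToShamashCone (r := r) hfY (n + 2) (⟨u, hu⟩ - ∑ i, tv i) = 0 := by
    have hsum : _ = cocyclesToShamashCone hfY (n + 2) ⟨u, hu⟩ := congrArg Subtype.val hy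
    rw [AddSubmonoidClass.coe_finsetSum] at hsum
    rw [map_sub, map_sum, sub_eq_zero, ← hsum]
    refine Finset.sum_congr rfl fun i _ ↦ ?_
    rw [← hop, hv]
    rfl
  obtain ⟨b, hb, hbu⟩ := exists_sub_mem_coboundaries_of_cocyclesToShamashCone_eq_zero hfY hker
  refine ⟨v, b, hb, ?_⟩
  simpa [tv, sub_sub, add_comm (cochainMap _ b)] using hbu

theorem GeneratesExt.exists_sup_span_singleton {Q : Type u} [CommRing Q] [IsNoetherianRing Q]
    {I : Ideal Q} {φ : Fin c → I →ₗ[Q] Q ⧸ I} (hφ : GeneratesExt φ) {f : Q}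
    (hf : ∀ a, f * a ∈ I → a ∈ I) :
    ∃ ψ : Fin (c + 1) → ↥(I ⊔ Ideal.span {f}) →ₗ[Q] Q ⧸ (I ⊔ Ideal.span {f}),
      GeneratesExt ψ := by
  choose ψ hψ using fun i ↦ exists_forall_lifts_of_lifts hf (φ i)
  obtain ⟨ψ₀, hψ₀⟩ := exists_forall_lifts_add_mul hf
  refine ⟨Fin.cons ψ₀ ψ, ?_⟩
  intro ι _ _ D hcx hex t ht Y _ _ _ hY
  obtain ⟨r, hr⟩ : ∃ r : ∀ n, Matrix (ι n) (ι (n + 2)) Q,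
      ∀ n i j, (D n * D (n + 1)) i j - f * r n i j ∈ I := by
    choose r hr using fun n i j ↦ exists_sub_mul_mem_of_mem_sup_span_singleton (hcx n i j)
    exact ⟨r, hr⟩
  obtain ⟨n₀, hn₀⟩ := hφ.eventually_sub_sum_sub_mem_coboundaries hf le_sup_left
    (Ideal.mem_sup_right (Ideal.mem_span_singleton_self f)) hψ hr hex (fun i ↦ ht i.succ) hY
  refine eventuallyGenerated_operatorAction_iff.2 ⟨n₀ + 1, fun n hn u hu ↦ ?_⟩
  obtain ⟨n, rfl⟩ : ∃ m, n = m + 1 := ⟨n - 1, by omega⟩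
  obtain ⟨v, b, hb, hbu⟩ := hn₀ n (by omega) u hu
  have hrb : cochainMap (r (n + 1)) b = cochainMap (t 0 (n + 1)) b :=
    cochainMap_eq_of_sub_mem hY (fun i j ↦ Lifts.sub_mem
      (by simpa using hψ₀ _ (hr (n + 1) i j) (r (n + 1) i j)) (ht 0 (n + 1) i j)) b
  refine ⟨Fin.cons ⟨b, hb⟩ v, ?_⟩
  rw [Fin.sum_univ_succ]
  simpa only [Fin.cons_zero, Fin.cons_succ, ← hrb] using hbu

end ShamashConeOperators

lemma exists_generatesExt_of_isWeaklyRegular {Q : Type u} [CommRing Q] [IsNoetherianRing Q]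
    (hbot : ∀ φ : Fin 0 → (⊥ : Ideal Q) →ₗ[Q] Q ⧸ (⊥ : Ideal Q), GeneratesExt φ) (rs : List Q)
    (hrs : RingTheory.Sequence.IsWeaklyRegular Q rs) :
    ∃ (c : ℕ) (φ : Fin c → Ideal.ofList rs →ₗ[Q] Q ⧸ Ideal.ofList rs), GeneratesExt φ := by
  induction rs using List.reverseRecOn with
  | nil =>
    rw [Ideal.ofList_nil]
    exact ⟨0, Fin.elim0, hbot _⟩
  | append_singleton rs f ih =>
    rw [RingTheory.Sequence.isWeaklyRegular_append_iff,
      RingTheory.Sequence.isWeaklyRegular_singleton_iff, smul_eq_mul, Ideal.mul_top] at hrs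
    obtain ⟨c, φ, hφ⟩ := ih hrs.1
    have hf : ∀ a, f * a ∈ Ideal.ofList rs → a ∈ Ideal.ofList rs := by
      intro a ha
      rw [← Ideal.Quotient.eq_zero_iff_mem] at ha ⊢
      exact IsSMulRegular.right_eq_zero_of_smul hrs.2 ha
    obtain ⟨ψ, hψ⟩ := hφ.exists_sup_span_singleton hf
    rw [Ideal.ofList_append, Ideal.ofList_singleton]
    exact ⟨c + 1, ψ, hψ⟩

/-- Eisenbud's cohomology operators, without reference to a presentation of the ring: they send
two composable matrices with product zero to a matrix of degree two, naturally up to homotopy. For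
matrices with nonzero product the value of `op` is irrelevant. -/
structure CohomologyOperators (B : Type*) [CommRing B] (c : ℕ) where
  op : ∀ {α β γ : Type} [Fintype β], Fin c → Matrix α β B → Matrix β γ B → Matrix α γ B
  comm : ∀ {α β γ δ : Type} [Fintype β] [Fintype γ] (i : Fin c) {D : Matrix α β B}
    {E : Matrix β γ B} {F : Matrix γ δ B}, D * E = 0 → E * F = 0 →
    D * op i E F = op i D E * F
  exists_homotopy : ∀ {α β γ α' β' γ' : Type} [Fintype β] [Fintype γ] [Fintype α'] [Fintype β']
    (i : Fin c) {F₀ : Matrix α β B} {F₁ : Matrix β γ B} {G₀ : Matrix α' β' B}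
    {G₁ : Matrix β' γ' B} {p₀ : Matrix α α' B} {p₁ : Matrix β β' B} {p₂ : Matrix γ γ' B},
    F₀ * F₁ = 0 → G₀ * G₁ = 0 → p₀ * G₀ = F₀ * p₁ → p₁ * G₁ = F₁ * p₂ →
    ∃ (k₀ : Matrix α β' B) (k₁ : Matrix β γ' B),
      p₀ * op i G₀ G₁ - op i F₀ F₁ * p₂ = k₀ * G₁ + F₀ * k₁

namespace CohomologyOperators

section Action

variable {B : Type*} [CommRing B] {c : ℕ} (χ : CohomologyOperators B c)
variable {ι : ℕ → Type} [∀ n, Fintype (ι n)] {D : ∀ n, Matrix (ι n) (ι (n + 1)) B}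
variable (Y : Type*) [AddCommGroup Y] [Module B Y]

lemma commutesOn (hD : ∀ n, D n * D (n + 1) = 0) (i : Fin c) :
    CommutesOn D Y fun n ↦ χ.op i (D n) (D (n + 1)) := fun n w ↦ by
  rw [← cochainMap_mul, ← cochainMap_mul, χ.comm i (hD n) (hD (n + 1))]

lemma comm_sub_mem_coboundaries (hD : ∀ n, D n * D (n + 1) = 0) (i j : Fin c) (n : ℕ)
    (u : ι n → Y) (hu : u ∈ cocycles D Y n) :
    cochainMap (χ.op i (D (n + 2)) (D (n + 3))) (cochainMap (χ.op j (D n) (D (n + 1))) u) -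
      cochainMap (χ.op j (D (n + 2)) (D (n + 3))) (cochainMap (χ.op i (D n) (D (n + 1))) u) ∈
        coboundaries D Y (n + 4) := by
  obtain ⟨k₀, k₁, hk⟩ := χ.exists_homotopy i (hD n) (hD (n + 2))
    (χ.comm j (hD n) (hD (n + 1))).symm (χ.comm j (hD (n + 1)) (hD (n + 2))).symm
  refine ⟨cochainMap k₀ u, ?_⟩
  rw [← cochainMap_mul, ← cochainMap_mul, ← cochainMap_mul, ← cochainMap_sub, hk, cochainMap_add,
    cochainMap_mul (D n), mem_cocycles.1 hu, map_zero, add_zero]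

/-- The action of the cohomology operators on the cohomology of `Hom(D, Y)`. -/
def action (hD : ∀ n, D n * D (n + 1) = 0) : DegreeTwoAction B c (Cohomology D Y) :=
  operatorAction (χ.commutesOn Y hD) (χ.comm_sub_mem_coboundaries Y hD)

/-- The cohomology operators generate the Ext-modules of finitely generated modules in high
degrees. -/
def GeneratesExt {B : Type u} [CommRing B] (χ : CohomologyOperators B c) : Prop :=
  ∀ (ι : ℕ → Type) [∀ n, Fintype (ι n)] (D : ∀ n, Matrix (ι n) (ι (n + 1)) B)
    (hD : ∀ n, D n * D (n + 1) = 0),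
    (∀ n (x : ι (n + 1) → B), (D n).mulVec x = 0 → ∃ y, x = (D (n + 1)).mulVec y) →
    ∀ (Y : Type u) [AddCommGroup Y] [Module B Y] [Module.Finite B Y],
      (χ.action Y hD).EventuallyGenerated

end Action

section LiftMatrix

variable {Q B : Type*} [CommRing Q] [CommRing B] {g : Q →+* B} (hg : Function.Surjective g)
variable {α β γ : Type*}

/-- An entrywise lift of a matrix along a surjective ring homomorphism. -/
noncomputable def liftMatrix (D : Matrix α β B) : Matrix α β Q := D.map (Function.surjInv hg)

lemma map_liftMatrix (D : Matrix α β B) : (liftMatrix hg D).map g = D := by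
  ext i j
  exact Function.surjInv_eq hg _

lemma sub_mem_ker_iff_map_eq {D E : Matrix α β Q} :
    (∀ i j, D i j - E i j ∈ RingHom.ker g) ↔ D.map g = E.map g := by
  simp only [RingHom.mem_ker, map_sub, sub_eq_zero]
  exact Matrix.ext_iff

lemma map_liftMatrix_mul [Fintype β] (D : Matrix α β B) (E : Matrix β γ B) :
    (liftMatrix hg D * liftMatrix hg E).map g = D * E := by
  rw [Matrix.map_mul, map_liftMatrix, map_liftMatrix]

lemma liftMatrix_mul_mem_ker [Fintype β] {D : Matrix α β B} {E : Matrix β γ B} (h : D * E = 0)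
    (i : α) (j : γ) : (liftMatrix hg D * liftMatrix hg E) i j ∈ RingHom.ker g := by
  rw [RingHom.mem_ker, ← Matrix.map_apply (f := g), map_liftMatrix_mul, h, Matrix.zero_apply]

lemma liftMatrix_mul_sub_mul_mem_ker {β' : Type*} [Fintype β] [Fintype β'] {D : Matrix α β B}
    {E : Matrix β γ B} {D' : Matrix α β' B} {E' : Matrix β' γ B} (h : D * E = D' * E') (i : α)
    (j : γ) : (liftMatrix hg D * liftMatrix hg E) i j - (liftMatrix hg D' * liftMatrix hg E') i j ∈
      RingHom.ker g :=
  sub_mem_ker_iff_map_eq.2 (by rw [map_liftMatrix_mul, map_liftMatrix_mul, h]) i j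

lemma map_liftMatrix_mulVec [Fintype β] (D : Matrix α β B) (x : β → Q) (i : α) :
    g ((liftMatrix hg D).mulVec x i) = D.mulVec (fun j ↦ g (x j)) i := by
  rw [RingHom.map_mulVec, map_liftMatrix]
  rfl

end LiftMatrix

section OfLifts

variable {Q B : Type u} [CommRing Q] [CommRing B] {g : Q →+* B} (hg : Function.Surjective g)
variable {c : ℕ} (φ : Fin c → RingHom.ker g →ₗ[Q] Q ⧸ RingHom.ker g)

open Classical in
/-- The value on `D` and `E` of the operator read off from `φ i`: lift `D` and `E` to `Q`, apply
`φ i` to the entries of their product, and reduce modulo the kernel of `g`. -/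
noncomputable def liftOp {α β γ : Type} [Fintype β] (i : Fin c) (D : Matrix α β B)
    (E : Matrix β γ B) : Matrix α γ B :=
  if h : D * E = 0 then
    (MatrixLifts.exists_of_mem (φ := φ i) (liftMatrix_mul_mem_ker hg h)).choose.map g
  else 0

variable {φ}

lemma exists_matrixLifts_map_eq_liftOp {α β γ : Type} [Fintype β] (i : Fin c) {D : Matrix α β B}
    {E : Matrix β γ B} (h : D * E = 0) :
    ∃ T, MatrixLifts (φ i) (liftMatrix hg D * liftMatrix hg E) T ∧ T.map g = liftOp hg φ i D E := by
  rw [liftOp, dif_pos h]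
  exact ⟨_, (MatrixLifts.exists_of_mem (liftMatrix_mul_mem_ker hg h)).choose_spec, rfl⟩

variable (φ) in
/-- The cohomology operators read off from `φ`. -/
noncomputable def ofLifts : CohomologyOperators B c where
  op := liftOp hg φ
  comm i D E F hDE hEF := by
    obtain ⟨S, hS, hSop⟩ := exists_matrixLifts_map_eq_liftOp hg (φ := φ) i hDE
    obtain ⟨T, hT, hTop⟩ := exists_matrixLifts_map_eq_liftOp hg (φ := φ) i hEF
    have hcomm := sub_mem_ker_iff_map_eq.1 (hS.mul_sub_mul_mem hT)
    rwa [Matrix.map_mul, Matrix.map_mul, map_liftMatrix, map_liftMatrix, hSop, hTop] at hcomm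
  exists_homotopy i F₀ F₁ G₀ G₁ p₀ p₁ p₂ hF hG h₀ h₁ := by
    obtain ⟨S, hS, hSop⟩ := exists_matrixLifts_map_eq_liftOp hg (φ := φ) i hF
    obtain ⟨T, hT, hTop⟩ := exists_matrixLifts_map_eq_liftOp hg (φ := φ) i hG
    obtain ⟨k₀, k₁, hk⟩ := MatrixLifts.exists_homotopy
      (liftMatrix_mul_sub_mul_mem_ker hg h₀) (liftMatrix_mul_sub_mul_mem_ker hg h₁) hS hT
    refine ⟨k₀.map g, k₁.map g, ?_⟩
    simpa only [Matrix.map_sub g (map_sub g), Matrix.map_add g (map_add g), Matrix.map_mul,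
      map_liftMatrix, hSop, hTop] using sub_mem_ker_iff_map_eq.1 hk

lemma cochainMap_map {α β Y : Type*} [Fintype α] [AddCommGroup Y] [Module Q Y] [Module B Y]
    (hsmul : ∀ (q : Q) (y : Y), q • y = g q • y) (E : Matrix α β Q) (u : α → Y) :
    cochainMap (E.map g) u = cochainMap E u := by
  ext j
  simp [cochainMap_apply, hsmul]

theorem generatesExt_ofLifts (hφ : ComplexityTest.GeneratesExt φ) :
    (ofLifts hg φ).GeneratesExt := by
  classical
  intro ι _ D hD hex Y _ _ _
  let : Module Q Y := Module.compHom Y g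
  have hsmul (q : Q) (y : Y) : q • y = g q • y := rfl
  let : Algebra Q B := g.toAlgebra
  have : IsScalarTower Q B Y := ⟨fun q b y ↦ by rw [hsmul, ← mul_smul]; rfl⟩
  have : Module.Finite Q B := Module.Finite.of_surjective (Algebra.linearMap Q B) hg
  have : Module.Finite Q Y := Module.Finite.trans B Y
  choose T hT hTop using fun i n ↦ exists_matrixLifts_map_eq_liftOp hg (φ := φ) i (hD n)
  have hcocycles (n : ℕ) (u : ι n → Y) :
      u ∈ cocycles (fun n ↦ liftMatrix hg (D n)) Y n ↔ u ∈ cocycles D Y n := by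
    rw [mem_cocycles, mem_cocycles, ← cochainMap_map hsmul, map_liftMatrix]
  have hexact : IsExactMod (RingHom.ker g) fun n ↦ liftMatrix hg (D n) := by
    intro n x hx
    obtain ⟨y, hy⟩ := hex n (fun j ↦ g (x j)) (by
      ext i
      rw [← map_liftMatrix_mulVec hg]
      exact hx i)
    refine ⟨fun j ↦ Function.surjInv hg (y j), fun i ↦ ?_⟩
    rw [RingHom.mem_ker, map_sub, map_liftMatrix_mulVec]
    simp only [Function.surjInv_eq hg]
    rw [← hy, sub_self]
  obtain ⟨n₀, hn₀⟩ := eventuallyGenerated_operatorAction_iff.1 <|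
    hφ ι _ (fun n ↦ liftMatrix_mul_mem_ker hg (hD n)) hexact T hT Y fun q hq y ↦ by
      rw [hsmul, RingHom.mem_ker.1 hq, zero_smul]
  refine eventuallyGenerated_operatorAction_iff.2 ⟨n₀, fun n hn u hu ↦ ?_⟩
  obtain ⟨v, w, hw⟩ := hn₀ n hn u ((hcocycles _ u).2 hu)
  refine ⟨fun i ↦ ⟨v i, (hcocycles n _).1 (v i).2⟩, w, ?_⟩
  simpa only [← cochainMap_map hsmul, map_liftMatrix, hTop, ofLifts] using hw

end OfLifts

end CohomologyOperators

/-! ### Comparison with the Ext groups of Mathlib -/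

section Resolution

variable {R : Type u} [CommRing R] {ι : ℕ → Type} [∀ n, Fintype (ι n)]
variable (D : ∀ n, Matrix (ι n) (ι (n + 1)) R) (hD : ∀ n, D n * D (n + 1) = 0)

/-- The chain complex of free modules with differentials given by matrices. -/
noncomputable def matrixChainComplex : ChainComplex (ModuleCat.{u} R) ℕ :=
  ChainComplex.of (fun n ↦ ModuleCat.of R (ι n → R)) (fun n ↦ ModuleCat.ofHom (D n).mulVecLin)
    fun n ↦ by
      rw [← ModuleCat.ofHom_comp, ← Matrix.mulVecLin_mul, hD]
      ext; simp

lemma matrixChainComplex_d (n : ℕ) :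
    (matrixChainComplex D hD).d (n + 1) n = ModuleCat.ofHom (D n).mulVecLin := by
  simp [matrixChainComplex, ChainComplex.of_d]

variable {D}

lemma matrixChainComplex_exactAt_succ
    (hex : ∀ n x, (D n).mulVec x = 0 → ∃ y, x = (D (n + 1)).mulVec y) (n : ℕ) :
    (matrixChainComplex D hD).ExactAt (n + 1) := by
  rw [HomologicalComplex.exactAt_iff' _ (n + 1 + 1) (n + 1) n (by simp) (by simp),
    ShortComplex.moduleCat_exact_iff]
  intro x hx
  simp only [HomologicalComplex.sc', HomologicalComplex.shortComplexFunctor',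
    matrixChainComplex_d] at hx ⊢
  obtain ⟨y, hy⟩ := hex n x hx
  exact ⟨y, hy.symm⟩

variable {X : Type u} [AddCommGroup X] [Module R X] {ε : (ι 0 → R) →ₗ[R] X}

lemma matrixChainComplex_d_comp_augmentation (hε : Function.Exact (D 0).mulVecLin ε) :
    (matrixChainComplex D hD).d 1 0 ≫
      (ModuleCat.ofHom ε : (matrixChainComplex D hD).X 0 ⟶ ModuleCat.of R X) = 0 := by
  rw [matrixChainComplex_d]
  ext x
  exact congrFun hε.comp_eq_zero x

/-- The augmentation of the complex given by matrices, as a map to a complex concentrated in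
degree zero. -/
noncomputable def matrixAugmentation (hε : Function.Exact (D 0).mulVecLin ε) :
    matrixChainComplex D hD ⟶ (ChainComplex.single₀ _).obj (ModuleCat.of R X) :=
  (ChainComplex.toSingle₀Equiv _ _).symm
    ⟨ModuleCat.ofHom ε, matrixChainComplex_d_comp_augmentation hD hε⟩

lemma quasiIsoAt_zero_matrixAugmentation (hε : Function.Exact (D 0).mulVecLin ε)
    (hsurj : Function.Surjective ε) : QuasiIsoAt (matrixAugmentation hD hε) 0 := by
  rw [ChainComplex.quasiIsoAt₀_iff, ShortComplex.quasiIso_iff_of_zeros']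
  · refine (ShortComplex.exact_and_epi_g_iff_of_iso
      (S₂ := ShortComplex.mk ((matrixChainComplex D hD).d 1 0)
        (ModuleCat.ofHom ε : (matrixChainComplex D hD).X 0 ⟶ ModuleCat.of R X)
        (matrixChainComplex_d_comp_augmentation hD hε)) ?_).2
      ⟨?_, (ModuleCat.epi_iff_surjective _).2 hsurj⟩
    · refine ShortComplex.isoMk (Iso.refl _) (Iso.refl _) (Iso.refl _)
        ((Category.id_comp _).trans (Category.comp_id _).symm)
        ((Category.id_comp _).trans (Eq.trans ?_ (Category.comp_id _).symm))
      exact (ChainComplex.toSingle₀Equiv_symm_apply_f_zero (C := matrixChainComplex D hD) _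
        (matrixChainComplex_d_comp_augmentation hD hε)).symm
    · rw [ShortComplex.moduleCat_exact_iff]
      intro x hx
      obtain ⟨y, hy⟩ := (hε x).1 hx
      refine ⟨y, ?_⟩
      simp only [matrixChainComplex_d]
      exact hy
  all_goals rfl

/-- The projective resolution given by an exact sequence of matrices and an augmentation. -/
noncomputable def matrixResolution
    (hex : ∀ n x, (D n).mulVec x = 0 → ∃ y, x = (D (n + 1)).mulVec y)
    (hε : Function.Exact (D 0).mulVecLin ε) (hsurj : Function.Surjective ε) :
    ProjectiveResolution (ModuleCat.of R X) where
  complex := matrixChainComplex D hD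
  projective n := by
    change Projective (ModuleCat.of R (ι n → R))
    rw [← IsProjective.iff_projective]
    infer_instance
  π := matrixAugmentation hD hε
  quasiIso := ⟨fun
    | 0 => quasiIsoAt_zero_matrixAugmentation hD hε hsurj
    | n + 1 => by
      rw [quasiIsoAt_iff_exactAt']
      · exact matrixChainComplex_exactAt_succ hD hex n
      · exact ChainComplex.exactAt_succ_single_obj _ _⟩

end Resolution

section Cochains

variable {R : Type u} [CommRing R] {ι : ℕ → Type} [∀ n, Fintype (ι n)]
variable {D : ∀ n, Matrix (ι n) (ι (n + 1)) R} (hD : ∀ n, D n * D (n + 1) = 0)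
variable {Y : Type u} [AddCommGroup Y] [Module R Y]

lemma piEquiv_cochainMap {α β : Type} [Fintype α] [Fintype β] (D : Matrix α β R) (u : α → Y) :
    Module.piEquiv β R Y (cochainMap D u) = Module.piEquiv α R Y u ∘ₗ D.mulVecLin := by
  ext1 x
  simp only [LinearMap.comp_apply, Module.piEquiv_apply_apply, cochainMap_apply,
    Matrix.mulVecLin_apply, Matrix.mulVec, dotProduct, Finset.smul_sum, Finset.sum_smul]
  rw [Finset.sum_comm]
  exact Finset.sum_congr rfl fun i _ ↦ Finset.sum_congr rfl fun j _ ↦ by rw [smul_smul, mul_comm]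

/-- Cochains of `Hom(D, Y)` as morphisms out of the terms of the complex given by `D`. -/
noncomputable def cochainHom (n : ℕ) :
    (ι n → Y) ≃+ ((matrixChainComplex D hD).X n ⟶ ModuleCat.of R Y) :=
  (Module.piEquiv (ι n) R Y).toAddEquiv.trans
    (ModuleCat.homAddEquiv (M := ModuleCat.of R (ι n → R)) (N := ModuleCat.of R Y)).symm

lemma d_comp_cochainHom (n : ℕ) (u : ι n → Y) :
    (matrixChainComplex D hD).d (n + 1) n ≫ cochainHom hD n u =
      cochainHom hD (n + 1) (cochainMap (D n) u) := by
  rw [matrixChainComplex_d]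
  exact (congrArg ModuleCat.ofHom (piEquiv_cochainMap (D n) u)).symm

lemma d_comp_cochainHom_eq_zero_iff {n : ℕ} {u : ι n → Y} :
    (matrixChainComplex D hD).d (n + 1) n ≫ cochainHom hD n u = 0 ↔ u ∈ cocycles D Y n := by
  rw [d_comp_cochainHom, map_eq_zero_iff _ (cochainHom hD (n + 1)).injective, mem_cocycles]

lemma exists_d_comp_eq_cochainHom_iff {n : ℕ} {u : ι (n + 1) → Y} :
    (∃ g, (matrixChainComplex D hD).d (n + 1) n ≫ g = cochainHom hD (n + 1) u) ↔
      u ∈ coboundaries D Y (n + 1) := by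
  simp only [(cochainHom hD n).surjective.exists, d_comp_cochainHom, EmbeddingLike.apply_eq_iff_eq,
    mem_coboundaries_succ]

end Cochains

section Ext

variable {R : Type u} [CommRing R] {ι : ℕ → Type} [∀ n, Fintype (ι n)]
variable {D : ∀ n, Matrix (ι n) (ι (n + 1)) R} (hD : ∀ n, D n * D (n + 1) = 0)
  (hex : ∀ n x, (D n).mulVec x = 0 → ∃ y, x = (D (n + 1)).mulVec y)
variable {X : Type u} [AddCommGroup X] [Module R X] {ε : (ι 0 → R) →ₗ[R] X}
  (hε : Function.Exact (D 0).mulVecLin ε) (hsurj : Function.Surjective ε)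
variable (Y : Type u) [AddCommGroup Y] [Module R Y]

include hD hex hε hsurj

theorem subsingleton_ext_succ_iff (n : ℕ) :
    Subsingleton (Abelian.Ext (ModuleCat.of R X) (ModuleCat.of R Y) (n + 1)) ↔
      cocycles D Y (n + 1) ≤ coboundaries D Y (n + 1) := by
  let P := matrixResolution hD hex hε hsurj
  constructor
  · intro h u hu
    refine (exists_d_comp_eq_cochainHom_iff hD).1 ?_
    exact (P.extMk_eq_zero_iff (cochainHom hD (n + 1) u) (n + 2) rfl
      ((d_comp_cochainHom_eq_zero_iff hD).2 hu) n rfl).1 (Subsingleton.elim _ _)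
  · refine fun h ↦ subsingleton_of_forall_eq 0 fun a ↦ ?_
    obtain ⟨f, hf, rfl⟩ := P.extMk_surjective a (n + 2) rfl
    obtain ⟨u, rfl⟩ := (cochainHom hD (n + 1)).surjective f
    exact (P.extMk_eq_zero_iff _ (n + 2) rfl hf n rfl).2
      ((exists_d_comp_eq_cochainHom_iff hD).2 (h ((d_comp_cochainHom_eq_zero_iff hD).1 hf)))

theorem cocycles_le_coboundaries_of_extVanish (n : ℕ) (h : extVanish R X n Y) :
    cocycles D Y n ≤ coboundaries D Y n := by
  let P := matrixResolution hD hex hε hsurj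
  have hzero := ((ModuleCat.isZero_iff_subsingleton (R := R)).2 h).of_iso
    (P.isoExt n (ModuleCat.of R Y)).symm
  rw [← HomologicalComplex.exactAt_iff_isZero_homology] at hzero
  intro u hu
  have hcocycle := (d_comp_cochainHom_eq_zero_iff hD).2 hu
  cases n with
  | zero =>
    rw [HomologicalComplex.exactAt_iff' _ 0 0 1 (by simp) (by simp),
      ShortComplex.moduleCat_exact_iff] at hzero
    obtain ⟨g, hg⟩ := hzero (cochainHom hD 0 u) hcocycle
    have hd : (P.complex.linearYonedaObj R (ModuleCat.of R Y)).d 0 0 = 0 :=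
      HomologicalComplex.shape _ _ _ (by simp)
    replace hg : ((P.complex.linearYonedaObj R (ModuleCat.of R Y)).d 0 0).hom g =
      cochainHom hD 0 u := hg
    rw [hd] at hg
    exact (map_eq_zero_iff _ (cochainHom hD 0).injective).1 hg.symm
  | succ n =>
    rw [HomologicalComplex.exactAt_iff' _ n (n + 1) (n + 2) (by simp) (by simp),
      ShortComplex.moduleCat_exact_iff] at hzero
    exact (exists_d_comp_eq_cochainHom_iff hD).1 (hzero (cochainHom hD (n + 1) u) hcocycle)

end Ext

/-! ### Finite injective dimension is tested by the residue field -/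

section ResidueFieldTest

open scoped Pointwise

variable {R : Type u} [CommRing R]

lemma subsingleton_ext_of_iso {X X' : ModuleCat.{u} R} (e : X ≅ X') (Y : ModuleCat.{u} R) (n : ℕ)
    [Subsingleton (Abelian.Ext X Y n)] : Subsingleton (Abelian.Ext X' Y n) := by
  refine subsingleton_of_forall_eq 0 fun a ↦ ?_
  have hcomp : (Abelian.Ext.mk₀ e.inv).comp ((Abelian.Ext.mk₀ e.hom).comp a (zero_add n))
      (zero_add n) = a := by simp
  rw [← hcomp, Subsingleton.elim ((Abelian.Ext.mk₀ e.hom).comp a (zero_add n)) 0,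
    Abelian.Ext.comp_zero]

lemma subsingleton_ext_of_exact {X₁ X₂ X₃ : Type u} [AddCommGroup X₁] [Module R X₁]
    [AddCommGroup X₂] [Module R X₂] [AddCommGroup X₃] [Module R X₃] {f : X₁ →ₗ[R] X₂}
    {g : X₂ →ₗ[R] X₃} (hf : Function.Injective f) (hg : Function.Surjective g)
    (hfg : Function.Exact f g) (Y : ModuleCat.{u} R) (n : ℕ)
    [Subsingleton (Abelian.Ext (ModuleCat.of R X₁) Y n)]
    [Subsingleton (Abelian.Ext (ModuleCat.of R X₃) Y n)] :
    Subsingleton (Abelian.Ext (ModuleCat.of R X₂) Y n) := by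
  let S := ShortComplex.mk (ModuleCat.ofHom f) (ModuleCat.ofHom g)
    (ModuleCat.hom_ext (LinearMap.ext fun x ↦ congrFun hfg.comp_eq_zero x))
  have hS : S.ShortExact :=
    { exact := (ShortComplex.moduleCat_exact_iff S).2 fun x hx ↦ (hfg x).1 hx
      mono_f := (ModuleCat.mono_iff_injective _).2 hf
      epi_g := (ModuleCat.epi_iff_surjective _).2 hg }
  refine subsingleton_of_forall_eq 0 fun a ↦ ?_
  obtain ⟨b, rfl⟩ := Abelian.Ext.contravariant_sequence_exact₂ hS Y a
    (Subsingleton.elim (α := Abelian.Ext (ModuleCat.of R X₁) Y n) _ _)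
  rw [Subsingleton.elim (α := Abelian.Ext (ModuleCat.of R X₃) Y n) b 0, Abelian.Ext.comp_zero]

lemma mk₀_smul_id_comp {X Y : ModuleCat.{u} R} {n : ℕ} (x : R) (b : Abelian.Ext X Y n) :
    (Abelian.Ext.mk₀ (x • 𝟙 X)).comp b (zero_add n) = x • b := by
  rw [Abelian.Ext.mk₀_smul, Abelian.Ext.smul_comp, Abelian.Ext.mk₀_id_comp]

lemma isSMulRegular_quotient_of_notMem {p : Ideal R} [hp : p.IsPrime] {x : R} (hx : x ∉ p) :
    IsSMulRegular (R ⧸ p) x :=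
  (isSMulRegular_quotient_iff_mem_of_smul_mem p x).2 fun _ hy ↦
    (hp.mem_or_mem hy).resolve_left hx

variable [IsLocalRing R] [IsNoetherianRing R]
variable (Y : ModuleCat.{u} R) [Module.Finite R Y]

lemma subsingleton_ext_of_isSMulRegular (X : ModuleCat.{u} R) [Module.Finite R X] {x : R}
    (hx : x ∈ maximalIdeal R) (hreg : IsSMulRegular X x) (n : ℕ)
    [Subsingleton (Abelian.Ext (ModuleCat.of R (QuotSMulTop x X)) Y (n + 1))] :
    Subsingleton (Abelian.Ext X Y n) := by
  have hsurj : ∀ a : Abelian.Ext X Y n, ∃ b, x • b = a := fun a ↦ by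
    obtain ⟨b, hb⟩ := Abelian.Ext.contravariant_sequence_exact₁ hreg.smulShortComplex_shortExact Y
      a (n₁ := n + 1) (add_comm 1 n)
      (Subsingleton.elim (α := Abelian.Ext (ModuleCat.of R (QuotSMulTop x X)) Y (n + 1)) _ _)
    refine ⟨b, ?_⟩
    rw [← hb, ModuleCat.smulShortComplex_f_eq_smul_id]
    exact (mk₀_smul_id_comp x b).symm
  by_contra hnontrivial
  rw [not_subsingleton_iff_nontrivial] at hnontrivial
  have hjac : x ∈ (Module.annihilator R (Abelian.Ext X Y n)).jacobson :=
    maximalIdeal_le_jacobson _ hx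
  refine Submodule.top_ne_pointwise_smul_of_mem_jacobson_annihilator hjac
    (top_le_iff.1 fun a _ ↦ ?_).symm
  obtain ⟨b, rfl⟩ := hsurj a
  exact Submodule.smul_mem_pointwise_smul _ _ ⊤ trivial

/-- Noetherian induction on an ideal annihilating `X`, over a prime filtration of `X`. -/
theorem subsingleton_ext_of_residueField (d : ℕ)
    (h : ∀ n > d, Subsingleton (Abelian.Ext (ModuleCat.of R (ResidueField R)) Y n))
    (X : ModuleCat.{u} R) [hX : Module.Finite R X] (n : ℕ) (hn : d < n) :
    Subsingleton (Abelian.Ext X Y n) := by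
  suffices H : ∀ (I : Ideal R) (X : Type u) [AddCommGroup X] [Module R X] [Module.Finite R X],
      I ≤ Module.annihilator R X → ∀ n > d, Subsingleton (Abelian.Ext (ModuleCat.of R X) Y n) from
    H ⊥ X bot_le n hn
  clear! X n
  intro I
  induction I using IsNoetherian.induction with
  | hgt I ih =>
  intro X _ _ hX hI
  refine IsNoetherianRing.induction_on_isQuotientEquivQuotientPrime R hX
    (motive := fun X _ _ _ ↦ I ≤ Module.annihilator R X →
      ∀ n > d, Subsingleton (Abelian.Ext (ModuleCat.of R X) Y n)) ?_ ?_ ?_ hI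
  · intro X _ _ _ _ _ n _
    have := (ModuleCat.isZero_of_subsingleton (ModuleCat.of R X)).hasProjectiveDimensionLT_zero
    exact HasProjectiveDimensionLT.subsingleton _ 0 n n.zero_le Y
  · intro X _ _ _ p e hIX n hn
    have hann : Module.annihilator R X = p.1 := by
      rw [e.annihilator_eq, Ideal.annihilator_quotient]
    by_cases hp : p.1 = maximalIdeal R
    · have := h n hn
      have e' : X ≃ₗ[R] ResidueField R := e.trans (Submodule.quotEquivOfEq _ _ hp)
      exact subsingleton_ext_of_iso e'.symm.toModuleIso Y n
    · obtain ⟨x, hxm, hxp⟩ := SetLike.exists_of_lt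
        ((le_maximalIdeal p.2.ne_top).lt_of_ne hp)
      have hreg : IsSMulRegular X x :=
        (e.isSMulRegular_congr x).2 (isSMulRegular_quotient_of_notMem (hp := p.2) hxp)
      have hlt : I < p.1 ⊔ Ideal.span {x} := (hann ▸ hIX).trans_lt
        (left_lt_sup.2 fun hle ↦ hxp (hle (Ideal.mem_span_singleton_self x)))
      have := ih _ hlt (QuotSMulTop x X) (sup_le
        (hann ▸ LinearMap.annihilator_le_of_surjective _ (Submodule.mkQ_surjective _))
        ((Ideal.span_singleton_le_iff_mem _).2 (QuotSMulTop.mem_annihilator X x))) (n + 1) (by lia)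
      exact subsingleton_ext_of_isSMulRegular Y (ModuleCat.of R X) hxm hreg n
  · intro X₁ _ _ _ X₂ _ _ _ X₃ _ _ _ f g hf hg hfg h₁ h₃ hI n hn
    have := h₁ (hI.trans (f.annihilator_le_of_injective hf)) n hn
    have := h₃ (hI.trans (g.annihilator_le_of_surjective hg)) n hn
    exact subsingleton_ext_of_exact hf hg hfg Y n

end ResidueFieldTest

/-! ### Regular local rings and complete intersections -/

section RegularLocal

open scoped Pointwise

variable {Q : Type u} [CommRing Q]

lemma exists_isWeaklyRegular_ofList_eq_comap {y : Q} (hy : IsSMulRegular Q y)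
    {rs : List (Q ⧸ Ideal.span {y})}
    (hrs : RingTheory.Sequence.IsWeaklyRegular (Q ⧸ Ideal.span {y}) rs) :
    ∃ rs' : List Q, RingTheory.Sequence.IsWeaklyRegular Q rs' ∧
      Ideal.ofList rs' = (Ideal.ofList rs).comap (Ideal.Quotient.mk (Ideal.span {y})) := by
  obtain ⟨rs, rfl⟩ := List.map_surjective_iff.2 Ideal.Quotient.mk_surjective rs
  refine ⟨y :: rs, ?_, ?_⟩
  · have hspan : y • (⊤ : Submodule Q Q) = Ideal.span {y} := by
      rw [← Submodule.ideal_span_singleton_smul, smul_eq_mul, Ideal.mul_top]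
    rw [RingTheory.Sequence.isWeaklyRegular_cons_iff]
    refine ⟨hy, ((Submodule.quotEquivOfEq _ _ hspan).isWeaklyRegular_congr rs).2 ?_⟩
    rwa [← RingTheory.Sequence.isWeaklyRegular_map_algebraMap_iff (Q ⧸ Ideal.span {y})]
  · rw [← Ideal.map_ofList, Ideal.comap_map_of_surjective _ Ideal.Quotient.mk_surjective,
      ← RingHom.ker_eq_comap_bot, Ideal.mk_ker, Ideal.ofList_cons, sup_comm]

variable [IsLocalRing Q]

lemma exists_mem_span_insert_erase_eq_maximalIdeal [DecidableEq Q] {s : Finset Q}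
    (hs : Ideal.span (s : Set Q) = maximalIdeal Q) {y : Q} (hy : y ∈ maximalIdeal Q)
    (hsq : y ∉ maximalIdeal Q ^ 2) :
    ∃ x ∈ s, Ideal.span {y} ⊔ Ideal.span (s.erase x : Set Q) = maximalIdeal Q := by
  have hsm : ∀ x ∈ s, x ∈ maximalIdeal Q := fun x hx ↦ hs ▸ Ideal.subset_span hx
  obtain ⟨a, ha⟩ : ∃ a : Q → Q, ∑ x ∈ s, a x * x = y := by
    rw [← hs] at hy
    obtain ⟨a, -, ha⟩ := Submodule.mem_span_finset.1 hy
    exact ⟨a, ha⟩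
  obtain ⟨x, hx, hunit⟩ : ∃ x ∈ s, IsUnit (a x) := by
    by_contra! hnonunit
    refine hsq (ha ▸ ?_)
    rw [pow_two]
    exact Ideal.sum_mem _ fun x hx ↦
      Ideal.mul_mem_mul ((mem_maximalIdeal _).2 (hnonunit x hx)) (hsm x hx)
  have hle : Ideal.span (s.erase x : Set Q) ≤ maximalIdeal Q :=
    hs ▸ Ideal.span_mono (Finset.erase_subset x s)
  refine ⟨x, hx, le_antisymm (sup_le ((Ideal.span_singleton_le_iff_mem _).2 hy) hle) ?_⟩
  rw [← hs, Ideal.span_le]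
  intro z hz
  by_cases hzx : z = x
  · subst z
    have hsplit : a x * x = y - ∑ z ∈ s.erase x, a z * z := by
      rw [← ha, ← Finset.add_sum_erase s _ hx, add_sub_cancel_right]
    refine (Ideal.unit_mul_mem_iff_mem _ hunit).1 (hsplit ▸ Ideal.sub_mem _
      (Ideal.mem_sup_left (Ideal.mem_span_singleton_self y)) (Ideal.mem_sup_right ?_))
    exact Ideal.sum_mem _ fun z hz ↦ Ideal.mul_mem_left _ _ (Ideal.subset_span hz)
  · exact Ideal.mem_sup_right (Ideal.subset_span (Finset.mem_erase.2 ⟨hzx, hz⟩))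

variable [IsNoetherianRing Q]

lemma eq_bot_of_le_maximalIdeal_mul {I : Ideal Q} (h : I ≤ maximalIdeal Q * I) : I = ⊥ :=
  Submodule.eq_bot_of_le_smul_of_le_jacobson_bot (maximalIdeal Q) I (IsNoetherian.noetherian I) h
    (IsLocalRing.jacobson_eq_maximalIdeal ⊥ bot_ne_top).ge

lemma exists_mem_maximalIdeal_notMem_sq_notMem_minimalPrimes (hdim : 0 < ringKrullDim Q) :
    ∃ y ∈ maximalIdeal Q, y ∉ maximalIdeal Q ^ 2 ∧ ∀ p ∈ minimalPrimes Q, y ∉ p := by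
  classical
  have hmin : ∀ p ∈ minimalPrimes Q, ¬ maximalIdeal Q ≤ p := by
    intro p hp hle
    have hheight : (maximalIdeal Q).height = 0 :=
      Ideal.height_eq_zero_iff.2 (le_antisymm hle (le_maximalIdeal hp.1.1.ne_top) ▸ hp)
    rw [← maximalIdeal_height_eq_ringKrullDim, hheight] at hdim
    exact hdim.ne rfl
  have hsq : ¬ maximalIdeal Q ≤ maximalIdeal Q ^ 2 := by
    intro hle
    obtain ⟨p, hp, -⟩ := Ideal.exists_minimalPrimes_le (bot_le : ⊥ ≤ maximalIdeal Q)
    exact hmin p hp (eq_bot_of_le_maximalIdeal_mul (pow_two (maximalIdeal Q) ▸ hle) ▸ bot_le)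
  by_contra! hcover
  let s := insert (maximalIdeal Q ^ 2) (minimalPrimes.finite_of_isNoetherianRing Q).toFinset
  have hprime : ∀ p ∈ s, p ≠ maximalIdeal Q ^ 2 → p ≠ maximalIdeal Q ^ 2 → p.IsPrime := by
    intro p hp hne _
    exact ((Set.Finite.mem_toFinset _).1 ((Finset.mem_insert.1 hp).resolve_left hne)).1.1
  obtain ⟨p, hp, hle⟩ := (Ideal.subset_union_prime (s := s) (f := fun p ↦ p) _ _ hprime).1
    fun y hy ↦ Set.mem_iUnion₂.2 <| by
      by_cases hysq : y ∈ maximalIdeal Q ^ 2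
      · exact ⟨_, Finset.mem_insert_self _ _, hysq⟩
      · obtain ⟨p, hp, hyp⟩ := hcover y hy hysq
        exact ⟨p, Finset.mem_insert_of_mem ((Set.Finite.mem_toFinset _).2 hp), hyp⟩
  rcases Finset.mem_insert.1 hp with rfl | hp
  · exact hsq hle
  · exact hmin p ((Set.Finite.mem_toFinset _).1 hp) hle

lemma isDomain_of_isPrime_span_singleton {y : Q} (hy : y ∈ maximalIdeal Q)
    (hmin : ∀ p ∈ minimalPrimes Q, y ∉ p) (hprime : (Ideal.span {y}).IsPrime) : IsDomain Q := by
  obtain ⟨p, hp, hle⟩ := Ideal.exists_minimalPrimes_le (bot_le : ⊥ ≤ Ideal.span {y})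
  have := hp.1.1
  have hbot : p = ⊥ := by
    refine eq_bot_of_le_maximalIdeal_mul fun b hb ↦ ?_
    obtain ⟨c, rfl⟩ := Ideal.mem_span_singleton.1 (hle hb)
    exact Ideal.mul_mem_mul hy ((this.mem_or_mem hb).resolve_left (hmin p hp))
  exact (IsDomain.of_bot_isPrime Q (hbp := hbot ▸ this))

lemma natCast_le_ringKrullDim_quotient_span_singleton {y : Q} (hy : y ∈ maximalIdeal Q) {n : ℕ}
    (hn : ((n + 1 : ℕ) : WithBot ℕ∞) ≤ ringKrullDim Q) :
    (n : WithBot ℕ∞) ≤ ringKrullDim (Q ⧸ Ideal.span {y}) := by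
  have hle := ringKrullDim_le_ringKrullDim_quotient_add_card ({y} : Finset Q)
    (by rw [ringJacobson_eq_maximalIdeal]; simpa using hy)
  rw [Finset.coe_singleton, Finset.card_singleton] at hle
  exact ENat.WithBot.add_le_add_natCast_right_iff.1 (hn.trans hle)

lemma isDomain_and_exists_isWeaklyRegular (n : ℕ) :
    ∀ (Q : Type u) [CommRing Q] [IsLocalRing Q] [IsNoetherianRing Q] (s : Finset Q),
      s.card ≤ n → Ideal.span (s : Set Q) = maximalIdeal Q → (n : WithBot ℕ∞) ≤ ringKrullDim Q →
      IsDomain Q ∧ ∃ rs : List Q, RingTheory.Sequence.IsWeaklyRegular Q rs ∧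
        Ideal.ofList rs = maximalIdeal Q := by
  classical
  induction n with
  | zero =>
    intro Q _ _ _ s hs hspan _
    obtain rfl : s = ∅ := Finset.card_eq_zero.1 (Nat.le_zero.1 hs)
    have hbot : maximalIdeal Q = ⊥ := by rw [← hspan, Finset.coe_empty, Ideal.span_empty]
    exact ⟨(isField_iff_maximalIdeal_eq.2 hbot).isDomain, [], .nil _ _, by rw [hbot]; simp⟩
  | succ n ih =>
    intro Q _ _ _ s hs hspan hdim
    obtain ⟨y, hy, hysq, hymin⟩ := exists_mem_maximalIdeal_notMem_sq_notMem_minimalPrimes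
      ((Nat.cast_pos.2 n.succ_pos).trans_le hdim)
    obtain ⟨x, hx, hxs⟩ := exists_mem_span_insert_erase_eq_maximalIdeal hspan hy hysq
    let mk := Ideal.Quotient.mk (Ideal.span {y})
    have hmk : Function.Surjective mk := Ideal.Quotient.mk_surjective
    have : Nontrivial (Q ⧸ Ideal.span {y}) := Ideal.Quotient.nontrivial_iff.2
      (ne_top_of_le_ne_top (maximalIdeal.isMaximal Q).ne_top
        ((Ideal.span_singleton_le_iff_mem _).2 hy))
    have : IsLocalRing (Q ⧸ Ideal.span {y}) := .of_surjective' mk hmk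
    have hgen : Ideal.span (((s.erase x).image mk : Finset _) : Set _) =
        maximalIdeal (Q ⧸ Ideal.span {y}) := by
      rw [← map_maximalIdeal_of_surjective mk hmk, ← hxs, Ideal.map_sup, Ideal.map_quotient_self,
        bot_sup_eq, Ideal.map_span, Finset.coe_image]
    obtain ⟨hdom, rs, hrs, hofList⟩ := ih (Q ⧸ Ideal.span {y}) _ (Finset.card_image_le.trans
      (Finset.card_erase_of_mem hx ▸ by lia)) hgen
      (natCast_le_ringKrullDim_quotient_span_singleton hy hdim)
    have := isDomain_of_isPrime_span_singleton hy hymin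
      ((Ideal.Quotient.isDomain_iff_prime _).1 hdom)
    have hy0 : y ≠ 0 := fun h ↦ hysq (h ▸ zero_mem _)
    obtain ⟨rs', hrs', hofList'⟩ := exists_isWeaklyRegular_ofList_eq_comap
      (IsSMulRegular.of_ne_zero hy0) hrs
    refine ⟨this, rs', hrs', ?_⟩
    rw [hofList', hofList]
    exact eq_maximalIdeal (Ideal.comap_isMaximal_of_surjective mk hmk)

end RegularLocal

theorem IsRegularLocalRing.exists_isRegular_ofList_eq_maximalIdeal {Q : Type u} [CommRing Q]
    [IsLocalRing Q] (hQ : IsRegularLocalRing Q) :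
    ∃ rs : List Q, RingTheory.Sequence.IsRegular Q rs ∧ Ideal.ofList rs = maximalIdeal Q := by
  classical
  obtain ⟨_, n, x, hx, hn⟩ := hQ
  obtain ⟨-, rs, hrs, hmax⟩ := isDomain_and_exists_isWeaklyRegular n Q (Finset.univ.image x)
    (Finset.card_image_le.trans (by simp)) (by simpa using hx) hn.le
  exact ⟨rs, RingTheory.Sequence.IsRegular.of_isWeaklyRegular_of_mem_maximalIdeal Q
    (fun r hr ↦ hmax ▸ Ideal.subset_span hr) hrs, hmax⟩

theorem IsRegularLocalRing.exists_subsingleton_ext_residueField {Q : Type u} [CommRing Q]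
    [IsLocalRing Q] (hQ : IsRegularLocalRing Q) :
    ∃ d : ℕ, ∀ (Y : ModuleCat.{u} Q) (n : ℕ), d < n →
      Subsingleton (Abelian.Ext (ModuleCat.of Q (ResidueField Q)) Y n) := by
  have := hQ.1
  obtain ⟨rs, hrs, hmax⟩ := hQ.exists_isRegular_ofList_eq_maximalIdeal
  let e : (Q ⧸ Ideal.ofList rs) ≃ₗ[Q] ResidueField Q := Submodule.quotEquivOfEq _ _ hmax
  have hdim : projectiveDimension (ModuleCat.of Q (ResidueField Q)) = rs.length := by
    rw [← ModuleCat.projectiveDimension_quotient_eq_length.{u} rs hrs]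
    exact projectiveDimension_eq_of_iso (((Shrink.linearEquiv Q _).trans e).symm).toModuleIso
  have hle : HasProjectiveDimensionLE (ModuleCat.of Q (ResidueField Q)) rs.length :=
    (projectiveDimension_le_iff _ _).1 hdim.le
  exact ⟨rs.length, fun Y n hn ↦ HasProjectiveDimensionLT.subsingleton _ (rs.length + 1) n hn Y⟩

lemma cocycles_le_coboundaries_of_subsingleton_ext {R : Type u} [CommRing R] {ι : ℕ → Type}
    [∀ n, Fintype (ι n)] {D : ∀ n, Matrix (ι n) (ι (n + 1)) R} (hD : ∀ n, D n * D (n + 1) = 0)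
    (hex : ∀ n x, (D n).mulVec x = 0 → ∃ y, x = (D (n + 1)).mulVec y)
    (Y : Type u) [AddCommGroup Y] [Module R Y] (n : ℕ)
    (h : Subsingleton (Abelian.Ext
      (ModuleCat.of R ((ι 0 → R) ⧸ LinearMap.range (D 0).mulVecLin)) (ModuleCat.of R Y) (n + 1))) :
    cocycles D Y (n + 1) ≤ coboundaries D Y (n + 1) :=
  (subsingleton_ext_succ_iff hD hex (LinearMap.exact_map_mkQ_range _) (Submodule.mkQ_surjective _)
    Y n).1 h

theorem generatesExt_bot_of_isRegularLocalRing {Q : Type u} [CommRing Q] [IsLocalRing Q]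
    (hQ : IsRegularLocalRing Q) (φ : Fin 0 → (⊥ : Ideal Q) →ₗ[Q] Q ⧸ (⊥ : Ideal Q)) :
    GeneratesExt φ := by
  have := hQ.1
  obtain ⟨d, hd⟩ := hQ.exists_subsingleton_ext_residueField
  intro ι _ _ D hD hex t ht Y _ _ _ hY
  have hD' (n : ℕ) : D n * D (n + 1) = 0 := Matrix.ext fun i j ↦ by simpa using hD n i j
  have hex' (n : ℕ) (x : ι (n + 1) → Q) (hx : (D n).mulVec x = 0) :
      ∃ y, x = (D (n + 1)).mulVec y := by
    obtain ⟨y, hy⟩ := hex n x (by simp [hx])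
    exact ⟨y, funext fun i ↦ sub_eq_zero.1 (by simpa using hy i)⟩
  refine eventuallyGenerated_operatorAction_iff.2 ⟨d + 1, fun n hn u hu ↦ ⟨0, ?_⟩⟩
  have hle := cocycles_le_coboundaries_of_subsingleton_ext hD' hex' Y (n + 1)
    (subsingleton_ext_of_residueField (ModuleCat.of Q Y) d (fun n hn ↦ hd _ n hn) _ _ (by lia))
  simpa using hle hu

theorem IsCompleteIntersection.exists_generatesExt {A : Type u} [CommRing A] [IsLocalRing A]
    (hA : IsCompleteIntersection A) :
    ∃ (c : ℕ) (χ : CohomologyOperators (Completion A) c), χ.GeneratesExt := by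
  obtain ⟨Q, _, _, hQ, g, hg, rs, hrs, hker⟩ := hA
  have := hQ.1
  have hgen := exists_generatesExt_of_isWeaklyRegular
    (generatesExt_bot_of_isRegularLocalRing hQ) rs hrs.toIsWeaklyRegular
  rw [show Ideal.ofList rs = RingHom.ker g from hker.symm] at hgen
  obtain ⟨c, φ, hφ⟩ := hgen
  exact ⟨c, _, CohomologyOperators.generatesExt_ofLifts hg hφ⟩

/-! ### Complexes of free modules given by matrices -/

section Sequences

lemma exists_seq_of_rel_zero {T : ℕ → Type*} (r : ∀ j, T j → T (j + 1) → Prop)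
    (hup : ∀ j a b, r j a b → ∃ c, r (j + 1) b c) {a : T 0} {b : T 1} (h : r 0 a b) :
    ∃ v : ∀ j, T j, v 0 = a ∧ v 1 = b ∧ ∀ j, r j (v j) (v (j + 1)) := by
  choose next hnext using hup
  let g : ∀ j, {p : T j × T (j + 1) // r j p.1 p.2} := fun j ↦
    Nat.rec ⟨(a, b), h⟩ (fun j p ↦ ⟨(p.1.2, next j p.1.1 p.1.2 p.2), hnext _ _ _ _⟩) j
  exact ⟨fun j ↦ (g j).1.1, rfl, rfl, fun j ↦ (g j).2⟩

lemma exists_seq_of_rel (δ : ℕ) {T : ℕ → Type*} (r : ∀ j, T j → T (j + 1) → Prop)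
    (hup : ∀ j a b, r j a b → ∃ c, r (j + 1) b c)
    (hdown : ∀ j < δ, ∀ a b, r (j + 1) a b → ∃ c, r j c a)
    {a : T δ} {b : T (δ + 1)} (h : r δ a b) :
    ∃ v : ∀ j, T j, v δ = a ∧ v (δ + 1) = b ∧ ∀ j, r j (v j) (v (j + 1)) := by
  induction δ generalizing T with
  | zero => exact exists_seq_of_rel_zero r hup h
  | succ δ ih =>
    obtain ⟨v, ha, hb, hv⟩ := ih (T := fun j ↦ T (j + 1)) (fun j ↦ r (j + 1))
      (fun j ↦ hup (j + 1)) (fun j hj ↦ hdown (j + 1) (by lia)) h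
    obtain ⟨c, hc⟩ := hdown 0 (by lia) _ _ (hv 0)
    exact ⟨fun j ↦ Nat.casesOn j c v, ha, hb, fun j ↦ Nat.casesOn j hc hv⟩

end Sequences

section MatrixCokernel

variable {R : Type u} [CommRing R] {α β γ σ : Type} [Fintype β]

/-- The cokernel of a matrix acting on column vectors. -/
abbrev MatrixCokernel (M : Matrix α β R) : Type u := (α → R) ⧸ LinearMap.range M.mulVecLin

section Generators

variable [DecidableEq α]

/-- The classes of the standard basis vectors in the cokernel of a matrix. -/
def cokernelGenerators (M : Matrix α β R) : α → MatrixCokernel M :=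
  fun i ↦ Submodule.Quotient.mk (Pi.single i 1)

variable [Fintype α]

lemma cochainMap_cokernelGenerators_apply (M : Matrix α β R) (U : Matrix α σ R) (j : σ) :
    cochainMap U (cokernelGenerators M) j = Submodule.Quotient.mk fun i ↦ U i j := by
  simp only [cochainMap_apply, cokernelGenerators, ← Submodule.mkQ_apply, ← map_smul, ← map_sum]
  congr 1
  ext i
  simp [Finset.sum_apply, Pi.single_apply]

lemma exists_cochainMap_cokernelGenerators_eq (M : Matrix α β R) (u : σ → MatrixCokernel M) :
    ∃ U : Matrix α σ R, cochainMap U (cokernelGenerators M) = u := by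
  choose U hU using fun j ↦ Submodule.Quotient.mk_surjective _ (u j)
  exact ⟨Matrix.of fun i j ↦ U j i, funext fun j ↦
    (cochainMap_cokernelGenerators_apply M (Matrix.of fun i j ↦ U j i) j).trans (hU j)⟩

lemma cochainMap_cokernelGenerators_eq_zero_iff {M : Matrix α β R} {U : Matrix α σ R} :
    cochainMap U (cokernelGenerators M) = 0 ↔ ∃ V : Matrix β σ R, U = M * V := by
  constructor
  · intro h
    have hcol (j : σ) : ∃ y, M.mulVecLin y = fun i ↦ U i j :=
      (Submodule.Quotient.mk_eq_zero _).1
        ((cochainMap_cokernelGenerators_apply M U j).symm.trans (congrFun h j))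
    choose V hV using hcol
    exact ⟨fun i j ↦ V j i, Matrix.ext fun i j ↦ (congrFun (hV j) i).symm⟩
  · rintro ⟨V, rfl⟩
    funext j
    rw [cochainMap_cokernelGenerators_apply]
    exact (Submodule.Quotient.mk_eq_zero _).2 ⟨fun i ↦ V i j, rfl⟩

lemma cochainMap_cokernelGenerators_eq_iff {M : Matrix α β R} {U V : Matrix α σ R} :
    cochainMap U (cokernelGenerators M) = cochainMap V (cokernelGenerators M) ↔
      ∃ W : Matrix β σ R, U - V = M * W := by
  rw [← sub_eq_zero, ← cochainMap_sub, cochainMap_cokernelGenerators_eq_zero_iff]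

lemma cochainMap_self_cokernelGenerators (M : Matrix α β R) :
    cochainMap M (cokernelGenerators M) = 0 := by
  classical exact cochainMap_cokernelGenerators_eq_zero_iff.2 ⟨1, (Matrix.mul_one M).symm⟩

end Generators

section CokernelMap

variable [Fintype α] {α' β' : Type} [Fintype β'] {M : Matrix α β R} {M' : Matrix α' β' R}

/-- The linear map between cokernels induced by a commutative square of matrices. -/
def cokernelMap (φ : Matrix α' α R) (ψ : Matrix β' β R) (h : φ * M = M' * ψ) :
    MatrixCokernel M →ₗ[R] MatrixCokernel M' :=
  Submodule.mapQ _ _ φ.mulVecLin <| by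
    rintro _ ⟨y, rfl⟩
    exact ⟨ψ.mulVec y, by simp only [Matrix.mulVecLin_apply, Matrix.mulVec_mulVec, h]⟩

variable [DecidableEq α] [Fintype α'] [DecidableEq α']

lemma cokernelMap_cochainMap (φ : Matrix α' α R) (ψ : Matrix β' β R) (h : φ * M = M' * ψ)
    (U : Matrix α σ R) :
    (fun j ↦ cokernelMap φ ψ h (cochainMap U (cokernelGenerators M) j)) =
      cochainMap (φ * U) (cokernelGenerators M') := by
  funext j
  rw [cochainMap_cokernelGenerators_apply, cochainMap_cokernelGenerators_apply]
  rfl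

end CokernelMap

lemma exists_eq_mul_of_mul_eq_zero [Fintype γ] {D : Matrix α β R} {E : Matrix β γ R}
    (hex : ∀ x, D.mulVec x = 0 → ∃ y, x = E.mulVec y) {W : Matrix β σ R} (h : D * W = 0) :
    ∃ V : Matrix γ σ R, W = E * V := by
  have hcol (j : σ) : ∃ y, (fun i ↦ W i j) = E.mulVec y :=
    hex _ (funext fun i ↦ congrFun (congrFun h i) j)
  choose V hV using hcol
  exact ⟨fun i j ↦ V j i, Matrix.ext fun i j ↦ congrFun (hV j) i⟩

end MatrixCokernel

/-- A complex of finitely generated free modules in nonnegative degrees, with a chosen basis of each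
term, so that the differentials are matrices. -/
structure MatrixComplex (R : Type u) [CommRing R] where
  ι : ℕ → Type
  [fintype : ∀ n, Fintype (ι n)]
  [decidableEq : ∀ n, DecidableEq (ι n)]
  D : ∀ n, Matrix (ι n) (ι (n + 1)) R
  D_mul_D : ∀ n, D n * D (n + 1) = 0

attribute [instance] MatrixComplex.fintype MatrixComplex.decidableEq

namespace MatrixComplex

section Basic

variable {R : Type u} [CommRing R] (F E : MatrixComplex R)

/-- A complex is acyclic if it is exact in positive degrees. -/
def IsAcyclic : Prop :=
  ∀ n (x : F.ι (n + 1) → R), (F.D n).mulVec x = 0 → ∃ y, x = (F.D (n + 1)).mulVec y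

/-- The complex without its term in degree `0`. -/
def tail : MatrixComplex R where
  ι n := F.ι (n + 1)
  D n := F.D (n + 1)
  D_mul_D n := F.D_mul_D (n + 1)

/-- The complex without its first `m` terms. -/
def shift (m : ℕ) : MatrixComplex R where
  ι n := F.ι (m + n)
  D n := F.D (m + n)
  D_mul_D n := F.D_mul_D (m + n)

/-- `v` is a chain map from `E` to `F`; it pulls back cochains on `F` to cochains on `E`. -/
def IsChainMap (v : ∀ j, Matrix (F.ι j) (E.ι j) R) : Prop :=
  ∀ j, F.D j * v (j + 1) = v j * E.D j

/-- The module resolved by an acyclic complex. -/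
abbrev coker : Type u := MatrixCokernel (F.D 0)

/-- The standard generators of the module resolved by a complex. -/
abbrev generators : F.ι 0 → F.coker := cokernelGenerators (F.D 0)

variable {F E}

lemma IsAcyclic.tail (h : F.IsAcyclic) : F.tail.IsAcyclic := fun n ↦ h (n + 1)

lemma IsAcyclic.shift (h : F.IsAcyclic) (m : ℕ) : (F.shift m).IsAcyclic := fun n ↦ h (m + n)

lemma generators_mem_cocycles (F : MatrixComplex R) : F.generators ∈ cocycles F.D F.coker 0 :=
  cochainMap_self_cokernelGenerators _

theorem IsAcyclic.exists_isChainMap (hF : F.IsAcyclic) (v₀ : Matrix (F.ι 0) (E.ι 0) R)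
    (h : cochainMap (E.D 0) (cochainMap v₀ F.generators) = 0) :
    ∃ v, IsChainMap F E v ∧ v 0 = v₀ := by
  rw [← cochainMap_mul, cochainMap_cokernelGenerators_eq_zero_iff] at h
  obtain ⟨v₁, hv₁⟩ := h
  obtain ⟨v, h0, -, hv⟩ := exists_seq_of_rel_zero (T := fun j ↦ Matrix (F.ι j) (E.ι j) R)
    (fun j a b ↦ F.D j * b = a * E.D j) (fun j a b hab ↦ by
      obtain ⟨c, hc⟩ := exists_eq_mul_of_mul_eq_zero (hF j) (W := b * E.D (j + 1)) (by
        rw [← Matrix.mul_assoc, hab, Matrix.mul_assoc, E.D_mul_D, Matrix.mul_zero])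
      exact ⟨c, hc.symm⟩) hv₁.symm
  exact ⟨v, hv, h0⟩

theorem IsChainMap.exists_homotopy_of_coboundary (hF : F.IsAcyclic)
    {v : ∀ j, Matrix (F.ι j) (E.ι (j + 1)) R} (hv : IsChainMap F E.tail v) (w : E.ι 0 → F.coker)
    (h : cochainMap (v 0) F.generators = cochainMap (E.D 0) w) :
    ∃ k : ∀ j, Matrix (F.ι j) (E.ι j) R, ∀ j, v j = k j * E.D j + F.D j * k (j + 1) := by
  obtain ⟨k₀, rfl⟩ := exists_cochainMap_cokernelGenerators_eq _ w
  rw [← cochainMap_mul, cochainMap_cokernelGenerators_eq_iff] at h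
  obtain ⟨k₁, hk₁⟩ := h
  obtain ⟨k, -, -, hk⟩ := exists_seq_of_rel_zero (T := fun j ↦ Matrix (F.ι j) (E.ι j) R)
    (fun j a b ↦ v j - a * E.D j = F.D j * b) (fun j a b hab ↦
      exists_eq_mul_of_mul_eq_zero (hF j) (by
        have hvj : F.D j * v (j + 1) = v j * E.D (j + 1) := hv j
        rw [Matrix.mul_sub, hvj, ← Matrix.mul_assoc, ← hab, Matrix.sub_mul, Matrix.mul_assoc a,
          E.D_mul_D, Matrix.mul_zero, sub_zero, sub_self])) hk₁
  exact ⟨k, fun j ↦ by rw [← hk j, add_sub_cancel]⟩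

theorem IsChainMap.exists_homotopy_zero (hF : F.IsAcyclic)
    {v : ∀ j, Matrix (F.ι j) (E.ι j) R} (hv : IsChainMap F E v)
    (h : cochainMap (v 0) F.generators = 0) :
    ∃ k : ∀ j, Matrix (F.ι (j + 1)) (E.ι j) R, v 0 = F.D 0 * k 0 ∧
      ∀ j, v (j + 1) = k j * E.D j + F.D (j + 1) * k (j + 1) := by
  rw [cochainMap_cokernelGenerators_eq_zero_iff] at h
  obtain ⟨k₀, hk₀⟩ := h
  obtain ⟨k₁, hk₁⟩ := exists_eq_mul_of_mul_eq_zero (hF 0) (W := v 1 - k₀ * E.D 0) (by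
    rw [Matrix.mul_sub, hv 0, ← Matrix.mul_assoc, ← hk₀, sub_self])
  obtain ⟨k, h0, -, hk⟩ := exists_seq_of_rel_zero (T := fun j ↦ Matrix (F.ι (j + 1)) (E.ι j) R)
    (fun j a b ↦ v (j + 1) - a * E.D j = F.D (j + 1) * b) (fun j a b hab ↦
      exists_eq_mul_of_mul_eq_zero (hF (j + 1)) (by
        rw [Matrix.mul_sub, hv (j + 1), ← Matrix.mul_assoc, ← hab, Matrix.sub_mul,
          Matrix.mul_assoc a, E.D_mul_D, Matrix.mul_zero, sub_zero, sub_self])) hk₁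
  exact ⟨k, h0 ▸ hk₀, fun j ↦ by rw [← hk j, add_sub_cancel]⟩

end Basic

section Operators

variable {B : Type u} [CommRing B] {c : ℕ} (χ : CohomologyOperators B c)
variable (E : MatrixComplex B) (Y : Type*) [AddCommGroup Y] [Module B Y]

/-- The action of the cohomology operators on the cohomology of `Hom(E, Y)`. -/
abbrev action : DegreeTwoAction B c (Cohomology E.D Y) := χ.action Y E.D_mul_D

lemma action_op_class (i : Fin c) {n : ℕ} (u : E.ι n → Y) (hu : u ∈ cocycles E.D Y n) :
    (E.action χ Y).op i n (cohomologyClass u hu) =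
      cohomologyClass (cochainMap (χ.op i (E.D n) (E.D (n + 1))) u)
        ((χ.commutesOn Y E.D_mul_D i).cochainMap_mem_cocycles hu) :=
  rfl

variable {E Y} {Y' : Type*} [AddCommGroup Y'] [Module B Y']

section Coefficients

lemma comp_mem_cocycles (f : Y →ₗ[B] Y') {n : ℕ} {u : E.ι n → Y} (hu : u ∈ cocycles E.D Y n) :
    (fun i ↦ f (u i)) ∈ cocycles E.D Y' n := by
  rw [mem_cocycles] at hu ⊢
  rw [cochainMap_comp_linearMap, hu]
  exact funext fun _ ↦ map_zero f

variable (E) in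
/-- The map induced in cohomology by a linear map of coefficients. -/
def mapCoefficients (f : Y →ₗ[B] Y') (n : ℕ) : Cohomology E.D Y n →ₗ[B] Cohomology E.D Y' n :=
  mapCohomology (f.compLeft (E.ι n)) (fun _ hu ↦ comp_mem_cocycles f hu) fun u _ hu ↦ by
    cases n with
    | zero =>
      obtain rfl : u = 0 := hu
      simp
    | succ n =>
      obtain ⟨w, rfl⟩ := hu
      exact ⟨fun i ↦ f (w i), cochainMap_comp_linearMap f _ _⟩

lemma mapCoefficients_class (f : Y →ₗ[B] Y') {n : ℕ} (u : E.ι n → Y) (hu : u ∈ cocycles E.D Y n) :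
    mapCoefficients E f n (cohomologyClass u hu) =
      cohomologyClass (fun i ↦ f (u i)) (comp_mem_cocycles f hu) :=
  rfl

lemma mapCoefficients_id (n : ℕ) (x : Cohomology E.D Y n) :
    mapCoefficients E (LinearMap.id : Y →ₗ[B] Y) n x = x := by
  obtain ⟨u, hu, rfl⟩ := exists_cohomologyClass_eq x
  rfl

lemma mapCoefficients_comp {Y'' : Type*} [AddCommGroup Y''] [Module B Y''] (f : Y →ₗ[B] Y')
    (g : Y' →ₗ[B] Y'') (n : ℕ) (x : Cohomology E.D Y n) :
    mapCoefficients E (g ∘ₗ f) n x = mapCoefficients E g n (mapCoefficients E f n x) := by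
  obtain ⟨u, hu, rfl⟩ := exists_cohomologyClass_eq x
  rfl

lemma mapCoefficients_op (f : Y →ₗ[B] Y') (i : Fin c) (n : ℕ) (x : Cohomology E.D Y n) :
    mapCoefficients E f (n + 2) ((E.action χ Y).op i n x) =
      (E.action χ Y').op i n (mapCoefficients E f n x) := by
  obtain ⟨u, hu, rfl⟩ := exists_cohomologyClass_eq x
  simp only [action_op_class, mapCoefficients_class, cochainMap_comp_linearMap]

/-- The map induced on total cohomology by a linear map of coefficients. -/
noncomputable def pushforward (f : Y →ₗ[B] Y') :
    (E.action χ Y).Total →ₗ[MvPolynomial (Fin c) B] (E.action χ Y').Total :=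
  (E.action χ Y).lift (fun n ↦ (E.action χ Y').of n ∘ₗ mapCoefficients E f n) fun i n x ↦ by
    simp only [LinearMap.comp_apply, mapCoefficients_op, DegreeTwoAction.X_smul_of]

lemma pushforward_of (f : Y →ₗ[B] Y') (n : ℕ) (x : Cohomology E.D Y n) :
    pushforward χ f ((E.action χ Y).of n x) = (E.action χ Y').of n (mapCoefficients E f n x) :=
  (E.action χ Y).lift_of (fun n ↦ (E.action χ Y').of n ∘ₗ mapCoefficients E f n) _ n x

lemma pushforward_comp {Y'' : Type*} [AddCommGroup Y''] [Module B Y''] (f : Y →ₗ[B] Y')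
    (g : Y' →ₗ[B] Y'') (x : (E.action χ Y).Total) :
    pushforward χ (g ∘ₗ f) x = pushforward χ g (pushforward χ f x) := by
  induction x using DegreeTwoAction.total_induction with
  | zero => simp
  | of n x => simp only [pushforward_of, mapCoefficients_comp]
  | add x y hx hy => simp only [map_add, hx, hy]

end Coefficients

section ChainMaps

variable {F : MatrixComplex B} {m : ℕ} {v : ∀ j, Matrix (F.ι j) (E.ι (m + (j + 1))) B}
variable (hv : IsChainMap F (E.shift m).tail v)

include hv in
lemma IsChainMap.mul_comm (n : ℕ) : F.D n * v (n + 1) = v n * E.D (m + (n + 1)) := hv n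

include hv in
lemma IsChainMap.cochainMap_mem_cocycles {n : ℕ} {u : F.ι n → Y} (hu : u ∈ cocycles F.D Y n) :
    cochainMap (v n) u ∈ cocycles E.D Y (m + (n + 1)) := by
  rw [mem_cocycles] at hu ⊢
  rw [← cochainMap_mul, ← hv.mul_comm, cochainMap_mul, hu, map_zero]

include hv in
lemma IsChainMap.cochainMap_mem_coboundaries {n : ℕ} {u : F.ι n → Y}
    (hu : u ∈ coboundaries F.D Y n) : cochainMap (v n) u ∈ coboundaries E.D Y (m + (n + 1)) := by
  cases n with
  | zero =>
    obtain rfl : u = 0 := hu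
    simp
  | succ n =>
    obtain ⟨w, rfl⟩ := hu
    have hw : cochainMap (E.D (m + (n + 1))) (cochainMap (v n) w) =
        cochainMap (v (n + 1)) (cochainMap (F.D n) w) := by
      rw [← cochainMap_mul, ← cochainMap_mul, hv.mul_comm]
    exact ⟨cochainMap (v n) w, hw⟩

variable (Y) in
/-- The map induced in cohomology by a chain map of degree `m + 1`. -/
def IsChainMap.pullbackCohomology (n : ℕ) :
    Cohomology F.D Y n →ₗ[B] Cohomology E.D Y (m + (n + 1)) :=
  mapCohomology (cochainMap (v n)) (fun _ ↦ hv.cochainMap_mem_cocycles)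
    fun _ _ ↦ hv.cochainMap_mem_coboundaries

lemma IsChainMap.pullbackCohomology_class {n : ℕ} (u : F.ι n → Y) (hu : u ∈ cocycles F.D Y n) :
    hv.pullbackCohomology Y n (cohomologyClass u hu) =
      cohomologyClass (cochainMap (v n) u) (hv.cochainMap_mem_cocycles hu) :=
  rfl

lemma IsChainMap.pullbackCohomology_op (i : Fin c) (n : ℕ) (x : Cohomology F.D Y n) :
    hv.pullbackCohomology Y (n + 2) ((F.action χ Y).op i n x) =
      (E.action χ Y).op i (m + (n + 1)) (hv.pullbackCohomology Y n x) := by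
  obtain ⟨u, hu, rfl⟩ := exists_cohomologyClass_eq x
  obtain ⟨k₀, k₁, hk⟩ := χ.exists_homotopy i (F.D_mul_D n) (E.D_mul_D (m + (n + 1)))
    (hv n).symm (hv (n + 1)).symm
  have hdiff : cochainMap (v (n + 2)) (cochainMap (χ.op i (F.D n) (F.D (n + 1))) u) -
      cochainMap (χ.op i (E.D (m + (n + 1))) (E.D (m + (n + 1) + 1))) (cochainMap (v n) u) =
        cochainMap (E.D (m + (n + 1) + 1)) (cochainMap (-k₀) u) := by
    have hk := congrArg (fun M ↦ cochainMap M u) hk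
    simp only [cochainMap_add, cochainMap_sub, cochainMap_mul, mem_cocycles.1 hu, map_zero,
      add_zero] at hk
    rw [cochainMap_neg, map_neg]
    have hmul := cochainMap_mul (v n) (χ.op i (E.D (m + (n + 1))) (E.D (m + (n + 1) + 1))) u
    exact (neg_sub _ _).symm.trans (congrArg Neg.neg ((congrArg (· - _) hmul.symm).trans hk))
  exact (cohomologyClass_eq_iff (n := m + (n + 1) + 2)).2 ⟨_, hdiff.symm⟩

/-- The map induced on total cohomology by a chain map of degree `m + 1`. -/
noncomputable def IsChainMap.pullback :
    (F.action χ Y).Total →ₗ[MvPolynomial (Fin c) B] (E.action χ Y).Total :=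
  (F.action χ Y).lift (fun n ↦ (E.action χ Y).of (m + (n + 1)) ∘ₗ hv.pullbackCohomology Y n)
    fun i n x ↦ by
      rw [LinearMap.comp_apply, LinearMap.comp_apply, hv.pullbackCohomology_op χ,
        DegreeTwoAction.X_smul_of]
      rfl

lemma IsChainMap.pullback_of (n : ℕ) (x : Cohomology F.D Y n) :
    hv.pullback χ ((F.action χ Y).of n x) =
      (E.action χ Y).of (m + (n + 1)) (hv.pullbackCohomology Y n x) :=
  (F.action χ Y).lift_of
    (fun n ↦ (E.action χ Y).of (m + (n + 1)) ∘ₗ hv.pullbackCohomology Y n) _ n x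

end ChainMaps

end Operators

end MatrixComplex

/-! ### Minimal free resolutions and their growth -/

section Growth

/-- Polynomial growth of degree at most `s - 1`, the condition on Betti numbers which says that the
complexity is at most `s`. For `s = 0` it forces the sequence to vanish eventually. -/
def GrowthLE (b : ℕ → ℕ) (s : ℕ) : Prop :=
  ∃ a : ℝ, ∀ᶠ n : ℕ in atTop, (b n : ℝ) ≤ a * (n : ℝ) ^ ((s : ℤ) - 1)

lemma GrowthLE.mono {b : ℕ → ℕ} {s t : ℕ} (h : GrowthLE b s) (hst : s ≤ t) : GrowthLE b t := by
  obtain ⟨a, ha⟩ := h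
  refine ⟨|a|, ?_⟩
  filter_upwards [ha, eventually_ge_atTop 1] with n hn hn1
  have hn1 : (1 : ℝ) ≤ n := by exact_mod_cast hn1
  calc (b n : ℝ) ≤ a * (n : ℝ) ^ ((s : ℤ) - 1) := hn
    _ ≤ |a| * (n : ℝ) ^ ((s : ℤ) - 1) := by gcongr; exact le_abs_self a
    _ ≤ |a| * (n : ℝ) ^ ((t : ℤ) - 1) := by gcongr

lemma growthLE_of_eventually_eq_zero {b : ℕ → ℕ} (h : ∀ᶠ n in atTop, b n = 0) (s : ℕ) :
    GrowthLE b s :=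
  ⟨0, h.mono fun n hn ↦ by simp [hn]⟩

lemma GrowthLE.eventually_eq_zero {b : ℕ → ℕ} (h : GrowthLE b 0) : ∀ᶠ n in atTop, b n = 0 := by
  obtain ⟨a, ha⟩ := h
  filter_upwards [ha, eventually_gt_atTop 0, (tendsto_natCast_atTop_atTop (R := ℝ)).eventually
    (eventually_gt_atTop a)] with n hn hn0 han
  have hn0 : (0 : ℝ) < n := by exact_mod_cast hn0
  have hlt : (b n : ℝ) < 1 := by
    refine hn.trans_lt ?_
    rwa [Nat.cast_zero, zero_sub, zpow_neg_one, ← div_eq_mul_inv, div_lt_one hn0]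
  exact Nat.lt_one_iff.1 (by exact_mod_cast hlt)

lemma GrowthLE.exists_eventually_le_sub {r : ℕ → ℕ} {d s : ℕ} (hd : 1 ≤ d) (hr : GrowthLE r s) :
    ∃ b : ℝ, 0 ≤ b ∧ ∀ᶠ n : ℕ in atTop,
      (r (n + 1) : ℝ) ≤ b * ((n + d : ℕ) : ℝ) ^ s - b * (n : ℝ) ^ s := by
  cases s with
  | zero =>
    refine ⟨0, le_rfl, ?_⟩
    filter_upwards [(tendsto_add_atTop_nat 1).eventually hr.eventually_eq_zero] with n hn
    simp [hn]
  | succ s =>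
    obtain ⟨a, ha⟩ := hr
    refine ⟨|a|, abs_nonneg a, ?_⟩
    filter_upwards [(tendsto_add_atTop_nat 1).eventually ha] with n hn
    have hd : (1 : ℝ) ≤ d := by exact_mod_cast hd
    have hpow : ((n + 1 : ℕ) : ℝ) ^ s ≤ ((n + d : ℕ) : ℝ) ^ (s + 1) - (n : ℝ) ^ (s + 1) :=
      calc ((n + 1 : ℕ) : ℝ) ^ s ≤ ((n + d : ℕ) : ℝ) ^ s := by gcongr
        _ ≤ ((n + d : ℕ) : ℝ) ^ s * d := le_mul_of_one_le_right (by positivity) hd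
        _ = ((n + d : ℕ) : ℝ) ^ (s + 1) - ((n + d : ℕ) : ℝ) ^ s * n := by push_cast; ring
        _ ≤ ((n + d : ℕ) : ℝ) ^ (s + 1) - (n : ℝ) ^ s * n := by gcongr; simp
    rw [← mul_sub]
    rw [Nat.cast_succ s, add_sub_cancel_right, zpow_natCast] at hn
    calc (r (n + 1) : ℝ) ≤ |a| * ((n + 1 : ℕ) : ℝ) ^ s :=
          hn.trans (by gcongr; exact le_abs_self a)
      _ ≤ _ := by gcongr

lemma exists_le_add_of_le_add_sub {f g : ℕ → ℝ} {d n₁ : ℕ} (hd : 1 ≤ d) (hf : ∀ n, 0 ≤ f n)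
    (hg : ∀ n, 0 ≤ g n) (h : ∀ n, n₁ ≤ n → f (n + d) ≤ f n + (g (n + d) - g n)) :
    ∃ K : ℝ, 0 ≤ K ∧ ∀ n, n₁ ≤ n → f n ≤ K + g n := by
  refine ⟨∑ j ∈ Finset.range (n₁ + d), f j, Finset.sum_nonneg fun j _ ↦ hf j, fun n ↦ ?_⟩
  induction n using Nat.strong_induction_on with
  | _ n ih =>
    intro hn
    rcases lt_or_ge n (n₁ + d) with hlt | hge
    · have := Finset.single_le_sum (f := f) (fun j _ ↦ hf j) (Finset.mem_range.2 hlt)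
      linarith [hg n]
    · obtain ⟨m, rfl⟩ : ∃ m, n = m + d := ⟨n - d, by lia⟩
      linarith [ih m (by lia) (by lia), h m (by lia)]

theorem GrowthLE.succ_of_le_add {f r : ℕ → ℕ} {d s : ℕ} (hr : GrowthLE r s) (hd : 1 ≤ d)
    (h : ∀ n, f (n + d) ≤ f n + r (n + 1)) : GrowthLE f (s + 1) := by
  obtain ⟨b, hb, hrb⟩ := hr.exists_eventually_le_sub hd
  obtain ⟨n₂, hn₂⟩ := eventually_atTop.1 hrb
  obtain ⟨K, hK, hf⟩ := exists_le_add_of_le_add_sub (f := fun n ↦ f n)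
    (g := fun n ↦ b * (n : ℝ) ^ s) hd (fun n ↦ by positivity) (fun n ↦ by positivity) fun n hn ↦ by
      have hfr : (f (n + d) : ℝ) ≤ f n + r (n + 1) := by exact_mod_cast h n
      exact hfr.trans (by gcongr; exact hn₂ n hn)
  refine ⟨K + b, ?_⟩
  filter_upwards [eventually_ge_atTop n₂, eventually_ge_atTop 1] with n hn hn1
  have hpow : (1 : ℝ) ≤ (n : ℝ) ^ s := one_le_pow₀ (by exact_mod_cast hn1)
  rw [Nat.cast_succ s, add_sub_cancel_right, zpow_natCast, add_mul]
  exact (hf n hn).trans (by gcongr; exact le_mul_of_one_le_right hK hpow)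

end Growth

section MinimalResolutions

variable {A : Type u} [CommRing A] [IsLocalRing A] {M : Type u} [AddCommGroup M] [Module A M]

lemma HasComplexityLE.mono {s t : ℕ} (h : HasComplexityLE A M s) (hst : s ≤ t) :
    HasComplexityLE A M t :=
  let ⟨R, hR⟩ := h
  ⟨R, GrowthLE.mono (b := R.b) hR hst⟩

lemma complexity_eq {t : ℕ} (ht : 1 ≤ t) (h : HasComplexityLE A M t)
    (h' : ¬ HasComplexityLE A M (t - 1)) : complexity A M = t := by
  refine le_antisymm (sInf_le ⟨t, rfl, h⟩) (le_sInf ?_)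
  rintro _ ⟨s, rfl, hs⟩
  by_contra hlt
  have hlt : s < t := by exact_mod_cast not_le.1 hlt
  exact h' (hs.mono (by lia))

lemma complexity_lt {t : ℕ} (ht : 1 ≤ t) (h : HasComplexityLE A M (t - 1)) :
    complexity A M < t := by
  refine (sInf_le ⟨t - 1, rfl, h⟩ : complexity A M ≤ _).trans_lt ?_
  exact_mod_cast (by lia : t - 1 < t)

namespace MatrixComplex

/-- A complex over a local ring is minimal if its differentials vanish modulo the maximal ideal. -/
def IsMinimal (F : MatrixComplex A) : Prop :=
  ∀ n i j, F.D n i j ∈ maximalIdeal A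

end MatrixComplex

namespace MinFreeRes

variable (R : MinFreeRes A M)

lemma toMatrix'_mulVec (n : ℕ) (x : Fin (R.b (n + 1)) → A) :
    (LinearMap.toMatrix' (R.d n)).mulVec x = R.d n x := by
  rw [← Matrix.toLin'_apply, Matrix.toLin'_toMatrix']

/-- The matrices of the differentials of a minimal free resolution. -/
noncomputable def complex : MatrixComplex A where
  ι n := Fin (R.b n)
  D n := LinearMap.toMatrix' (R.d n)
  D_mul_D n := by
    rw [← LinearMap.toMatrix'_comp, (R.exact_succ n).linearMap_comp_eq_zero, map_zero]

lemma card_complex (n : ℕ) : Fintype.card (R.complex.ι n) = R.b n :=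
  Fintype.card_fin _

lemma isAcyclic_complex : R.complex.IsAcyclic := fun n x hx ↦ by
  obtain ⟨y, rfl⟩ := (R.exact_succ n x).1 ((R.toMatrix'_mulVec n x).symm.trans hx)
  exact ⟨y, (R.toMatrix'_mulVec (n + 1) y).symm⟩

lemma isMinimal_complex : R.complex.IsMinimal := by
  intro n (i : Fin (R.b n)) (j : Fin (R.b (n + 1)))
  change LinearMap.toMatrix' (R.d n) i j ∈ maximalIdeal A
  rw [LinearMap.toMatrix'_apply]
  exact R.minimal n _ i

/-- The identification of a module with the cokernel of its minimal presentation. -/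
noncomputable def cokerEquiv : R.complex.coker ≃ₗ[A] M :=
  (Submodule.quotEquivOfEq _ _ <| (congrArg LinearMap.range
    (LinearMap.ext (R.toMatrix'_mulVec 0))).trans (LinearMap.exact_iff.1 R.exact_zero).symm).trans
      (LinearMap.quotKerEquivOfSurjective _ R.aug_surjective)

end MinFreeRes

lemma exists_surjective_of_minimal_generators (N : Type*) [AddCommGroup N] [Module A N]
    [Module.Finite A N] : ∃ (b : ℕ) (g : (Fin b → A) →ₗ[A] N), Function.Surjective g ∧
      ∀ x, g x = 0 → ∀ i, x i ∈ maximalIdeal A := by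
  let k := ResidueField A
  let basis := Module.finBasis k (TensorProduct A k N)
  choose y hy using fun i ↦ TensorProduct.mk_surjective A N k residue_surjective (basis i)
  refine ⟨_, Fintype.linearCombination A y, ?_, fun x hx i ↦ ?_⟩
  · rw [← LinearMap.range_eq_top, Fintype.range_linearCombination]
    exact span_eq_top_of_tmul_eq_basis y basis hy
  · have hsum : ∑ j, residue A (x j) • basis j = 0 := by
      have h := congrArg (TensorProduct.mk A k N 1) hx
      simp only [Fintype.linearCombination_apply, map_sum, map_smul, map_zero, hy] at h
      exact (Finset.sum_congr rfl fun j _ ↦ algebraMap_smul k (x j) (basis j)).trans h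
    exact (residue_eq_zero_iff _).1
      (Fintype.linearIndependent_iff.1 basis.linearIndependent _ hsum i)

theorem nonempty_minFreeRes [IsNoetherianRing A] [Module.Finite A M] :
    Nonempty (MinFreeRes A M) := by
  obtain ⟨b₀, g₀, hg₀, hmin₀⟩ := exists_surjective_of_minimal_generators (A := A) M
  have hcover (s : Σ b : ℕ, Submodule A (Fin b → A)) :
      ∃ (b : ℕ) (g : (Fin b → A) →ₗ[A] (Fin s.1 → A)),
        LinearMap.range g = s.2 ∧ ∀ x, g x = 0 → ∀ i, x i ∈ maximalIdeal A := by
    obtain ⟨b, g, hg, hmin⟩ := exists_surjective_of_minimal_generators (A := A) s.2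
    refine ⟨b, s.2.subtype ∘ₗ g, ?_, fun x hx ↦ hmin x (Subtype.ext hx)⟩
    rw [LinearMap.range_comp, LinearMap.range_eq_top.2 hg, Submodule.map_top,
      Submodule.range_subtype]
  choose b g hrange hmin using hcover
  let syzygy : ℕ → Σ b : ℕ, Submodule A (Fin b → A) := fun n ↦
    Nat.rec ⟨b₀, LinearMap.ker g₀⟩ (fun _ s ↦ ⟨b s, LinearMap.ker (g s)⟩) n
  have hsyzygy (n : ℕ) : ∀ x ∈ (syzygy n).2, ∀ i, x i ∈ maximalIdeal A := by
    cases n with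
    | zero => exact hmin₀
    | succ n => exact hmin (syzygy n)
  exact ⟨{
    b := fun n ↦ (syzygy n).1
    d := fun n ↦ g (syzygy n)
    aug := g₀
    aug_surjective := hg₀
    exact_zero := LinearMap.exact_iff.2 (hrange (syzygy 0)).symm
    exact_succ := fun n ↦ LinearMap.exact_iff.2 (hrange (syzygy (n + 1))).symm
    minimal := fun n x ↦ hsyzygy n _ (hrange (syzygy n) ▸ ⟨x, rfl⟩) }⟩

end MinimalResolutions

/-! ### Mapping cones -/

namespace MatrixComplex

variable {R : Type u} [CommRing R] {F C E : MatrixComplex R}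

lemma IsAcyclic.exists_isChainMap_of_linearMap (hF : F.IsAcyclic) (f : C.coker →ₗ[R] F.coker) :
    ∃ v, IsChainMap F C v ∧ cochainMap (v 0) F.generators = fun i ↦ f (C.generators i) := by
  obtain ⟨v₀, h₀⟩ := exists_cochainMap_cokernelGenerators_eq (F.D 0) fun i ↦ f (C.generators i)
  obtain ⟨v, hv, rfl⟩ := hF.exists_isChainMap (E := C) v₀ <| by
    rw [h₀, cochainMap_comp_linearMap, cochainMap_self_cokernelGenerators]
    exact funext fun _ ↦ map_zero f
  exact ⟨v, hv, h₀⟩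

lemma IsChainMap.mul {v : ∀ j, Matrix (F.ι j) (C.ι j) R} {w : ∀ j, Matrix (C.ι j) (E.ι j) R}
    (hv : IsChainMap F C v) (hw : IsChainMap C E w) : IsChainMap F E fun j ↦ v j * w j := fun j ↦ by
  rw [← Matrix.mul_assoc, hv j, Matrix.mul_assoc, hw j, ← Matrix.mul_assoc]

lemma exists_homotopy_one_of_retract (hC : C.IsAcyclic) (hF : F.IsAcyclic)
    (f : C.coker →ₗ[R] F.coker) (g : F.coker →ₗ[R] C.coker) (hgf : g ∘ₗ f = LinearMap.id) :
    ∃ (v : ∀ j, Matrix (C.ι j) (F.ι j) R) (w : ∀ j, Matrix (F.ι j) (C.ι j) R)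
      (k : ∀ j, Matrix (C.ι (j + 1)) (C.ι j) R), ∀ j,
        v (j + 1) * w (j + 1) - 1 = k j * C.D j + C.D (j + 1) * k (j + 1) := by
  obtain ⟨w, hw, hwf⟩ := hF.exists_isChainMap_of_linearMap f
  obtain ⟨v, hv, hvg⟩ := hC.exists_isChainMap_of_linearMap g
  obtain ⟨k, -, hk⟩ := IsChainMap.exists_homotopy_zero (E := C) hC (v := fun j ↦ v j * w j - 1)
    (fun j ↦ by
      rw [Matrix.mul_sub, Matrix.sub_mul, (hv.mul hw) j, Matrix.mul_one, Matrix.one_mul]) <| by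
    rw [cochainMap_sub, cochainMap_mul, hvg, cochainMap_comp_linearMap, hwf, cochainMap_one,
      sub_eq_zero]
    exact funext fun i ↦ LinearMap.congr_fun hgf _
  exact ⟨v, w, k, hk⟩

/-- The mapping cone of a chain map of degree `δ + 1` from a complex to itself. -/
def cone (F : MatrixComplex R) (δ : ℕ) (G : ∀ n, Matrix (F.ι n) (F.ι (δ + (n + 1))) R)
    (hG : IsChainMap F (F.shift δ).tail G) : MatrixComplex R where
  ι n := F.ι n ⊕ F.ι (δ + n)
  D n := Matrix.fromBlocks (F.D n) (G n) 0 (-F.D (δ + n))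
  D_mul_D n := by
    have hD : F.D (δ + n) * F.D (δ + (n + 1)) = 0 := F.D_mul_D (δ + n)
    refine (Matrix.fromBlocks_multiply _ _ _ _ _ _ _ _).trans ?_
    rw [F.D_mul_D, hG.mul_comm, Matrix.mul_neg, Matrix.mul_neg,
      Matrix.neg_mul (F.D (δ + n)) (F.D (δ + (n + 1))), hD]
    simp

variable {δ : ℕ} {G : ∀ n, Matrix (F.ι n) (F.ι (δ + (n + 1))) R}

theorem IsAcyclic.cone (hF : F.IsAcyclic) (hG : IsChainMap F (F.shift δ).tail G) :
    (F.cone δ G hG).IsAcyclic := by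
  intro n (x : F.ι (n + 1) ⊕ F.ι (δ + (n + 1)) → R) hx
  obtain ⟨x₁, x₂, rfl⟩ : ∃ x₁ x₂, x = Sum.elim x₁ x₂ := ⟨_, _, (Sum.elim_comp_inl_inr x).symm⟩
  have hx := (Matrix.fromBlocks_mulVec _ _ _ _ _).symm.trans hx
  simp only [Sum.elim_comp_inl, Sum.elim_comp_inr, Matrix.zero_mulVec, zero_add,
    Matrix.neg_mulVec] at hx
  have hx₁ : (F.D n).mulVec x₁ + (G n).mulVec x₂ = 0 := funext fun i ↦ congrFun hx (Sum.inl i)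
  have hx₂ : (F.D (δ + n)).mulVec x₂ = 0 :=
    neg_eq_zero.1 (funext fun i ↦ congrFun hx (Sum.inr i))
  obtain ⟨y₂, rfl⟩ := hF (δ + n) x₂ hx₂
  obtain ⟨y₁, hy₁⟩ := hF n (x₁ + (G (n + 1)).mulVec y₂) <| by
    rw [Matrix.mulVec_add, Matrix.mulVec_mulVec, hG.mul_comm, ← Matrix.mulVec_mulVec]
    exact hx₁
  refine ⟨Sum.elim y₁ (-y₂), ?_⟩
  refine Eq.trans ?_ (Matrix.fromBlocks_mulVec _ _ _ _ _).symm
  rw [Sum.elim_comp_inl, Sum.elim_comp_inr, ← hy₁]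
  simp only [Matrix.mulVec_neg, Matrix.neg_mulVec, neg_neg, Matrix.zero_mulVec, zero_add,
    add_neg_cancel_right]
  rfl

end MatrixComplex

section Betti

variable {A : Type u} [CommRing A] [IsLocalRing A]

lemma card_le_card_add_card_of_one_sub_mul_sub_mul_mem {α β γ : Type} [Fintype α] [DecidableEq α]
    [Fintype β] [Fintype γ] (X : Matrix α β A) (X' : Matrix β α A) (Y : Matrix α γ A)
    (Y' : Matrix γ α A)
    (h : ∀ i j, (1 - X * X' - Y * Y' : Matrix α α A) i j ∈ maximalIdeal A) :
    Fintype.card α ≤ Fintype.card β + Fintype.card γ := by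
  let r := residue A
  have hone : (X.map r).fromCols (Y.map r) * (X'.map r).fromRows (Y'.map r) = 1 := by
    have hmap : (1 - X * X' - Y * Y' : Matrix α α A).map r = 0 :=
      Matrix.ext fun i j ↦ (residue_eq_zero_iff _).2 (h i j)
    rw [Matrix.map_sub _ (map_sub r), Matrix.map_sub _ (map_sub r), Matrix.map_mul, Matrix.map_mul,
      Matrix.map_one _ (map_zero r) (map_one r), sub_sub, sub_eq_zero] at hmap
    rw [Matrix.fromCols_mul_fromRows, hmap]
  calc Fintype.card α = ((X.map r).fromCols (Y.map r) * (X'.map r).fromRows (Y'.map r)).rank := by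
        rw [hone, Matrix.rank_one]
    _ ≤ ((X'.map r).fromRows (Y'.map r)).rank := Matrix.rank_mul_le_right _ _
    _ ≤ Fintype.card (β ⊕ γ) := Matrix.rank_le_card_height _
    _ = Fintype.card β + Fintype.card γ := Fintype.card_sum

namespace MatrixComplex

variable {F E : MatrixComplex A} {δ : ℕ} {G : ∀ n, Matrix (F.ι n) (F.ι (δ + (n + 1))) A}

theorem IsMinimal.card_le_card_add_card (hmin : F.IsMinimal) (hF : F.IsAcyclic) (hE : E.IsAcyclic)
    (hG : IsChainMap F (F.shift δ).tail G) (e : (F.cone δ G hG).coker ≃ₗ[A] E.coker) (n : ℕ) :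
    Fintype.card (F.ι (δ + (n + 1))) ≤ Fintype.card (F.ι n) + Fintype.card (E.ι (n + 1)) := by
  obtain ⟨v, w, k, hk⟩ := exists_homotopy_one_of_retract (hF.cone hG) hE
    e.toLinearMap e.symm.toLinearMap (by simp)
  let K : Matrix (F.ι (n + 1) ⊕ F.ι (δ + (n + 1))) (F.ι n ⊕ F.ι (δ + n)) A := k n
  let K' : Matrix (F.ι (n + 1 + 1) ⊕ F.ι (δ + (n + 1 + 1))) (F.ι (n + 1) ⊕ F.ι (δ + (n + 1))) A :=
    k (n + 1)
  let V : Matrix (F.ι (n + 1) ⊕ F.ι (δ + (n + 1))) (E.ι (n + 1)) A := v (n + 1)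
  let W : Matrix (E.ι (n + 1)) (F.ι (n + 1) ⊕ F.ι (δ + (n + 1))) A := w (n + 1)
  have hblock : V.toRows₂ * W.toCols₂ - 1 = K.toBlocks₂₁ * G n - K.toBlocks₂₂ * F.D (δ + n) -
      F.D (δ + (n + 1)) * K'.toBlocks₂₂ := by
    have h : V * W - 1 = K * Matrix.fromBlocks (F.D n) (G n) 0 (-F.D (δ + n)) +
      Matrix.fromBlocks (F.D (n + 1)) (G (n + 1)) 0 (-F.D (δ + (n + 1))) * K' := hk n
    rw [← K.fromBlocks_toBlocks, ← K'.fromBlocks_toBlocks, Matrix.fromBlocks_multiply,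
      Matrix.fromBlocks_multiply, Matrix.fromBlocks_add] at h
    have hVW : V.toRows₂ * W.toCols₂ - 1 = (V * W - 1).toBlocks₂₂ :=
      Matrix.ext fun i j ↦ by simp [Matrix.toBlocks₂₂, Matrix.mul_apply, Matrix.one_apply]
    rw [hVW, h, Matrix.toBlocks_fromBlocks₂₂, Matrix.mul_neg, Matrix.neg_mul, Matrix.zero_mul,
      zero_add, ← sub_eq_add_neg, ← sub_eq_add_neg]
  refine card_le_card_add_card_of_one_sub_mul_sub_mul_mem (-K.toBlocks₂₁) (G n) V.toRows₂ W.toCols₂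
    fun i j ↦ ?_
  have hsum : (1 - -K.toBlocks₂₁ * G n - V.toRows₂ * W.toCols₂ : Matrix _ _ A) =
      K.toBlocks₂₂ * F.D (δ + n) + F.D (δ + (n + 1)) * K'.toBlocks₂₂ := by
    rw [sub_eq_iff_eq_add.1 hblock, Matrix.neg_mul]
    abel
  rw [hsum]
  exact Ideal.add_mem _ (Ideal.sum_mem _ fun l _ ↦ Ideal.mul_mem_left _ _ (hmin _ _ _))
    (Ideal.sum_mem _ fun l _ ↦ Ideal.mul_mem_right _ _ (hmin _ _ _))

end MatrixComplex

end Betti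

/-! ### Flat base change of complexes -/

open TensorProduct

section BaseChange

variable {A : Type u} [CommRing A] (B : Type u) [CommRing B] [Algebra A B]

section Matrices

variable {α β : Type} [Fintype α]

lemma mulVec_map_piScalarRight [DecidableEq α] [Fintype β] [DecidableEq β] (D : Matrix α β A)
    (z : B ⊗[A] (β → A)) :
    (D.map (algebraMap A B)).mulVec (piScalarRight A B B β z) =
      piScalarRight A B B α (D.mulVecLin.lTensor B z) := by
  induction z with
  | zero => simp
  | add x y hx hy => simp only [map_add, Matrix.mulVec_add, hx, hy]
  | tmul b x =>
    ext i
    simp [Matrix.mulVec, dotProduct, Algebra.smul_def, Finset.sum_mul, mul_assoc]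

lemma cochainMap_map_piRight [DecidableEq α] [Fintype β] [DecidableEq β] {N : Type*}
    [AddCommGroup N] [Module A N] (D : Matrix α β A) (z : B ⊗[A] (α → N)) :
    cochainMap (D.map (algebraMap A B)) (piRight A B B (fun _ ↦ N) z) =
      piRight A B B (fun _ ↦ N) ((cochainMap D).lTensor B z) := by
  induction z with
  | zero => simp
  | add x y hx hy => simp only [map_add, hx, hy]
  | tmul b x =>
    ext j
    simp [cochainMap_apply, tmul_sum]

lemma mem_span_tmul_of_cochainMap_map_eq_zero [Module.Flat A B] [Finite β] {N : Type*}
    [AddCommGroup N] [Module A N] (D : Matrix α β A) {u : α → B ⊗[A] N}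
    (hu : cochainMap (D.map (algebraMap A B)) u = 0) :
    u ∈ Submodule.span B
      ((fun (g : α → N) i ↦ (1 : B) ⊗ₜ[A] g i) '' {g | cochainMap D g = 0}) := by
  classical
  cases nonempty_fintype β
  obtain ⟨z, rfl⟩ := (piRight A B B fun _ : α ↦ N).surjective u
  rw [cochainMap_map_piRight, LinearEquiv.map_eq_zero_iff] at hu
  have hexact : Function.Exact (LinearMap.ker (cochainMap D : (α → N) →ₗ[A] (β → N))).subtype
      (cochainMap D) := LinearMap.exact_subtype_ker_map _
  obtain ⟨w, rfl⟩ := (Module.Flat.lTensor_exact B hexact z).1 hu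
  clear hu
  induction w with
  | zero => simp
  | add x y hx hy => simpa only [map_add] using add_mem hx hy
  | tmul b g =>
    have : piRight A B B (fun _ : α ↦ N) ((Submodule.subtype _).lTensor B (b ⊗ₜ[A] g)) =
        b • fun i ↦ (1 : B) ⊗ₜ[A] g.1 i := by
      ext i
      simp [smul_tmul']
    rw [this]
    exact Submodule.smul_mem _ _ (Submodule.subset_span ⟨g.1, g.2, rfl⟩)

end Matrices

namespace MatrixComplex

/-- The base change of a complex of free modules along an algebra. -/
def baseChange (F : MatrixComplex A) : MatrixComplex B where
  ι := F.ι
  D n := (F.D n).map (algebraMap A B)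
  D_mul_D n := by rw [← Matrix.map_mul, F.D_mul_D, Matrix.map_zero _ (map_zero _)]

variable {F : MatrixComplex A}

lemma IsAcyclic.baseChange [Module.Flat A B] (hF : F.IsAcyclic) : (F.baseChange B).IsAcyclic := by
  intro n x hx
  have hexact : Function.Exact (F.D (n + 1)).mulVecLin (F.D n).mulVecLin := fun y ↦
    ⟨fun hy ↦ (hF n y hy).imp fun _ h ↦ h.symm, by
      rintro ⟨z, rfl⟩
      simp [F.D_mul_D]⟩
  obtain ⟨z, rfl⟩ := (piScalarRight A B B (F.ι (n + 1))).surjective x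
  have hz := (mulVec_map_piScalarRight B (F.D n) z).symm.trans hx
  obtain ⟨w, rfl⟩ := (Module.Flat.lTensor_exact B hexact z).1 ((LinearEquiv.map_eq_zero_iff _).1 hz)
  exact ⟨_, (mulVec_map_piScalarRight B (F.D (n + 1)) w).symm⟩

section Coker

variable {N : Type u} [AddCommGroup N] [Module A N] (e : F.coker ≃ₗ[A] N)

/-- The base change of the augmentation `A^ι → N`. -/
noncomputable def baseChangeAugmentation : (F.ι 0 → B) →ₗ[B] B ⊗[A] N :=
  (e.toLinearMap ∘ₗ Submodule.mkQ _).baseChange B ∘ₗ (piScalarRight A B B (F.ι 0)).symm.toLinearMap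

lemma baseChangeAugmentation_surjective :
    Function.Surjective (baseChangeAugmentation B e) := by
  have hsurj : Function.Surjective (e.toLinearMap ∘ₗ Submodule.mkQ _) :=
    e.surjective.comp (Submodule.mkQ_surjective _)
  exact (LinearMap.lTensor_surjective B hsurj).comp (LinearEquiv.surjective _)

lemma exact_baseChangeAugmentation :
    Function.Exact ((F.baseChange B).D 0).mulVecLin (baseChangeAugmentation B e) := by
  have hexact : Function.Exact (F.D 0).mulVecLin (e.toLinearMap ∘ₗ Submodule.mkQ _) := fun x ↦ by
    rw [LinearMap.comp_apply, LinearEquiv.coe_coe, LinearEquiv.map_eq_zero_iff,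
      Submodule.mkQ_apply, Submodule.Quotient.mk_eq_zero]
    rfl
  intro x
  obtain ⟨z, rfl⟩ := (piScalarRight A B B (F.ι 0)).surjective x
  have h := lTensor_exact B hexact (e.surjective.comp (Submodule.mkQ_surjective _)) z
  have hz : baseChangeAugmentation B e (piScalarRight A B B (F.ι 0) z) =
      (e.toLinearMap ∘ₗ Submodule.mkQ _).lTensor B z :=
    congrArg _ (LinearEquiv.symm_apply_apply _ z)
  rw [hz, h]
  constructor
  · rintro ⟨w, rfl⟩
    exact ⟨_, mulVec_map_piScalarRight B (F.D 0) w⟩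
  · rintro ⟨y, hy⟩
    obtain ⟨w, rfl⟩ := (piScalarRight A B B (F.ι 1)).surjective y
    exact ⟨w, (LinearEquiv.injective _)
      ((mulVec_map_piScalarRight B (F.D 0) w).symm.trans hy)⟩

/-- Base change commutes with the formation of the module resolved by a complex. -/
noncomputable def baseChangeCokerEquiv : (F.baseChange B).coker ≃ₗ[B] B ⊗[A] N :=
  Submodule.quotEquivOfEq _ _ (LinearMap.exact_iff.1 (exact_baseChangeAugmentation B e)).symm ≪≫ₗ
    LinearMap.quotKerEquivOfSurjective _ (baseChangeAugmentation_surjective B e)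

lemma baseChangeCokerEquiv_generators (i : F.ι 0) :
    baseChangeCokerEquiv B e ((F.baseChange B).generators i) = 1 ⊗ₜ e (F.generators i) := by
  change (e.toLinearMap ∘ₗ Submodule.mkQ _).baseChange B
    ((piScalarRight A B B (F.ι 0)).symm (Pi.single i 1)) = _
  rw [piScalarRight_symm_single]
  rfl

end Coker

end MatrixComplex

end BaseChange

/-! ### Realizing operators by cocycles over the base ring -/

namespace MatrixComplex

section OneTmul

variable {A : Type u} [CommRing A] (B : Type u) [CommRing B] [Algebra A B]
variable {N : Type u} [AddCommGroup N] [Module A N]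

lemma cochainMap_map_one_tmul {α β : Type} [Fintype α] (D : Matrix α β A) (g : α → N) :
    cochainMap (D.map (algebraMap A B)) (fun i ↦ (1 : B) ⊗ₜ[A] g i) =
      fun j ↦ (1 : B) ⊗ₜ[A] cochainMap D g j := by
  ext j
  simp [cochainMap_apply, tmul_sum]

variable {F : MatrixComplex A} {n : ℕ} {g : F.ι n → N}

lemma one_tmul_mem_cocycles (hg : g ∈ cocycles F.D N n) :
    (fun i ↦ (1 : B) ⊗ₜ[A] g i) ∈ cocycles (F.baseChange B).D (B ⊗[A] N) n := by
  refine (cochainMap_map_one_tmul B (F.D n) g).trans ?_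
  rw [mem_cocycles.1 hg]
  exact funext fun _ ↦ tmul_zero N _

lemma one_tmul_mem_coboundaries (hg : g ∈ coboundaries F.D N n) :
    (fun i ↦ (1 : B) ⊗ₜ[A] g i) ∈ coboundaries (F.baseChange B).D (B ⊗[A] N) n := by
  cases n with
  | zero =>
    obtain rfl : g = 0 := hg
    exact funext fun _ ↦ tmul_zero N _
  | succ n =>
    obtain ⟨w, rfl⟩ := hg
    exact ⟨_, cochainMap_map_one_tmul B (F.D n) w⟩

variable (F N) in
/-- The base change map from the cohomology of `Hom(F, N)` to that of `Hom(B ⊗ F, B ⊗ N)`. -/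
def baseChangeCohomology (n : ℕ) :
    Cohomology F.D N n →ₛₗ[algebraMap A B] Cohomology (F.baseChange B).D (B ⊗[A] N) n :=
  Submodule.mapQ _ _
    { toFun := fun u ↦ ⟨fun i ↦ 1 ⊗ₜ u.1 i, one_tmul_mem_cocycles B u.2⟩
      map_add' := fun u v ↦ Subtype.ext <| funext fun i ↦ tmul_add 1 (u.1 i) (v.1 i)
      map_smul' := fun a u ↦ Subtype.ext <| funext fun i ↦ by
        change (1 : B) ⊗ₜ[A] (a • u.1 i) = algebraMap A B a • (1 : B) ⊗ₜ[A] u.1 i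
        simp }
    fun _ ↦ one_tmul_mem_coboundaries B

lemma baseChangeCohomology_class (hg : g ∈ cocycles F.D N n) :
    F.baseChangeCohomology B N n (cohomologyClass g hg) =
      cohomologyClass (D := (F.baseChange B).D) (fun i ↦ 1 ⊗ₜ g i) (one_tmul_mem_cocycles B hg) :=
  rfl

theorem span_range_baseChangeCohomology [Module.Flat A B] :
    Submodule.span B (Set.range (F.baseChangeCohomology B N n)) = ⊤ := by
  rw [eq_top_iff]
  rintro x -
  obtain ⟨u, hu, rfl⟩ := exists_cohomologyClass_eq x
  have hspan := mem_span_tmul_of_cochainMap_map_eq_zero B (F.D n) hu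
  suffices h : ∃ hu' : u ∈ cocycles (F.baseChange B).D (B ⊗[A] N) n, cohomologyClass u hu' ∈
      Submodule.span B (Set.range (F.baseChangeCohomology B N n)) from h.snd
  clear hu
  induction hspan using Submodule.span_induction with
  | mem u hu =>
    obtain ⟨g, hg, rfl⟩ := hu
    exact ⟨one_tmul_mem_cocycles B hg,
      Submodule.subset_span ⟨_, F.baseChangeCohomology_class B hg⟩⟩
  | zero => exact ⟨zero_mem _, zero_mem _⟩
  | add u v _ _ hu hv =>
    exact ⟨add_mem hu.fst hv.fst, add_mem hu.snd hv.snd⟩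
  | smul b u _ hu =>
    exact ⟨Submodule.smul_mem _ b hu.fst, Submodule.smul_mem _ b hu.snd⟩

end OneTmul

section Realization

variable {B : Type u} [CommRing B] {P : MatrixComplex B} {Y : Type*} [AddCommGroup Y] [Module B Y]

lemma cochainMap_smul_one {ι : Type} [Fintype ι] [DecidableEq ι] (a : B) (u : ι → Y) :
    cochainMap (a • (1 : Matrix ι ι B)) u = a • u := by
  ext j
  simp [cochainMap_apply, Matrix.one_apply]

lemma IsAcyclic.smul_cohomology_eq_zero (hP : P.IsAcyclic) {a : B}
    (ha : a ∈ Module.annihilator B P.coker) {n : ℕ} (x : Cohomology P.D Y (n + 1)) :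
    a • x = 0 := by
  obtain ⟨u, hu, rfl⟩ := exists_cohomologyClass_eq x
  obtain ⟨k, -, hk⟩ := IsChainMap.exists_homotopy_zero hP (E := P)
    (v := fun j ↦ a • (1 : Matrix (P.ι j) (P.ι j) B)) (fun j ↦ by simp) (by
      rw [cochainMap_smul_one]
      exact funext fun i ↦ Module.mem_annihilator.1 ha _)
  rw [← cohomologyClass_smul, cohomologyClass_eq_zero_iff]
  refine ⟨cochainMap (k n) u, ?_⟩
  have h := congrArg (fun M ↦ cochainMap M u) (hk n)
  simp only [cochainMap_add, cochainMap_mul, mem_cocycles.1 hu, map_zero, add_zero] at h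
  exact h.symm.trans (cochainMap_smul_one a u)

variable {A : Type u} [CommRing A] [Algebra A B] {N : Type u} [AddCommGroup N] [Module A N]
variable {F : MatrixComplex A} {c : ℕ} {χ : CohomologyOperators B c}

theorem exists_forall_pullbackCohomology_eq_baseChangeCohomology [Module.Flat A B]
    (hP : P.IsAcyclic)
    (hres : ∀ b : B, ∃ a : A, b - algebraMap A B a ∈ Module.annihilator B P.coker) {n : ℕ}
    (z : Cohomology (F.baseChange B).D (B ⊗[A] N) n) :
    ∃ y : Cohomology F.D N n, ∀ m v (hv : IsChainMap (F.baseChange B) (P.shift m).tail v),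
      hv.pullbackCohomology (B ⊗[A] N) n z =
        hv.pullbackCohomology (B ⊗[A] N) n (F.baseChangeCohomology B N n y) := by
  have hz : z ∈ Submodule.span B (Set.range (F.baseChangeCohomology B N n)) := by
    rw [span_range_baseChangeCohomology]
    trivial
  induction hz using Submodule.span_induction with
  | mem z hz =>
    obtain ⟨y, rfl⟩ := hz
    exact ⟨y, fun _ _ _ ↦ rfl⟩
  | zero => exact ⟨0, fun m v hv ↦ by rw [map_zero, map_zero, map_zero]⟩
  | add z z' _ _ h h' =>
    obtain ⟨y, h⟩ := h
    obtain ⟨y', h'⟩ := h'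
    exact ⟨y + y', fun m v hv ↦ by rw [map_add, map_add, map_add, h, h']⟩
  | smul b z _ h =>
    obtain ⟨y, h⟩ := h
    obtain ⟨a, ha⟩ := hres b
    refine ⟨a • y, fun m v hv ↦ ?_⟩
    rw [(F.baseChangeCohomology B N n).map_smulₛₗ, LinearMap.map_smul,
      LinearMap.map_smul, ← h, ← sub_eq_zero, ← sub_smul]
    exact hP.smul_cohomology_eq_zero ha _

theorem exists_forall_smul_of_pullbackCohomology_eq [Module.Flat A B] (hP : P.IsAcyclic)
    (hres : ∀ b : B, ∃ a : A, b - algebraMap A B a ∈ Module.annihilator B P.coker)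
    {p : MvPolynomial (Fin c) B} {e : ℕ} (hp : p.IsHomogeneous e) {n d : ℕ} (hd : n + 2 * e = d)
    (x : Cohomology (F.baseChange B).D (B ⊗[A] N) n) :
    ∃ y : Cohomology F.D N d, ∀ m v (hv : IsChainMap (F.baseChange B) (P.shift m).tail v),
      p • (P.action χ (B ⊗[A] N)).of (m + (n + 1)) (hv.pullbackCohomology (B ⊗[A] N) n x) =
        (P.action χ (B ⊗[A] N)).of (m + (d + 1))
          (hv.pullbackCohomology (B ⊗[A] N) d (F.baseChangeCohomology B N d y)) := by
  subst hd
  obtain ⟨z, hz⟩ :=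
    ((F.baseChange B).action χ (B ⊗[A] N)).exists_smul_of_eq_of_isHomogeneous hp n x
  obtain ⟨y, hy⟩ := exists_forall_pullbackCohomology_eq_baseChangeCohomology hP hres z
  refine ⟨y, fun m v hv ↦ ?_⟩
  rw [← hv.pullback_of χ, ← map_smul, hz, hv.pullback_of, hy]

theorem exists_isChainMap_pullbackCohomology_eq {F : MatrixComplex B} (hF : F.IsAcyclic)
    (E : F.coker ≃ₗ[B] Y) {m : ℕ} (x : Cohomology P.D Y (m + 1)) :
    ∃ v, ∃ hv : IsChainMap F (P.shift m).tail v, x = hv.pullbackCohomology Y 0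
      (cohomologyClass _ (comp_mem_cocycles E.toLinearMap F.generators_mem_cocycles)) := by
  obtain ⟨u, hu, rfl⟩ := exists_cohomologyClass_eq x
  obtain ⟨v₀, hv₀⟩ := exists_cochainMap_cokernelGenerators_eq (F.D 0) fun i ↦ E.symm (u i)
  have hcocycle : cochainMap (P.D (m + 1)) (cochainMap v₀ F.generators) = 0 := by
    rw [hv₀]
    exact comp_mem_cocycles E.symm.toLinearMap hu
  obtain ⟨v, hv, rfl⟩ := hF.exists_isChainMap (E := (P.shift m).tail) v₀ hcocycle
  refine ⟨v, hv, ?_⟩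
  rw [hv.pullbackCohomology_class]
  congr 1
  exact ((cochainMap_comp_linearMap E.toLinearMap (v 0) F.generators).trans <| funext fun j ↦
    (congrArg E (congrFun hv₀ j)).trans (E.apply_symm_apply _)).symm

end Realization

/-! ### Killing a filter-regular operator -/

section Dual

variable {B : Type u} [CommRing B] {c : ℕ} {χ : CohomologyOperators B c} {P : MatrixComplex B}

/-- Exactness of the dual complex `Hom(P, R)` above degree `n₀`, in terms of rows. -/
def DualExactAbove (P : MatrixComplex B) (n₀ : ℕ) : Prop :=
  ∀ n, n₀ ≤ n → ∀ {σ : Type} (W : Matrix σ (P.ι (n + 1)) B), W * P.D (n + 1) = 0 →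
    ∃ W' : Matrix σ (P.ι n) B, W = W' * P.D n

-- A cocycle with values in `B` is a chain map from `P` to the complex `B` concentrated in one
-- degree, whose own operators vanish.
lemma action_self_op_eq_zero (i : Fin c) (n : ℕ) (x : Cohomology P.D B n) :
    (P.action χ B).op i n x = 0 := by
  obtain ⟨u, hu, rfl⟩ := exists_cohomologyClass_eq x
  have hrow : (Matrix.of fun _ j ↦ u j : Matrix Unit (P.ι n) B) * P.D n = 0 := by
    ext _ j
    have huj := congrFun (mem_cocycles.1 hu) j
    rw [cochainMap_apply] at huj
    simpa [Matrix.mul_apply, mul_comm] using huj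
  obtain ⟨k₀, k₁, hk⟩ := χ.exists_homotopy i (α := Unit) (β := Empty) (γ := Empty)
    (F₀ := 0) (F₁ := 0) (G₀ := P.D n) (G₁ := P.D (n + 1)) (p₀ := Matrix.of fun _ j ↦ u j)
    (p₁ := 0) (p₂ := 0) (by simp) (P.D_mul_D n) (by rw [hrow, Matrix.zero_mul])
    (by ext x; exact x.elim)
  rw [Matrix.mul_zero, sub_zero, Matrix.zero_mul, add_zero] at hk
  rw [action_op_class, cohomologyClass_eq_zero_iff]
  refine ⟨fun j ↦ k₀ () j, funext fun j ↦ ?_⟩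
  have hkj := congrFun (congrFun hk ()) j
  simp only [Matrix.mul_apply, Matrix.of_apply] at hkj
  simpa only [cochainMap_apply, smul_eq_mul, mul_comm] using hkj.symm

theorem IsAcyclic.exists_dualExactAbove (hP : P.IsAcyclic) (hχ : χ.GeneratesExt) :
    ∃ n₀, P.DualExactAbove n₀ := by
  obtain ⟨n₀, h⟩ := hχ P.ι P.D P.D_mul_D hP B
  refine ⟨n₀ + 1, fun n hn σ W hW ↦ ?_⟩
  obtain ⟨m, rfl⟩ : ∃ m, n = m + 1 := ⟨n - 1, by lia⟩
  have hzero (x : Cohomology P.D B (m + 2)) : x = 0 := by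
    obtain ⟨y, rfl⟩ := h m (by lia) x
    exact Finset.sum_eq_zero fun i _ ↦ action_self_op_eq_zero i m (y i)
  have hrow (s : σ) : ∃ w : P.ι (m + 1) → B, cochainMap (P.D (m + 1)) w = W s := by
    refine (cohomologyClass_eq_zero_iff (hu := ?_)).1 (hzero _)
    refine funext fun j ↦ Eq.trans ?_ (congrFun (congrFun hW s) j)
    simp [cochainMap_apply, Matrix.mul_apply, mul_comm]
  choose W' hW' using hrow
  refine ⟨Matrix.of W', Matrix.ext fun s j ↦ (congrFun (hW' s) j).symm.trans ?_⟩
  simp [cochainMap_apply, Matrix.mul_apply, mul_comm]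

theorem IsAcyclic.exists_isChainMap_of_mul_eq {F : MatrixComplex B} (hF : F.IsAcyclic) {n₀ m δ : ℕ}
    (hP : P.DualExactAbove n₀) (hm : n₀ ≤ m) {w : Matrix (F.ι δ) (P.ι (m + (δ + 1))) B}
    {s : Matrix (F.ι (δ + 1)) (P.ι (m + (δ + 1 + 1))) B}
    (h : F.D δ * s = w * P.D (m + (δ + 1))) :
    ∃ v, IsChainMap F (P.shift m).tail v ∧ v δ = w ∧ v (δ + 1) = s := by
  obtain ⟨v, hw, hs, hv⟩ := exists_seq_of_rel δ
    (T := fun j ↦ Matrix (F.ι j) (P.ι (m + (j + 1))) B)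
    (fun j a b ↦ F.D j * b = a * P.D (m + (j + 1)))
    (fun j a b hab ↦ by
      have hcomp : P.D (m + (j + 1)) * P.D (m + (j + 1 + 1)) = 0 := P.D_mul_D (m + (j + 1))
      obtain ⟨c, hc⟩ := exists_eq_mul_of_mul_eq_zero (hF j) (W := b * P.D (m + (j + 1 + 1))) (by
        rw [← Matrix.mul_assoc, hab, Matrix.mul_assoc, hcomp, Matrix.mul_zero])
      exact ⟨c, hc.symm⟩)
    (fun j _ a b hab ↦ hP (m + (j + 1)) (by lia) (F.D j * a) <| by
      have hab : F.D (j + 1) * b = a * P.D (m + (j + 1) + 1) := hab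
      rw [Matrix.mul_assoc, ← hab, ← Matrix.mul_assoc, F.D_mul_D, Matrix.zero_mul]) h
  exact ⟨v, hv, hw, hs⟩

end Dual

section ConeInclusion

variable {B : Type u} [CommRing B] {P F : MatrixComplex B} {δ : ℕ}
variable {G₀ : Matrix (F.ι 0) (F.ι (δ + 1)) B}
variable {M : Matrix (F.ι 0 ⊕ F.ι δ) (F.ι 1 ⊕ F.ι (δ + 1)) B}
variable (hM : M = Matrix.fromBlocks (F.D 0) G₀ 0 (-F.D δ))

include hM in
lemma fromRows_mul_D_eq_mul_fromRows :
    (Matrix.fromRows 1 0 : Matrix (F.ι 0 ⊕ F.ι δ) (F.ι 0) B) * F.D 0 =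
      M * (Matrix.fromRows 1 0 : Matrix (F.ι 1 ⊕ F.ι (δ + 1)) (F.ι 1) B) := by
  rw [hM, Matrix.fromRows_mul, Matrix.fromBlocks_mul_fromRows]
  simp

/-- The inclusion of the module resolved by `F` into the one resolved by a mapping cone, where `M`
is the first differential of the cone. -/
noncomputable def coneInclusion : F.coker →ₗ[B] MatrixCokernel M :=
  cokernelMap _ _ (fromRows_mul_D_eq_mul_fromRows hM)

lemma coneInclusion_cochainMap {σ : Type} (U : Matrix (F.ι 0) σ B) :
    (fun j ↦ coneInclusion hM (cochainMap U F.generators j)) =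
      cochainMap (Matrix.fromRows U 0) (cokernelGenerators M) := by
  refine (cokernelMap_cochainMap _ _ (fromRows_mul_D_eq_mul_fromRows hM) U).trans ?_
  rw [Matrix.fromRows_mul, Matrix.one_mul, Matrix.zero_mul]

lemma coneInclusion_mem_coboundaries {m : ℕ} {v : ∀ j, Matrix (F.ι j) (P.ι (m + (j + 1))) B}
    (hv : IsChainMap F (P.shift m).tail v) :
    (fun j ↦ coneInclusion hM (cochainMap (G₀ * v (δ + 1)) F.generators j)) ∈
      coboundaries P.D (MatrixCokernel M) (m + (δ + 1 + 1)) := by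
  have h : cochainMap (P.D (m + (δ + 1)))
      (cochainMap (Matrix.fromRows 0 (v δ)) (cokernelGenerators M)) =
        fun j ↦ coneInclusion hM (cochainMap (G₀ * v (δ + 1)) F.generators j) := by
    rw [coneInclusion_cochainMap, ← cochainMap_mul, cochainMap_cokernelGenerators_eq_iff]
    refine ⟨-Matrix.fromRows 0 (v (δ + 1)), ?_⟩
    rw [hM, Matrix.mul_neg, Matrix.fromBlocks_mul_fromRows, Matrix.fromRows_mul, ← hv.mul_comm]
    ext (i | i) j <;> simp
  exact ⟨_, h⟩

include hM in
lemma exists_cochainMap_fromRows_eq {n : ℕ} {y : P.ι n → MatrixCokernel M}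
    (hy : y ∈ cocycles P.D (MatrixCokernel M) n) :
    ∃ (a : Matrix (F.ι 0) (P.ι n) B) (w : Matrix (F.ι δ) (P.ι n) B)
      (s₁ : Matrix (F.ι 1) (P.ι (n + 1)) B) (s₂ : Matrix (F.ι (δ + 1)) (P.ι (n + 1)) B),
      cochainMap (Matrix.fromRows a w) (cokernelGenerators M) = y ∧
        a * P.D n = F.D 0 * s₁ + G₀ * s₂ ∧ w * P.D n = -(F.D δ * s₂) := by
  obtain ⟨U, rfl⟩ := exists_cochainMap_cokernelGenerators_eq M y
  rw [mem_cocycles, ← cochainMap_mul, cochainMap_cokernelGenerators_eq_zero_iff] at hy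
  obtain ⟨S, hS⟩ := hy
  refine ⟨U.toRows₁, U.toRows₂, S.toRows₁, S.toRows₂, by rw [Matrix.fromRows_toRows], ?_⟩
  rw [← U.fromRows_toRows, ← S.fromRows_toRows, hM, Matrix.fromBlocks_mul_fromRows,
    Matrix.fromRows_mul] at hS
  simpa only [Matrix.zero_mul, zero_add, Matrix.neg_mul] using Matrix.fromRows_inj hS

variable {m : ℕ} {a : Matrix (F.ι 0) (P.ι (m + (δ + 1))) B}
variable {s₁ : Matrix (F.ι 1) (P.ι (m + (δ + 1) + 1)) B}
variable {s₂ : Matrix (F.ι (δ + 1)) (P.ι (m + (δ + 1) + 1)) B}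

lemma cochainMap_mem_coboundaries_of_mul_eq (ha : a * P.D (m + (δ + 1)) = F.D 0 * s₁ + G₀ * s₂) :
    cochainMap (G₀ * (-s₂)) F.generators ∈ coboundaries P.D F.coker (m + (δ + 1) + 1) := by
  refine ⟨-cochainMap a F.generators, ?_⟩
  rw [map_neg, ← cochainMap_mul, ← cochainMap_neg, cochainMap_cokernelGenerators_eq_iff]
  refine ⟨-s₁, ?_⟩
  rw [ha, Matrix.mul_neg, Matrix.mul_neg]
  abel

lemma exists_mapCoefficients_coneInclusion_eq {G₁ : Matrix (F.ι 1) (F.ι (δ + 1 + 1)) B}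
    (hG : F.D 0 * G₁ = G₀ * F.D (δ + 1)) (ha : a * P.D (m + (δ + 1)) = F.D 0 * s₁ + G₀ * s₂)
    {w : Matrix (F.ι δ) (P.ι (m + (δ + 1))) B} {k₀ : Matrix (F.ι δ) (P.ι (m + δ)) B}
    {k₁ : Matrix (F.ι (δ + 1)) (P.ι (m + (δ + 1))) B}
    {k₂ : Matrix (F.ι (δ + 1 + 1)) (P.ι (m + (δ + 1) + 1)) B}
    (hw : w = k₀ * P.D (m + δ) + F.D δ * k₁)
    (hs : -s₂ = k₁ * P.D (m + (δ + 1)) + F.D (δ + 1) * k₂)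
    (hy : cochainMap (Matrix.fromRows a w) (cokernelGenerators M) ∈
      cocycles P.D (MatrixCokernel M) (m + (δ + 1))) :
    ∃ x, mapCoefficients P (coneInclusion hM) (m + (δ + 1)) x = cohomologyClass _ hy := by
  have hmul : (a + G₀ * k₁) * P.D (m + (δ + 1)) = F.D 0 * (s₁ - G₁ * k₂) := by
    rw [Matrix.add_mul, ha, Matrix.mul_assoc, ← sub_eq_of_eq_add hs, Matrix.mul_sub,
      Matrix.mul_sub, Matrix.mul_neg, ← Matrix.mul_assoc, ← Matrix.mul_assoc, hG]
    abel
  have hx : cochainMap (a + G₀ * k₁) F.generators ∈ cocycles P.D F.coker (m + (δ + 1)) := by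
    rw [mem_cocycles, ← cochainMap_mul]
    exact cochainMap_cokernelGenerators_eq_zero_iff.2 ⟨_, hmul⟩
  refine ⟨cohomologyClass _ hx, (mapCoefficients_class _ _ hx).trans (cohomologyClass_eq_iff.2 ?_)⟩
  have hdiff : cochainMap (P.D (m + δ))
      (-cochainMap (Matrix.fromRows 0 k₀) (cokernelGenerators M)) =
        (fun i ↦ coneInclusion hM (cochainMap (a + G₀ * k₁) F.generators i)) -
          cochainMap (Matrix.fromRows a w) (cokernelGenerators M) := by
    rw [coneInclusion_cochainMap, map_neg, ← cochainMap_mul, ← cochainMap_neg, ← cochainMap_sub,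
      cochainMap_cokernelGenerators_eq_iff]
    refine ⟨-Matrix.fromRows 0 k₁, ?_⟩
    rw [hM, Matrix.mul_neg, Matrix.fromBlocks_mul_fromRows, Matrix.fromRows_mul, hw]
    ext (i | i) j <;> simp [Matrix.neg_mul]
  exact ⟨_, hdiff⟩

theorem surjective_mapCoefficients_coneInclusion (hF : F.IsAcyclic) {n₀ n₁ : ℕ}
    (hP : P.DualExactAbove n₀) {G₁ : Matrix (F.ι 1) (F.ι (δ + 1 + 1)) B}
    (hG : F.D 0 * G₁ = G₀ * F.D (δ + 1))
    (hinj : ∀ m, n₁ ≤ m → ∀ v, IsChainMap F (P.shift m).tail v →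
      cochainMap (G₀ * v (δ + 1)) F.generators ∈ coboundaries P.D F.coker (m + (δ + 1 + 1)) →
        cochainMap (v 0) F.generators ∈ coboundaries P.D F.coker (m + 1))
    {n : ℕ} (hn : n₀ + n₁ + (δ + 1) ≤ n) :
    Function.Surjective (mapCoefficients P (coneInclusion hM) n) := by
  intro y
  obtain ⟨m, rfl⟩ : ∃ m, n = m + (δ + 1) := ⟨n - (δ + 1), by lia⟩
  obtain ⟨y, hy, rfl⟩ := exists_cohomologyClass_eq y
  obtain ⟨a, w, s₁, s₂, rfl, ha, hw⟩ := exists_cochainMap_fromRows_eq hM hy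
  obtain ⟨v, hv, hvw, hvs⟩ := hF.exists_isChainMap_of_mul_eq hP (show n₀ ≤ m by lia)
    (w := w) (s := -s₂) (by rw [Matrix.mul_neg]; exact hw.symm)
  obtain ⟨w', hw'⟩ := hinj m (by lia) v hv (by
    rw [hvs]
    exact cochainMap_mem_coboundaries_of_mul_eq ha)
  obtain ⟨k, hk⟩ := IsChainMap.exists_homotopy_of_coboundary (E := P.shift m) hF hv w' hw'.symm
  exact exists_mapCoefficients_coneInclusion_eq hM hG ha (hvw.symm.trans (hk δ))
    (hvs.symm.trans (hk (δ + 1))) hy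

end ConeInclusion

section EventuallySurjective

variable {B : Type u} [CommRing B] {P : MatrixComplex B}
variable {Y Y' Y'' : Type*} [AddCommGroup Y] [Module B Y] [AddCommGroup Y'] [Module B Y']
  [AddCommGroup Y''] [Module B Y'']

variable (P) in
/-- A linear map of coefficients is eventually surjective if it induces surjections on the
cohomology of `Hom(P, -)` in high degrees. -/
def EventuallySurjective (f : Y →ₗ[B] Y') : Prop :=
  ∃ n₀, ∀ n, n₀ ≤ n → Function.Surjective (mapCoefficients P f n)

lemma EventuallySurjective.comp {f : Y →ₗ[B] Y'} {g : Y' →ₗ[B] Y''}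
    (hg : EventuallySurjective P g) (hf : EventuallySurjective P f) :
    EventuallySurjective P (g ∘ₗ f) := by
  obtain ⟨m, hm⟩ := hg
  obtain ⟨n, hn⟩ := hf
  refine ⟨m + n, fun k hk x ↦ ?_⟩
  obtain ⟨y, rfl⟩ := hm k (by lia) x
  obtain ⟨z, rfl⟩ := hn k (by lia) y
  exact ⟨z, mapCoefficients_comp f g k z⟩

lemma eventuallySurjective_of_comp_eq_id {f : Y →ₗ[B] Y'} {g : Y' →ₗ[B] Y}
    (h : f ∘ₗ g = LinearMap.id) : EventuallySurjective P f :=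
  ⟨0, fun n _ x ↦ ⟨mapCoefficients P g n x, by
    rw [← mapCoefficients_comp, h, mapCoefficients_id]⟩⟩

lemma eventuallySurjective_equiv (e : Y ≃ₗ[B] Y') : EventuallySurjective P e.toLinearMap :=
  eventuallySurjective_of_comp_eq_id e.comp_symm

end EventuallySurjective

section Realization

variable {A : Type u} [CommRing A] {B : Type u} [CommRing B] [Algebra A B]
variable {F : MatrixComplex A} {δ : ℕ} {G : ∀ n, Matrix (F.ι n) (F.ι (δ + (n + 1))) A}

variable (B) in
lemma IsChainMap.baseChange (hG : IsChainMap F (F.shift δ).tail G) :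
    IsChainMap (F.baseChange B) ((F.baseChange B).shift δ).tail
      fun n ↦ (G n).map (algebraMap A B) := fun n ↦
  Matrix.map_mul.symm.trans <| (congrArg (Matrix.map · (algebraMap A B)) (hG n)).trans
    Matrix.map_mul

variable {P : MatrixComplex B} {c : ℕ} {χ : CohomologyOperators B c}

/-- The class with values in the module resolved by `F` which a chain map of degree `m + 1` to `F`
represents. -/
abbrev IsChainMap.extClass {F P : MatrixComplex B} {m : ℕ}
    {v : ∀ j, Matrix (F.ι j) (P.ι (m + (j + 1))) B} (hv : IsChainMap F (P.shift m).tail v) :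
    Cohomology P.D F.coker (m + 1) :=
  hv.pullbackCohomology F.coker 0 (cohomologyClass F.generators F.generators_mem_cocycles)

lemma IsChainMap.mapCoefficients_pullbackCohomology {F P : MatrixComplex B} {m : ℕ}
    {v : ∀ j, Matrix (F.ι j) (P.ι (m + (j + 1))) B} (hv : IsChainMap F (P.shift m).tail v)
    {Y Y' : Type*} [AddCommGroup Y] [Module B Y] [AddCommGroup Y'] [Module B Y'] (f : Y →ₗ[B] Y')
    (n : ℕ) (x : Cohomology F.D Y n) :
    mapCoefficients P f (m + (n + 1)) (hv.pullbackCohomology Y n x) =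
      hv.pullbackCohomology Y' n (mapCoefficients F f n x) := by
  obtain ⟨u, hu, rfl⟩ := exists_cohomologyClass_eq x
  exact congrArg (Submodule.Quotient.mk (p := _)) <| Subtype.ext
    (cochainMap_comp_linearMap f (v n) u).symm

variable (B) in
lemma IsChainMap.mapCoefficients_baseChange (hG : IsChainMap F (F.shift δ).tail G)
    {N : Type u} [AddCommGroup N] [Module A N] (e : F.coker ≃ₗ[A] N) :
    mapCoefficients (F.baseChange B) (baseChangeCokerEquiv B e).toLinearMap (δ + 1)
        (hG.baseChange B).extClass =
      F.baseChangeCohomology B N (δ + 1) (hG.pullbackCohomology N 0 (cohomologyClass _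
        (comp_mem_cocycles e.toLinearMap F.generators_mem_cocycles))) := by
  refine congrArg (Submodule.Quotient.mk (p := _)) <| Subtype.ext ?_
  refine (cochainMap_comp_linearMap (baseChangeCokerEquiv B e).toLinearMap
    ((G 0).map (algebraMap A B)) (F.baseChange B).generators).symm.trans ?_
  refine Eq.trans ?_ (cochainMap_map_one_tmul B (G 0) _)
  exact congrArg (cochainMap _) (funext fun i ↦ baseChangeCokerEquiv_generators B e i)

theorem exists_isChainMap_forall_smul_pullback_eq [Module.Flat A B] (χ : CohomologyOperators B c)
    (hF : F.IsAcyclic) (hP : P.IsAcyclic)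
    (hres : ∀ b : B, ∃ a : A, b - algebraMap A B a ∈ Module.annihilator B P.coker)
    {p : MvPolynomial (Fin c) B} {e : ℕ} (hp : p.IsHomogeneous e) (hδ : 2 * e = δ + 1) :
    ∃ G, ∃ hG : IsChainMap F (F.shift δ).tail G,
      ∀ m v (hv : IsChainMap (F.baseChange B) (P.shift m).tail v),
        p • (P.action χ (F.baseChange B).coker).of (m + 1) hv.extClass =
          (P.action χ (F.baseChange B).coker).of (m + (δ + 1 + 1))
            (hv.pullbackCohomology (F.baseChange B).coker (δ + 1) (hG.baseChange B).extClass) := by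
  let ε := baseChangeCokerEquiv B (LinearEquiv.refl A F.coker)
  have hε {n : ℕ} (x : Cohomology P.D (F.baseChange B).coker n) :
      mapCoefficients P ε.symm.toLinearMap n (mapCoefficients P ε.toLinearMap n x) = x := by
    rw [← mapCoefficients_comp, ε.symm_comp, mapCoefficients_id]
  obtain ⟨y, hy⟩ := exists_forall_smul_of_pullbackCohomology_eq (F := F) (N := F.coker) (χ := χ) hP
    hres hp (by rw [hδ, zero_add]) (mapCoefficients (F.baseChange B) ε.toLinearMap 0
      (cohomologyClass _ (F.baseChange B).generators_mem_cocycles))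
  obtain ⟨G, hG, rfl⟩ := exists_isChainMap_pullbackCohomology_eq hF (LinearEquiv.refl A F.coker) y
  refine ⟨G, hG, fun m v hv ↦ ?_⟩
  have h := congrArg (pushforward χ ε.symm.toLinearMap) (hy m v hv)
  rw [← hG.mapCoefficients_baseChange B, map_smul, pushforward_of, pushforward_of,
    ← hv.mapCoefficients_pullbackCohomology, hε] at h
  refine h.trans (congrArg _ ?_)
  refine Eq.trans (congrArg _ ?_) (hε _)
  exact (hv.mapCoefficients_pullbackCohomology _ _ _).symm

end Realization

section RealizedCone

variable {B : Type u} [CommRing B] {P F : MatrixComplex B} {δ : ℕ}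
variable {G : ∀ n, Matrix (F.ι n) (F.ι (δ + (n + 1))) B} {hG : IsChainMap F (F.shift δ).tail G}
variable {c : ℕ} {χ : CohomologyOperators B c} {p : MvPolynomial (Fin c) B}
variable (hp : ∀ m v (hv : IsChainMap F (P.shift m).tail v),
  p • (P.action χ F.coker).of (m + 1) hv.extClass =
    (P.action χ F.coker).of (m + (δ + 1 + 1)) (hv.pullbackCohomology F.coker (δ + 1) hG.extClass))
variable {M : Matrix (F.ι 0 ⊕ F.ι δ) (F.ι 1 ⊕ F.ι (δ + 1)) B}
variable (hM : M = Matrix.fromBlocks (F.D 0) (G 0) 0 (-F.D δ))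

include hp

theorem eventuallySurjective_coneInclusion (hF : F.IsAcyclic) (hP : P.IsAcyclic)
    (hχ : χ.GeneratesExt) {n₁ : ℕ} (hreg : ∀ n, n₁ ≤ n → ∀ x : Cohomology P.D F.coker n,
      p • (P.action χ F.coker).of n x = 0 → x = 0) :
    EventuallySurjective P (coneInclusion hM) := by
  obtain ⟨n₀, hn₀⟩ := hP.exists_dualExactAbove hχ
  refine ⟨n₀ + n₁ + (δ + 1), fun n hn ↦ surjective_mapCoefficients_coneInclusion hM hF hn₀
    (hG.mul_comm 0) (fun m hm v hv hb ↦ ?_) hn⟩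
  have hcomp : cochainMap (v (δ + 1)) (cochainMap (G 0) F.generators) ∈
      coboundaries P.D F.coker (m + (δ + 1 + 1)) :=
    cochainMap_mul (G 0) (v (δ + 1)) F.generators ▸ hb
  have hpull : hv.pullbackCohomology F.coker (δ + 1) hG.extClass = 0 :=
    cohomologyClass_eq_zero_iff.2 hcomp
  have hzero : hv.extClass = 0 := hreg _ (by lia) _ (by rw [hp m v hv, hpull, map_zero])
  exact cohomologyClass_eq_zero_iff.1 hzero

theorem pushforward_coneInclusion_smul_eq_zero (hF : F.IsAcyclic) {m : ℕ}
    (x : Cohomology P.D F.coker (m + 1)) :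
    pushforward χ (coneInclusion hM) (p • (P.action χ F.coker).of (m + 1) x) = 0 := by
  obtain ⟨v, hv, rfl⟩ := exists_isChainMap_pullbackCohomology_eq hF (LinearEquiv.refl B F.coker) x
  have hzero : mapCoefficients P (coneInclusion hM) (m + (δ + 1 + 1))
      (hv.pullbackCohomology F.coker (δ + 1) hG.extClass) = 0 := by
    have hcomp : (fun j ↦ coneInclusion hM (cochainMap (v (δ + 1))
        (cochainMap (G 0) F.generators) j)) ∈
          coboundaries P.D (MatrixCokernel M) (m + (δ + 1 + 1)) :=
      cochainMap_mul (G 0) (v (δ + 1)) F.generators ▸ coneInclusion_mem_coboundaries hM hv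
    exact cohomologyClass_eq_zero_iff.2 hcomp
  refine (congrArg (pushforward χ (coneInclusion hM)) (hp m v hv)).trans ?_
  rw [pushforward_of, hzero, map_zero]

end RealizedCone

section BaseChangedCone

variable {A : Type u} [CommRing A] {B : Type u} [CommRing B] [Algebra A B]
variable {F : MatrixComplex A} {δ : ℕ} {G : ∀ n, Matrix (F.ι n) (F.ι (δ + (n + 1))) A}
variable (hG : IsChainMap F (F.shift δ).tail G)

lemma coneInclusion_generators {G₀ : Matrix (F.ι 0) (F.ι (δ + 1)) A}
    {M : Matrix (F.ι 0 ⊕ F.ι δ) (F.ι 1 ⊕ F.ι (δ + 1)) A}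
    (hM : M = Matrix.fromBlocks (F.D 0) G₀ 0 (-F.D δ)) (i : F.ι 0) :
    coneInclusion hM (F.generators i) = cokernelGenerators M (Sum.inl i) := by
  have h := congrFun (coneInclusion_cochainMap hM 1) i
  rw [cochainMap_one] at h
  refine h.trans ?_
  simp [cochainMap_apply, Matrix.one_apply]

variable (B) in
lemma baseChange_cone_D_zero : ((F.cone δ G hG).baseChange B).D 0 =
    Matrix.fromBlocks ((F.baseChange B).D 0) ((G 0).map (algebraMap A B)) 0
      (-(F.baseChange B).D δ) := by
  refine (Matrix.fromBlocks_map _ _ _ _ _).trans ?_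
  congr 1
  · exact Matrix.map_zero _ (map_zero _)
  · exact Matrix.ext fun i j ↦ map_neg (algebraMap A B) _

variable (B) in
lemma baseChange_coneInclusion {N : Type u} [AddCommGroup N] [Module A N] (e : F.coker ≃ₗ[A] N) :
    (coneInclusion (M := (F.cone δ G hG).D 0) rfl ∘ₗ e.symm.toLinearMap).baseChange B ∘ₗ
        (baseChangeCokerEquiv B e).toLinearMap =
      (baseChangeCokerEquiv B (LinearEquiv.refl A (F.cone δ G hG).coker)).toLinearMap ∘ₗ
        coneInclusion (baseChange_cone_D_zero B hG) := by
  ext i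
  let ι : F.coker →ₗ[A] (F.cone δ G hG).coker := coneInclusion rfl
  refine (congrArg ((ι ∘ₗ e.symm.toLinearMap).baseChange B)
    (baseChangeCokerEquiv_generators B e i)).trans ?_
  refine Eq.trans ?_ (congrArg (baseChangeCokerEquiv B (LinearEquiv.refl A (F.cone δ G hG).coker))
    (coneInclusion_generators (baseChange_cone_D_zero B hG) i)).symm
  refine Eq.trans ?_ (baseChangeCokerEquiv_generators B (LinearEquiv.refl A (F.cone δ G hG).coker)
    (Sum.inl i)).symm
  refine congrArg (1 ⊗ₜ ·) ((congrArg ι (e.symm_apply_apply _)).trans ?_)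
  exact coneInclusion_generators (M := (F.cone δ G hG).D 0) rfl i

end BaseChangedCone

section KillsRegular

variable {B : Type u} [CommRing B] {P : MatrixComplex B} {c : ℕ} {χ : CohomologyOperators B c}

variable (χ P) in
/-- In high degrees multiplication by `θ` is injective on the cohomology of `Hom(P, Y)`, and its
image is killed by the linear map `g`. -/
def KillsRegular {Y Y' : Type*} [AddCommGroup Y] [Module B Y] [AddCommGroup Y'] [Module B Y']
    (θ : MvPolynomial (Fin c) B) (g : Y →ₗ[B] Y') : Prop :=
  ∃ n₀, ∀ n, n₀ ≤ n → ∀ x : Cohomology P.D Y n,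
    pushforward χ g (θ • (P.action χ Y).of n x) = 0 ∧ (θ • (P.action χ Y).of n x = 0 → x = 0)

lemma KillsRegular.comp_equiv {Y Y' Z Z' : Type*} [AddCommGroup Y] [Module B Y]
    [AddCommGroup Y'] [Module B Y'] [AddCommGroup Z] [Module B Z] [AddCommGroup Z'] [Module B Z']
    {θ : MvPolynomial (Fin c) B} {g : Y →ₗ[B] Y'} (hg : KillsRegular P χ θ g) (φ : Y ≃ₗ[B] Z)
    (φ' : Y' →ₗ[B] Z') : KillsRegular P χ θ (φ' ∘ₗ g ∘ₗ φ.symm.toLinearMap) := by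
  obtain ⟨n₀, h⟩ := hg
  refine ⟨n₀, fun n hn x ↦ ?_⟩
  obtain ⟨hkill, hreg⟩ := h n hn (mapCoefficients P φ.symm.toLinearMap n x)
  rw [← pushforward_of, ← map_smul] at hkill hreg
  refine ⟨by rw [pushforward_comp, pushforward_comp, hkill, map_zero], fun hx ↦ ?_⟩
  have hzero := hreg (by rw [hx, map_zero])
  rw [← mapCoefficients_id n x, ← φ.comp_symm, mapCoefficients_comp, hzero, map_zero]

variable {A : Type u} [CommRing A] [Algebra A B] [Module.Flat A B] [IsNoetherianRing B]
variable {F : MatrixComplex A}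

theorem exists_killsRegular_coneInclusion (hF : F.IsAcyclic) (hP : P.IsAcyclic)
    (hχ : χ.GeneratesExt)
    (hres : ∀ b : B, ∃ a : A, b - algebraMap A B a ∈ Module.annihilator B P.coker) :
    ∃ (δ : ℕ) (G : ∀ n, Matrix (F.ι n) (F.ι (δ + (n + 1))) A)
      (hG : IsChainMap F (F.shift δ).tail G) (θ : MvPolynomial (Fin c) B),
      KillsRegular P χ θ (coneInclusion (F := F.baseChange B) (baseChange_cone_D_zero B hG)) ∧
        EventuallySurjective P
          (coneInclusion (F := F.baseChange B) (baseChange_cone_D_zero B hG)) := by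
  have hgen := hχ P.ι P.D P.D_mul_D hP (F.baseChange B).coker
  have hfin := hgen.finite_total
  obtain ⟨e, θ, n₀, he, hθ, hreg⟩ := (P.action χ (F.baseChange B).coker).exists_filterRegular
  obtain ⟨δ, hδ⟩ : ∃ δ, 2 * e = δ + 1 := ⟨2 * e - 1, by lia⟩
  obtain ⟨G, hG, hp⟩ := exists_isChainMap_forall_smul_pullback_eq χ hF hP hres hθ hδ
  have hFB := hF.baseChange B
  refine ⟨δ, G, hG, θ, ⟨n₀ + 1, fun n hn x ↦ ⟨?_, hreg n (by lia) x⟩⟩,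
    eventuallySurjective_coneInclusion (hG := hG.baseChange B) hp _ hFB hP hχ hreg⟩
  obtain ⟨m, rfl⟩ : ∃ m, n = m + 1 := ⟨n - 1, by lia⟩
  exact pushforward_coneInclusion_smul_eq_zero (hG := hG.baseChange B) hp _ hFB x

variable [IsLocalRing A] [IsNoetherianRing A]

theorem exists_killsRegular_baseChange (hP : P.IsAcyclic) (hχ : χ.GeneratesExt)
    (hres : ∀ b : B, ∃ a : A, b - algebraMap A B a ∈ Module.annihilator B P.coker)
    (N : Type u) [AddCommGroup N] [Module A N] [Module.Finite A N] :
    ∃ (N' : Type u) (_ : AddCommGroup N') (_ : Module A N') (_ : Module.Finite A N')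
      (g : N →ₗ[A] N') (θ : MvPolynomial (Fin c) B), KillsRegular P χ θ (g.baseChange B) ∧
        EventuallySurjective P (g.baseChange B) ∧
          ∀ s, HasComplexityLE A N' s → HasComplexityLE A N (s + 1) := by
  obtain ⟨R⟩ := nonempty_minFreeRes (A := A) (M := N)
  obtain ⟨δ, G, hG, θ, hkill, hsurj⟩ :=
    exists_killsRegular_coneInclusion (F := R.complex) R.isAcyclic_complex hP hχ hres
  let φ := baseChangeCokerEquiv B R.cokerEquiv
  let φ' := baseChangeCokerEquiv B (LinearEquiv.refl A (R.complex.cone δ G hG).coker)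
  let g : N →ₗ[A] (R.complex.cone δ G hG).coker :=
    coneInclusion rfl ∘ₗ R.cokerEquiv.symm.toLinearMap
  have hg : g.baseChange B = φ'.toLinearMap ∘ₗ coneInclusion (F := R.complex.baseChange B)
      (baseChange_cone_D_zero B hG) ∘ₗ φ.symm.toLinearMap :=
    (LinearEquiv.eq_comp_toLinearMap_symm _ _).2 (baseChange_coneInclusion B hG R.cokerEquiv)
  refine ⟨_, _, _, inferInstance, g, θ, ?_, ?_, fun s hs ↦ ?_⟩
  · rw [hg]
    exact hkill.comp_equiv φ _
  · rw [hg]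
    exact (eventuallySurjective_equiv φ').comp (hsurj.comp (eventuallySurjective_equiv φ.symm))
  · obtain ⟨R', hR'⟩ := hs
    refine ⟨R, GrowthLE.succ_of_le_add (d := δ + 1) hR' (by lia) fun n ↦ ?_⟩
    have hcard := R.isMinimal_complex.card_le_card_add_card R.isAcyclic_complex
      R'.isAcyclic_complex hG R'.cokerEquiv.symm n
    rw [R.card_complex, R.card_complex, R'.card_complex] at hcard
    rwa [add_left_comm]

end KillsRegular

/-! ### Vanishing of cohomology and finite projective dimension -/

section Resolution

variable {R : Type u} [CommRing R] {F : MatrixComplex R} {X : Type u} [AddCommGroup X] [Module R X]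
variable (e : F.coker ≃ₗ[R] X)

lemma exact_mulVecLin_equiv_comp_mkQ :
    Function.Exact (F.D 0).mulVecLin (e.toLinearMap ∘ₗ Submodule.mkQ _) :=
  (LinearMap.exact_map_mkQ_range (F.D 0).mulVecLin).comp_injective _ e.injective (map_zero e)

include e in
lemma IsAcyclic.subsingleton_ext_succ_iff (hF : F.IsAcyclic) (Y : Type u) [AddCommGroup Y]
    [Module R Y] (n : ℕ) :
    Subsingleton (Abelian.Ext (ModuleCat.of R X) (ModuleCat.of R Y) (n + 1)) ↔
      cocycles F.D Y (n + 1) ≤ coboundaries F.D Y (n + 1) :=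
  ComplexityTest.subsingleton_ext_succ_iff F.D_mul_D hF (exact_mulVecLin_equiv_comp_mkQ e)
    (e.surjective.comp (Submodule.mkQ_surjective _)) Y n

include e in
lemma IsAcyclic.cocycles_le_coboundaries_of_extVanish (hF : F.IsAcyclic) (Y : Type u)
    [AddCommGroup Y] [Module R Y] {n : ℕ} (h : extVanish R X n Y) :
    cocycles F.D Y n ≤ coboundaries F.D Y n :=
  ComplexityTest.cocycles_le_coboundaries_of_extVanish F.D_mul_D hF
    (exact_mulVecLin_equiv_comp_mkQ e) (e.surjective.comp (Submodule.mkQ_surjective _)) Y n h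

end Resolution

section Operators

variable {B : Type u} [CommRing B] {F E : MatrixComplex B} {c : ℕ}

lemma IsChainMap.mul_op {v : ∀ j, Matrix (F.ι j) (E.ι j) B} (χ : CohomologyOperators B c)
    (hv : IsChainMap F E v) (i : Fin c) :
    IsChainMap F E.tail.tail fun j ↦ v j * χ.op i (E.D j) (E.D (j + 1)) := fun j ↦ by
  change F.D j * (v (j + 1) * χ.op i (E.D (j + 1)) (E.D (j + 2))) =
    v j * χ.op i (E.D j) (E.D (j + 1)) * E.D (j + 2)
  rw [← Matrix.mul_assoc, hv j, Matrix.mul_assoc, χ.comm i (E.D_mul_D j) (E.D_mul_D (j + 1)),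
    Matrix.mul_assoc]

end Operators

section ResidueField

variable {B : Type u} [CommRing B] [IsLocalRing B] {F E : MatrixComplex B}

lemma cochainMap_residueField_eq_zero {α β : Type} [Fintype α] {D : Matrix α β B}
    (hD : ∀ i j, D i j ∈ maximalIdeal B) (w : α → ResidueField B) : cochainMap D w = 0 :=
  cochainMap_eq_zero_of_mem (fun a ha y ↦ by
    rw [Algebra.smul_def, ResidueField.algebraMap_eq, (residue_eq_zero_iff a).2 ha, zero_mul]) hD w

variable (F E) in
/-- In high degrees every cochain on `E` with values in the residue field is a combination of
pullbacks along chain maps of cochains on `F`. -/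
def ResidueCochainsGenerated : Prop :=
  ∃ n₀, ∀ n, n₀ ≤ n → ∀ u : E.ι n → ResidueField B, u ∈ Submodule.span B
    {z | ∃ (v : ∀ j, Matrix (F.ι j) (E.ι j) B) (w : F.ι n → ResidueField B),
      IsChainMap F E v ∧ z = cochainMap (v n) w}

lemma residueCochainsGenerated_self (F : MatrixComplex B) : ResidueCochainsGenerated F F :=
  ⟨0, fun n _ u ↦ Submodule.subset_span
    ⟨fun _ ↦ 1, u, fun j ↦ by rw [Matrix.one_mul, Matrix.mul_one], (cochainMap_one u).symm⟩⟩

variable {c : ℕ} {χ : CohomologyOperators B c}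

lemma IsMinimal.exists_sum_cochainMap_op_eq (hE : E.IsMinimal) (hacyclic : E.IsAcyclic)
    (hχ : χ.GeneratesExt) :
    ∃ n₀, ∀ n, n₀ ≤ n → ∀ u : E.ι (n + 2) → ResidueField B, ∃ w : Fin c → E.ι n → ResidueField B,
      ∑ i, cochainMap (χ.op i (E.D n) (E.D (n + 1))) (w i) = u := by
  obtain ⟨n₀, hn₀⟩ := hχ E.ι E.D E.D_mul_D hacyclic (ResidueField B)
  refine ⟨n₀, fun n hn u ↦ ?_⟩
  obtain ⟨y, hy⟩ := hn₀ n hn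
    (cohomologyClass u (mem_cocycles.2 (cochainMap_residueField_eq_zero (hE _) u)))
  choose w hw hwy using fun i ↦ exists_cohomologyClass_eq (y i)
  refine ⟨w, ?_⟩
  have hsum := (cohomologyClass_sum Finset.univ _
    fun i ↦ (χ.commutesOn _ E.D_mul_D i).cochainMap_mem_cocycles (hw i)).trans
      ((Finset.sum_congr rfl fun i _ ↦ by rw [hwy i]; rfl).trans hy)
  obtain ⟨z, hz⟩ := cohomologyClass_eq_iff.1 hsum
  rw [← sub_eq_zero, ← hz]
  exact cochainMap_residueField_eq_zero (hE (n + 1)) z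

lemma ResidueCochainsGenerated.tail_tail (h : ResidueCochainsGenerated F E) (hE : E.IsMinimal)
    (hacyclic : E.IsAcyclic) (hχ : χ.GeneratesExt) : ResidueCochainsGenerated F E.tail.tail := by
  obtain ⟨n₀, hn₀⟩ := h
  obtain ⟨n₁, hn₁⟩ := hE.exists_sum_cochainMap_op_eq hacyclic hχ
  refine ⟨n₀ + n₁, fun n hn u ↦ ?_⟩
  obtain ⟨w, rfl⟩ := hn₁ n (by lia) u
  refine Submodule.sum_mem _ fun i _ ↦ ?_
  have hmem := Submodule.mem_map_of_mem (f := cochainMap (χ.op i (E.D n) (E.D (n + 1))))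
    (hn₀ n (by lia) (w i))
  rw [Submodule.map_span] at hmem
  refine Submodule.span_mono ?_ hmem
  rintro _ ⟨_, ⟨v, w, hv, rfl⟩, rfl⟩
  exact ⟨_, w, hv.mul_op χ i, (cochainMap_mul _ _ w).symm⟩

lemma IsChainMap.cochainMap_residueField_eq_zero (hF : F.IsAcyclic) (hFmin : F.IsMinimal)
    (hE : E.IsMinimal) {v : ∀ j, Matrix (F.ι j) (E.ι (j + 1)) B} (hv : IsChainMap F E.tail v)
    (h : cocycles E.D F.coker 1 ≤ coboundaries E.D F.coker 1) {n : ℕ} (w : F.ι n → ResidueField B) :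
    cochainMap (v n) w = 0 := by
  have hcocycle : cochainMap (v 0) F.generators ∈ cocycles E.D F.coker 1 := by
    have hcomm : F.D 0 * v 1 = v 0 * E.D 1 := hv 0
    rw [mem_cocycles, ← cochainMap_mul, ← hcomm, cochainMap_mul,
      mem_cocycles.1 F.generators_mem_cocycles, map_zero]
  obtain ⟨w₀, hw₀⟩ := h hcocycle
  obtain ⟨k, hk⟩ := hv.exists_homotopy_of_coboundary hF w₀ hw₀.symm
  refine MatrixComplex.cochainMap_residueField_eq_zero (fun i j ↦ ?_) w
  rw [hk n, Matrix.add_apply, Matrix.mul_apply, Matrix.mul_apply]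
  exact add_mem (Submodule.sum_mem _ fun l _ ↦ Ideal.mul_mem_left _ _ (hE n l j))
    (Submodule.sum_mem _ fun l _ ↦ Ideal.mul_mem_right _ _ (hFmin n i l))

theorem ResidueCochainsGenerated.exists_forall_isEmpty (hF : F.IsAcyclic) (hFmin : F.IsMinimal)
    (hχ : χ.GeneratesExt) (e : ℕ) (hE : E.IsMinimal) (hacyclic : E.IsAcyclic)
    (hgen : ResidueCochainsGenerated F E)
    (h : ∀ n, 2 * e ≤ n → cocycles E.D F.coker (n + 1) ≤ coboundaries E.D F.coker (n + 1)) :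
    ∃ n₀, ∀ n, n₀ ≤ n → IsEmpty (E.ι n) := by
  suffices H : ∃ n₀, ∀ n, n₀ ≤ n → IsEmpty (E.ι (n + 2)) by
    obtain ⟨n₀, hn₀⟩ := H
    refine ⟨n₀ + 2, fun n hn ↦ ?_⟩
    obtain ⟨m, rfl⟩ : ∃ m, n = m + 2 := ⟨n - 2, by lia⟩
    exact hn₀ m (by lia)
  have hgen' := hgen.tail_tail hE hacyclic hχ
  induction e generalizing E with
  | zero =>
    obtain ⟨n₀, hn₀⟩ := hgen'
    refine ⟨n₀, fun n hn ↦ ⟨fun i ↦ one_ne_zero (α := ResidueField B) ?_⟩⟩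
    refine congrFun ((Submodule.mem_bot B).1 (Submodule.span_le.2 ?_ (hn₀ n hn 1))) i
    rintro _ ⟨v, w, hv, rfl⟩
    exact IsChainMap.cochainMap_residueField_eq_zero (E := E.tail) hF hFmin
      (fun n ↦ hE (n + 1)) hv (h 1 (by lia)) w
  | succ e ih =>
    obtain ⟨n₀, hn₀⟩ := ih (E := E.tail.tail) (fun n ↦ hE (n + 2)) hacyclic.tail.tail hgen'
      (fun n hn ↦ h (n + 2) (by lia))
      (hgen'.tail_tail (fun n ↦ hE (n + 2)) hacyclic.tail.tail hχ)
    refine ⟨n₀ + 2, fun n hn ↦ ?_⟩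
    obtain ⟨m, rfl⟩ : ∃ m, n = m + 2 := ⟨n - 2, by lia⟩
    exact hn₀ m (by lia)

theorem IsMinimal.exists_forall_isEmpty [IsNoetherianRing B] (hFmin : F.IsMinimal)
    (hF : F.IsAcyclic) (hχ : χ.GeneratesExt) {P : MatrixComplex B} (hP : P.IsAcyclic)
    (e : P.coker ≃ₗ[B] ResidueField B)
    (h : ∃ n₀, ∀ n, n₀ ≤ n → ∀ x : Cohomology P.D F.coker n, x = 0) :
    ∃ n₀, ∀ n, n₀ ≤ n → IsEmpty (F.ι n) := by
  obtain ⟨n₀, hn₀⟩ := h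
  have hres (n : ℕ) (hn : n > n₀) : Subsingleton (Abelian.Ext
      (ModuleCat.of B (ResidueField B)) (ModuleCat.of B F.coker) n) := by
    obtain ⟨m, rfl⟩ : ∃ m, n = m + 1 := ⟨n - 1, by lia⟩
    exact (hP.subsingleton_ext_succ_iff e F.coker m).2 fun u hu ↦
      cohomologyClass_eq_zero_iff.1 (hn₀ (m + 1) (by lia) (cohomologyClass u hu))
  exact (residueCochainsGenerated_self F).exists_forall_isEmpty hF hFmin hχ n₀ hFmin hF
    fun n hn ↦ cocycles_le_coboundaries_of_subsingleton_ext F.D_mul_D hF F.coker n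
      (subsingleton_ext_of_residueField (ModuleCat.of B F.coker) n₀ hres _ _ (by lia))

end ResidueField

section BaseChange

variable {A : Type u} [CommRing A] [IsLocalRing A] [IsNoetherianRing A]
variable {B : Type u} [CommRing B] [IsLocalRing B] [IsNoetherianRing B] [Algebra A B]
  [Module.Flat A B] [IsLocalHom (algebraMap A B)]
variable {P : MatrixComplex B} {c : ℕ} {χ : CohomologyOperators B c}

theorem hasComplexityLE_of_eventually_cohomology_eq_zero (hχ : χ.GeneratesExt) (hP : P.IsAcyclic)
    (e : P.coker ≃ₗ[B] ResidueField B)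
    (N : Type u) [AddCommGroup N] [Module A N] [Module.Finite A N]
    (h : ∃ n₀, ∀ n, n₀ ≤ n → ∀ x : Cohomology P.D (B ⊗[A] N) n, x = 0) (s : ℕ) :
    HasComplexityLE A N s := by
  obtain ⟨R⟩ := nonempty_minFreeRes (A := A) (M := N)
  let φ := baseChangeCokerEquiv B R.cokerEquiv
  have hmin : (R.complex.baseChange B).IsMinimal := fun n i j ↦
    map_nonunit (algebraMap A B) _ (R.isMinimal_complex n i j)
  obtain ⟨n₀, hn₀⟩ := h
  obtain ⟨n₁, hn₁⟩ := hmin.exists_forall_isEmpty (R.isAcyclic_complex.baseChange B) hχ hP e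
    ⟨n₀, fun n hn x ↦ by
      rw [← mapCoefficients_id n x, ← φ.symm_comp, mapCoefficients_comp,
        hn₀ n hn (mapCoefficients P φ.toLinearMap n x), map_zero]⟩
  refine ⟨R, growthLE_of_eventually_eq_zero (eventually_atTop.2 ⟨n₁, fun n hn ↦ ?_⟩) s⟩
  rw [← R.card_complex]
  exact Fintype.card_eq_zero_iff.2 (hn₁ n hn)

end BaseChange

/-! ### Modules of prescribed complexity -/

section PrescribedComplexity

variable {B : Type u} [CommRing B] {P : MatrixComplex B} {c : ℕ} {χ : CohomologyOperators B c}

lemma ker_pushforward_le_ker_comp {Y Y' Y'' : Type*} [AddCommGroup Y] [Module B Y]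
    [AddCommGroup Y'] [Module B Y'] [AddCommGroup Y''] [Module B Y''] (f : Y →ₗ[B] Y')
    (g : Y' →ₗ[B] Y'') :
    LinearMap.ker (pushforward (E := P) χ f) ≤ LinearMap.ker (pushforward (E := P) χ (g ∘ₗ f)) :=
  fun x hx ↦ by rw [LinearMap.mem_ker] at hx ⊢; rw [pushforward_comp, hx, map_zero]

lemma KillsRegular.eventually_eq_zero_of_ker_le {Y Y' Y'' : Type*} [AddCommGroup Y] [Module B Y]
    [AddCommGroup Y'] [Module B Y'] [AddCommGroup Y''] [Module B Y'']
    {θ : MvPolynomial (Fin c) B} {f : Y →ₗ[B] Y'} {g : Y' →ₗ[B] Y''} (hg : KillsRegular P χ θ g)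
    (hf : EventuallySurjective P f) (h : LinearMap.ker (pushforward (E := P) χ (g ∘ₗ f)) ≤
      LinearMap.ker (pushforward (E := P) χ f)) :
    ∃ n₀, ∀ n, n₀ ≤ n → ∀ x : Cohomology P.D Y' n, x = 0 := by
  obtain ⟨m, hm⟩ := hg
  obtain ⟨n, hn⟩ := hf
  refine ⟨m + n, fun k hk x ↦ (hm k (by lia) x).2 ?_⟩
  obtain ⟨y, rfl⟩ := hn k (by lia) x
  rw [← pushforward_of, ← map_smul]
  refine h (LinearMap.mem_ker.2 ?_)
  rw [pushforward_comp, map_smul, pushforward_of]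
  exact (hm k (by lia) _).1

variable {A : Type u} [CommRing A] [IsLocalRing A] [IsNoetherianRing A] [IsLocalRing B]
  [IsNoetherianRing B] [Algebra A B] [Module.Flat A B] [IsLocalHom (algebraMap A B)]

theorem exists_eventuallySurjective_hasComplexityLE (hχ : χ.GeneratesExt) (hP : P.IsAcyclic)
    (e : P.coker ≃ₗ[B] ResidueField B)
    (hres : ∀ b : B, ∃ a : A, b - algebraMap A B a ∈ Module.annihilator B P.coker)
    (M : Type u) [AddCommGroup M] [Module A M] [Module.Finite A M] {s : ℕ}
    (hM : ¬ HasComplexityLE A M s) :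
    ∃ (N : Type u) (_ : AddCommGroup N) (_ : Module A N) (_ : Module.Finite A N) (f : M →ₗ[A] N),
      EventuallySurjective P (f.baseChange B) ∧ HasComplexityLE A N (s + 1) ∧
        ¬ HasComplexityLE A N s := by
  have hfin := (hχ P.ι P.D P.D_mul_D hP (B ⊗[A] M)).finite_total
  have hnoeth : IsNoetherian (MvPolynomial (Fin c) B) (P.action χ (B ⊗[A] M)).Total :=
    isNoetherian_of_isNoetherianRing_of_finite _ _
  suffices H : ∀ (L : Submodule (MvPolynomial (Fin c) B) (P.action χ (B ⊗[A] M)).Total)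
      (N : Type u) [AddCommGroup N] [Module A N] [Module.Finite A N] (f : M →ₗ[A] N),
      L = LinearMap.ker (pushforward χ (f.baseChange B)) →
      EventuallySurjective P (f.baseChange B) → ¬ HasComplexityLE A N s →
      ∃ (N : Type u) (_ : AddCommGroup N) (_ : Module A N) (_ : Module.Finite A N) (f : M →ₗ[A] N),
        EventuallySurjective P (f.baseChange B) ∧ HasComplexityLE A N (s + 1) ∧
          ¬ HasComplexityLE A N s from
    H _ M LinearMap.id rfl
      (eventuallySurjective_of_comp_eq_id (g := LinearMap.id) (LinearMap.baseChange_id ..)) hM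
  intro L
  induction L using WellFoundedGT.induction with
  | ind L ih =>
    rintro N _ _ _ f rfl hf hN
    obtain ⟨N', _, _, _, g, θ, hkill, hg, hle⟩ := exists_killsRegular_baseChange hP hχ hres N
    by_cases hN' : HasComplexityLE A N' s
    · exact ⟨N, _, _, inferInstance, f, hf, hle s hN', hN⟩
    refine ih _ (lt_of_le_not_ge ?_ fun hker ↦ ?_) N' (g ∘ₗ f) rfl ?_ hN'
    · rw [LinearMap.baseChange_comp]
      exact ker_pushforward_le_ker_comp _ _
    · rw [LinearMap.baseChange_comp] at hker
      exact hN (hasComplexityLE_of_eventually_cohomology_eq_zero hχ hP e N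
        (hkill.eventually_eq_zero_of_ker_le hf hker) s)
    · rw [LinearMap.baseChange_comp]
      exact hg.comp hf

end PrescribedComplexity

/-! ### Testing complexity by vanishing of Ext -/

section Vanishing

variable {B : Type u} [CommRing B] {P F : MatrixComplex B} {c : ℕ} {χ : CohomologyOperators B c}

lemma smul_of_mapCoefficients_eq_zero (hF : F.IsAcyclic) {Y Y' : Type u} [AddCommGroup Y]
    [Module B Y] [AddCommGroup Y'] [Module B Y'] (e : F.coker ≃ₗ[B] Y) (f : Y →ₗ[B] Y') {d : ℕ}
    (h : Subsingleton (Cohomology F.D Y' (2 * d))) {p : MvPolynomial (Fin c) B}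
    (hp : p.IsHomogeneous d) {m : ℕ} (x : Cohomology P.D Y (m + 1)) :
    p • (P.action χ Y').of (m + 1) (mapCoefficients P f (m + 1) x) = 0 := by
  obtain ⟨v, hv, rfl⟩ := exists_isChainMap_pullbackCohomology_eq hF e x
  let y := cohomologyClass _ (comp_mem_cocycles e.toLinearMap F.generators_mem_cocycles)
  obtain ⟨z, hz⟩ := (F.action χ Y').exists_smul_of_eq_of_isHomogeneous hp 0
    (mapCoefficients F f 0 y)
  have hzero : Subsingleton (Cohomology F.D Y' (0 + 2 * d)) := by rwa [zero_add]
  have hpull : p • hv.pullback χ ((F.action χ Y').of 0 (mapCoefficients F f 0 y)) = 0 := by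
    rw [← map_smul, hz, Subsingleton.elim z 0, map_zero, map_zero]
  rw [hv.pullback_of, ← hv.mapCoefficients_pullbackCohomology] at hpull
  exact hpull

lemma EventuallySurjective.eventually_eq_zero {Y Y' : Type*} [AddCommGroup Y] [Module B Y]
    [AddCommGroup Y'] [Module B Y'] {f : Y →ₗ[B] Y'} (hf : EventuallySurjective P f)
    (hgen : (P.action χ Y').EventuallyGenerated) (d : ℕ)
    (h : ∀ p : MvPolynomial (Fin c) B, p.IsHomogeneous d → ∀ m (x : Cohomology P.D Y (m + 1)),
      p • (P.action χ Y').of (m + 1) (mapCoefficients P f (m + 1) x) = 0) :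
    ∃ n₀, ∀ n, n₀ ≤ n → ∀ x : Cohomology P.D Y' n, x = 0 := by
  obtain ⟨n₀, hn₀⟩ := hf
  obtain ⟨n₁, hn₁⟩ := hgen.of_mem_span d
  refine ⟨n₀ + n₁ + 1 + 2 * d, fun n hn x ↦ ?_⟩
  obtain ⟨m, rfl⟩ : ∃ m, n = m + 1 + 2 * d := ⟨n - 1 - 2 * d, by lia⟩
  refine (P.action χ Y').of_injective _ ?_
  rw [map_zero, ← Submodule.mem_bot B]
  refine Submodule.span_le.2 ?_ (hn₁ (m + 1) (by lia) x)
  rintro _ ⟨p, hp, y, rfl⟩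
  obtain ⟨w, rfl⟩ := hn₀ (m + 1) (by lia) y
  exact h p hp m w

variable {A : Type u} [CommRing A] [Algebra A B] [Module.Flat A B]

variable (B) in
lemma subsingleton_cohomology_baseChange_of_extVanish {F : MatrixComplex A} (hF : F.IsAcyclic)
    {M N : Type u} [AddCommGroup M] [Module A M] [AddCommGroup N] [Module A N]
    (e : F.coker ≃ₗ[A] M) {n : ℕ} (h : extVanish A M n N) :
    Subsingleton (Cohomology (F.baseChange B).D (B ⊗[A] N) n) := by
  have hzero (x : Cohomology F.D N n) : x = 0 := by
    obtain ⟨u, hu, rfl⟩ := exists_cohomologyClass_eq x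
    exact cohomologyClass_eq_zero_iff.2 (hF.cocycles_le_coboundaries_of_extVanish e N h hu)
  refine Submodule.subsingleton_iff B |>.1 (subsingleton_of_bot_eq_top ?_)
  rw [eq_comm, ← span_range_baseChangeCohomology B, Submodule.span_eq_bot]
  rintro _ ⟨x, rfl⟩
  rw [hzero x, map_zero]

end Vanishing

section LocalHom

variable {A : Type u} [CommRing A] [IsLocalRing A] [IsNoetherianRing A]
variable {B : Type u} [CommRing B] [IsLocalRing B] [IsNoetherianRing B] [Algebra A B]
  [Module.Flat A B] {c : ℕ} {χ : CohomologyOperators B c}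

theorem hasComplexityLE_of_forall_exists_extVanish [IsLocalHom (algebraMap A B)]
    (hχ : χ.GeneratesExt)
    (hres : Function.Surjective (ResidueField.map (algebraMap A B)))
    (M : Type u) [AddCommGroup M] [Module A M] [Module.Finite A M] (s : ℕ)
    (h : ∀ (N : Type u) [AddCommGroup N] [Module A N] [Module.Finite A N],
      HasComplexityLE A N (s + 1) → ¬ HasComplexityLE A N s → ∃ n, Even n ∧ extVanish A M n N) :
    HasComplexityLE A M s := by
  by_contra hM
  obtain ⟨F⟩ := nonempty_minFreeRes (A := A) (M := M)
  obtain ⟨P⟩ := nonempty_minFreeRes (A := B) (M := ResidueField B)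
  have hann (b : B) : ∃ a : A, b - algebraMap A B a ∈ Module.annihilator B P.complex.coker := by
    obtain ⟨x, hx⟩ := hres (residue B b)
    obtain ⟨a, rfl⟩ := residue_surjective x
    refine ⟨a, ?_⟩
    have hmax : Module.annihilator B (ResidueField B) = maximalIdeal B := Ideal.annihilator_quotient
    rw [P.cokerEquiv.annihilator_eq, hmax, ← residue_eq_zero_iff, map_sub, ← hx,
      ResidueField.map_residue, sub_self]
  obtain ⟨N, _, _, _, f, hf, hle, hN⟩ := exists_eventuallySurjective_hasComplexityLE hχ
    P.isAcyclic_complex P.cokerEquiv hann M hM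
  obtain ⟨n, ⟨d, rfl⟩, hext⟩ := h N hle hN
  rw [← two_mul] at hext
  refine hN (hasComplexityLE_of_eventually_cohomology_eq_zero hχ P.isAcyclic_complex
    P.cokerEquiv N (hf.eventually_eq_zero (hχ _ _ P.complex.D_mul_D P.isAcyclic_complex _) d
      fun p hp m x ↦ ?_) s)
  exact smul_of_mapCoefficients_eq_zero (F.isAcyclic_complex.baseChange B)
    (baseChangeCokerEquiv B F.cokerEquiv) _
    (subsingleton_cohomology_baseChange_of_extVanish B F.isAcyclic_complex F.cokerEquiv hext) hp x

end LocalHom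

end MatrixComplex

end ComplexityTest

theorem complexity_lt_of_gap_extVanish_of_completeIntersection_general
    (A : Type u) [CommRing A] [IsLocalRing A] [IsNoetherianRing A] (hA : IsCompleteIntersection A)
    (M : Type u) [AddCommGroup M] [Module A M] [Module.Finite A M] (t : ℕ) (ht : 1 ≤ t)
    (h : ∀ (N : Type u) [AddCommGroup N] [Module A N] [Module.Finite A N],
      complexity A N = t → ∃ n : ℕ, Even n ∧ extVanish A M n N) :
    complexity A M < (t : ℕ∞) := by
  obtain ⟨c, χ, hχ⟩ := hA.exists_generatesExt
  obtain ⟨Q, _, _, hQ, g, hg, -⟩ := hA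
  have := hQ.1
  have : IsNoetherianRing (Completion A) := isNoetherianRing_of_surjective _ _ g hg
  refine complexity_lt ht (MatrixComplex.hasComplexityLE_of_forall_exists_extVanish hχ
    (AdicCompletion.residueField_map_bijective A).2 M (t - 1) fun N _ _ _ hle hlt ↦ ?_)
  rw [Nat.sub_add_cancel ht] at hle
  exact h N (complexity_eq ht hle hlt)

/-- **Theorem (complexity testing over complete intersections)**: let `A` be a local
complete intersection of codimension `c`, `M` a finitely generated `A`-module and
`t ∈ {1, …, c}`. If for every `A`-module `N` of complexity `t` there are an odd number
`q` and an even number `n > dim A - depth M` with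
`Ext^n_A(M,N) = Ext^{n+q}_A(M,N) = ⋯ = Ext^{n+(c-t)q}_A(M,N) = 0`, then `cx M < t`. -/
theorem complexity_lt_of_gap_extVanish_of_completeIntersection
    (A : Type u) [CommRing A] [IsLocalRing A] [IsNoetherianRing A]
    (c : ℕ) (hA : IsCompleteIntersection A) (hcodim : HasCodim A c)
    (M : Type u) [AddCommGroup M] [Module A M] [Module.Finite A M]
    (t : ℕ) (ht : 1 ≤ t) (htc : t ≤ c)
    (h : ∀ (N : Type u) [AddCommGroup N] [Module A N] [Module.Finite A N],
      complexity A N = t →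
        ∃ q n : ℕ, Odd q ∧ Even n ∧
          ringKrullDim A < (n : WithBot ℕ∞) + (depth A M : WithBot ℕ∞) ∧
          ∀ j : ℕ, j ≤ c - t → extVanish A M (n + j * q) N) :
    complexity A M < (t : ℕ∞) :=
  complexity_lt_of_gap_extVanish_of_completeIntersection_general A hA M t ht fun N _ _ _ hN ↦ by
    obtain ⟨q, n, -, hn, -, hj⟩ := h N hN
    exact ⟨n, hn, by simpa using hj 0 (Nat.zero_le _)⟩
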